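/- arXiv:1706.04065 — 4 statements merged into one kernel-verified Lean document; each statement's English description precedes it below -/
import Mathlib

section
/- Let E be a graph embedding, e an edge of E, and E₀ = E − e the embedding obtained by deleting e. Then the genus of E₀ is at most the genus of E. Moreover, if e is incident with two distinct faces, or e is incident with a vertex of size 2, then the genera of E and E₀ are equal. -/
def FPF {F : Type*} (π : Equiv.Perm F) : Prop := π * π = 1 ∧ ∀ x, π x ≠ x

def orbSet {F : Type*} (S : Set (Equiv.Perm F)) (x : F) : Set F :=
  MulAction.orbit (Subgroup.closure S) x

noncomputable def orbCount {F : Type*} (S : Set (Equiv.Perm F)) : ℕ :=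
  Nat.card (MulAction.orbitRel.Quotient (Subgroup.closure S) F)

noncomputable def genus {F : Type*} (θ σ' φ' : Equiv.Perm F) : ℤ :=
  (orbCount {θ, σ'} : ℤ) - orbCount {σ', φ'} - orbCount {θ, φ'} + 2 * orbCount {θ, σ', φ'}

def IsGraphEmb {F : Type*} (θ σ' φ' : Equiv.Perm F) : Prop :=
  FPF θ ∧ FPF σ' ∧ FPF φ' ∧ ∀ x : F, Nat.card (orbSet {θ, σ'} x) = 4

def IsEdgeDeletion {F : Type*} (σ' φ' : Equiv.Perm F) (e : Set F)
    (θ₀ σ₀ φ₀ : Equiv.Perm {f : F // f ∉ e}) (θ : Equiv.Perm F) : Prop :=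
  (∀ a : {f : F // f ∉ e}, (θ₀ a : F) = θ a ∧ (σ₀ a : F) = σ' a) ∧
  (∀ a : {f : F // f ∉ e}, ∃ m : ℕ,
     ((φ' * σ') ^ m) (φ' a) ∉ e ∧ (∀ j < m, ((φ' * σ') ^ j) (φ' a) ∈ e) ∧
     (φ₀ a : F) = ((φ' * σ') ^ m) (φ' a))

def orbS {F : Type*} (S : Set (Equiv.Perm F)) : Setoid F :=
  MulAction.orbitRel (Subgroup.closure S) F

theorem orbCount_eq {F : Type*} (S : Set (Equiv.Perm F)) :
    orbCount S = Nat.card (Quotient (orbS S)) := rfl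

theorem orbS_step {F : Type*} {S : Set (Equiv.Perm F)} {s : Equiv.Perm F} (hs : s ∈ S) (p : F) :
    (orbS S) p (s p) := by
  apply (orbS S).symm
  exact ⟨⟨s, Subgroup.subset_closure hs⟩, rfl⟩

theorem orbS_le {F : Type*} {S : Set (Equiv.Perm F)} {r : Setoid F}
    (h : ∀ s ∈ S, ∀ p, r p (s p)) {p q : F} (hpq : (orbS S) p q) : r p q := by
  obtain ⟨⟨g, hg⟩, rfl⟩ := hpq
  change r (g q) q
  induction hg using Subgroup.closure_induction generalizing q with
  | mem s hs => exact r.symm (h s hs q)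
  | one => exact r.refl _
  | mul a b _ _ ha hb => exact r.trans (ha (q := b q)) hb
  | inv a _ ha =>
    have := ha (q := a⁻¹ q)
    have e : a (a⁻¹ q) = q := by simp
    rw [e] at this
    exact r.symm this

theorem mem_orbSet {F : Type*} {S : Set (Equiv.Perm F)} {p q : F} :
    p ∈ orbSet S q ↔ (orbS S) p q := Iff.rfl

theorem orbS_closed {F : Type*} {S : Set (Equiv.Perm F)} (A : Set F)
    (h : ∀ s ∈ S, ∀ p, p ∈ A ↔ s p ∈ A) {p q : F} (hpq : (orbS S) p q) : p ∈ A ↔ q ∈ A := by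
  have := orbS_le (r := Setoid.ker (fun p => p ∈ A)) (S := S)
    (fun s hs p => by simpa [Setoid.ker_def] using h s hs p) hpq
  simpa [Setoid.ker_def] using this

/-- Join two classes of a setoid. -/
def joinS {F : Type*} (r : Setoid F) (u v : F) : Setoid F where
  r p q := r p q ∨ (r p u ∧ r v q) ∨ (r p v ∧ r u q)
  iseqv := by
    have hs : ∀ {a b}, r a b → r b a := fun h => r.symm h
    have ht : ∀ {a b c}, r a b → r b c → r a c := fun h h' => r.trans h h'
    refine ⟨fun p => Or.inl (r.refl p), ?_, ?_⟩
    · rintro p q (h | ⟨h, h'⟩ | ⟨h, h'⟩)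
      · exact Or.inl (hs h)
      · exact Or.inr (Or.inr ⟨hs h', hs h⟩)
      · exact Or.inr (Or.inl ⟨hs h', hs h⟩)
    · rintro p q w (h | ⟨h, h'⟩ | ⟨h, h'⟩) (k | ⟨k, k'⟩ | ⟨k, k'⟩)
      · exact Or.inl (ht h k)
      · exact Or.inr (Or.inl ⟨ht h k, k'⟩)
      · exact Or.inr (Or.inr ⟨ht h k, k'⟩)
      · exact Or.inr (Or.inl ⟨h, ht h' k⟩)
      · exact Or.inl (ht h (ht (hs (ht h' k)) k'))
      · exact Or.inl (ht h k')
      · exact Or.inr (Or.inr ⟨h, ht h' k⟩)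
      · exact Or.inl (ht h k')
      · exact Or.inl (ht h (ht (hs (ht h' k)) k'))

theorem joinS_le {F : Type*} {r r' : Setoid F} {u v : F} (h : ∀ p q, r p q → r' p q)
    (huv : r' u v) {p q : F} (hpq : (joinS r u v) p q) : r' p q := by
  rcases hpq with h1 | ⟨h1, h2⟩ | ⟨h1, h2⟩
  · exact h _ _ h1
  · exact r'.trans (h _ _ h1) (r'.trans huv (h _ _ h2))
  · exact r'.trans (h _ _ h1) (r'.trans (r'.symm huv) (h _ _ h2))

theorem joinS_of {F : Type*} {r : Setoid F} {u v p q : F} (h : r p q) : (joinS r u v) p q :=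
  Or.inl h

theorem joinS_uv {F : Type*} {r : Setoid F} {u v : F} : (joinS r u v) u v :=
  Or.inr (Or.inl ⟨r.refl _, r.refl _⟩)

theorem joinS_eq {F : Type*} {r : Setoid F} {u v : F} (h : r u v) : joinS r u v = r := by
  ext p q
  exact ⟨fun k => joinS_le (fun _ _ h => h) h k, joinS_of⟩

theorem joinS_card {F : Type*} [Finite F] {r : Setoid F} {u v : F} (h : ¬ r u v) :
    Nat.card (Quotient (joinS r u v)) + 1 = Nat.card (Quotient r) := by
  let f : {q : Quotient r // q ≠ Quotient.mk r v} → Quotient (joinS r u v) := fun q =>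
    Quotient.map' (s₁ := r) (s₂ := joinS r u v) id (fun _ _ h => joinS_of h) q.1
  have hf : Function.Bijective f := by
    constructor
    · rintro ⟨p, hp⟩ ⟨q, hq⟩ hpq
      induction p using Quotient.inductionOn with | h p => ?_
      induction q using Quotient.inductionOn with | h q => ?_
      have hp' : ¬ r p v := fun k => hp (Quotient.sound k)
      have hq' : ¬ r q v := fun k => hq (Quotient.sound k)
      have : (joinS r u v) p q := Quotient.exact hpq
      apply Subtype.ext
      apply Quotient.sound
      rcases this with h1 | ⟨h1, h2⟩ | ⟨h1, h2⟩
      · exact h1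
      · exact (hq' (r.symm h2)).elim
      · exact (hp' h1).elim
    · intro p
      induction p using Quotient.inductionOn with | h p => ?_
      by_cases hp : r p v
      · refine ⟨⟨Quotient.mk r u, fun k => h (Quotient.exact k)⟩, ?_⟩
        apply Quotient.sound
        exact (joinS r u v).trans joinS_uv (joinS_of (r.symm hp))
      · exact ⟨⟨Quotient.mk r p, fun k => hp (Quotient.exact k)⟩, rfl⟩
  rw [← Nat.card_congr (Equiv.ofBijective f hf)]
  have h1 := Set.ncard_add_ncard_compl ({Quotient.mk r v} : Set (Quotient r))
  rw [Set.ncard_singleton] at h1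
  rw [← h1, add_comm]
  rfl

/-- A finite set with an fpf involution has even size. -/
theorem even_of_inv {F : Type*} [Finite F] (A : Set F) (f : F → F) (h1 : ∀ p ∈ A, f p ∈ A)
    (h2 : ∀ p ∈ A, f (f p) = p) (h3 : ∀ p ∈ A, f p ≠ p) : Even A.ncard := by
  classical
  have := Fintype.ofFinite F
  rw [Set.ncard_eq_toFinset_card']
  have : (∑ p ∈ A.toFinset, (1 : ZMod 2)) = 0 := by
    apply Finset.sum_involution (fun p _ => f p)
    · intros; decide
    · intro p hp _; exact h3 p (by simpa using hp)
    · intro p hp; simpa using h1 p (by simpa using hp)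
    · intro p hp; exact h2 p (by simpa using hp)
  simp only [Finset.sum_const, nsmul_eq_mul, mul_one] at this
  exact (ZMod.natCast_eq_zero_iff_even).1 this

theorem FPF.inv {F : Type*} {π : Equiv.Perm F} (h : FPF π) (p : F) : π (π p) = p := by
  have := congrArg (fun g : Equiv.Perm F => g p) h.1
  simpa using this

/-- The switch of `φ` at `x`, making `{x, σ x}` an orbit. -/
noncomputable def switchP {F : Type*} (σ φ : Equiv.Perm F) (x : F) : Equiv.Perm F := by
  classical
  exact Equiv.swap (φ x) (σ x) * φ * Equiv.swap (φ x) (σ x)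

section switch
variable {F : Type*} {θ σ φ : Equiv.Perm F} {x : F}

theorem switchP_fpf (hφ : FPF φ) : FPF (switchP σ φ x) := by
  classical
  have hi := hφ.inv
  constructor
  · ext p
    simp [switchP, hi]
  · intro p hp
    simp only [switchP, Equiv.Perm.mul_apply] at hp
    apply hφ.2 (Equiv.swap (φ x) (σ x) p)
    apply (Equiv.swap (φ x) (σ x)).injective
    rw [hp, Equiv.swap_apply_self]

theorem switchP_self (hσ : FPF σ) (hφ : FPF φ) : switchP σ φ x x = σ x := by
  classical
  simp only [switchP, Equiv.Perm.mul_apply]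
  rw [Equiv.swap_apply_of_ne_of_ne (hφ.2 x).symm (hσ.2 x).symm, Equiv.swap_apply_left]

theorem switchP_triv (h : φ x = σ x) : switchP σ φ x = φ := by
  classical
  simp only [switchP, h, Equiv.swap_self]
  rfl

theorem switchP_a (hσ : FPF σ) (hφ : FPF φ) (h : φ x ≠ σ x) :
    switchP σ φ x (φ x) = φ (σ x) := by
  classical
  simp only [switchP, Equiv.Perm.mul_apply]
  rw [Equiv.swap_apply_left, Equiv.swap_apply_of_ne_of_ne _ (hφ.2 _)]
  intro k
  exact hσ.2 x (φ.injective k)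

theorem switchP_other (hφ : FPF φ) {p : F} (h1 : p ≠ x) (h2 : p ≠ σ x) (h3 : p ≠ φ x)
    (h4 : p ≠ φ (σ x)) : switchP σ φ x p = φ p := by
  classical
  simp only [switchP, Equiv.Perm.mul_apply]
  rw [Equiv.swap_apply_of_ne_of_ne h3 h2, Equiv.swap_apply_of_ne_of_ne]
  · intro k; exact h1 (φ.injective k)
  · intro k; apply h4; rw [← k, hφ.inv]

/-- relations that contain all new generators plus `x ~ φ x` contain the old -/
theorem old_le (hσ : FPF σ) (hφ : FPF φ) (h : φ x ≠ σ x) (r : Setoid F)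
    (hn : ∀ p, r p (switchP σ φ x p)) (hx : r x (φ x)) (p : F) : r p (φ p) := by
  have k1 := hn x
  rw [switchP_self hσ hφ] at k1
  have k2 := hn (φ x)
  rw [switchP_a hσ hφ h] at k2
  have k3 : r (σ x) (φ (σ x)) := r.trans (r.symm k1) (r.trans hx k2)
  by_cases h1 : p = x
  · subst h1; exact hx
  by_cases h2 : p = σ x
  · subst h2; exact k3
  by_cases h3 : p = φ x
  · subst h3; rw [hφ.inv]; exact r.symm hx
  by_cases h4 : p = φ (σ x)
  · subst h4; rw [hφ.inv]; exact r.symm k3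
  have := hn p
  rwa [switchP_other hφ h1 h2 h3 h4] at this

theorem new_le (hσ : FPF σ) (hφ : FPF φ) (h : φ x ≠ σ x) (r : Setoid F)
    (hn : ∀ p, r p (φ p)) (hx : r x (σ x)) (p : F) : r p (switchP σ φ x p) := by
  have hi := (switchP_fpf (σ := σ) (x := x) hφ).inv
  have e1 : switchP σ φ x x = σ x := switchP_self hσ hφ
  have e2 := switchP_a hσ hφ h
  have e1' : switchP σ φ x (σ x) = x := by rw [← e1, hi]
  have e2' : switchP σ φ x (φ (σ x)) = φ x := by rw [← e2, hi]
  have k3 : r (φ x) (φ (σ x)) := r.trans (r.symm (hn x)) (r.trans hx (hn _))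
  by_cases h1 : p = x
  · rw [h1, e1]; exact hx
  by_cases h2 : p = σ x
  · rw [h2, e1']; exact r.symm hx
  by_cases h3 : p = φ x
  · rw [h3, e2]; exact k3
  by_cases h4 : p = φ (σ x)
  · rw [h4, e2']; exact r.symm k3
  rw [switchP_other hφ h1 h2 h3 h4]; exact hn p

theorem join_sigma (hσ : FPF σ) (hφ : FPF φ) (h : φ x ≠ σ x) (S : Set (Equiv.Perm F)) 
    (hS : σ ∈ S) :
    orbS (insert φ S) = joinS (orbS (insert (switchP σ φ x) S)) x (φ x) := by
  ext p q
  constructor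
  · apply orbS_le
    rintro s (rfl | hs) p
    · refine old_le hσ hφ h _ (fun p => ?_) joinS_uv p
      exact joinS_of (orbS_step (Set.mem_insert _ _) p)
    · exact joinS_of (orbS_step (Set.mem_insert_of_mem _ hs) p)
  · refine joinS_le (fun p q => ?_) (orbS_step (Set.mem_insert _ _) x)
    apply orbS_le
    rintro s (rfl | hs) p
    · exact new_le hσ hφ h _ (fun p => (orbS_step (Set.mem_insert _ _) p))
        (orbS_step (Set.mem_insert_of_mem _ hS) x) p
    · exact (orbS_step (Set.mem_insert_of_mem _ hs) p)

theorem join_face (hσ : FPF σ) (hφ : FPF φ) (h : φ x ≠ σ x) (S : Set (Equiv.Perm F)) :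
    joinS (orbS (insert φ S)) x (σ x) = joinS (orbS (insert (switchP σ φ x) S)) x (φ x) := by
  ext p q
  constructor
  · refine joinS_le (fun p q => ?_) ?_
    · apply orbS_le
      rintro s (rfl | hs) p
      · refine old_le hσ hφ h _ (fun p => ?_) joinS_uv p
        exact joinS_of (orbS_step (Set.mem_insert _ _) p)
      · exact joinS_of (orbS_step (Set.mem_insert_of_mem _ hs) p)
    · have := orbS_step (S := insert (switchP σ φ x) S) (Set.mem_insert _ _) x
      rw [switchP_self hσ hφ] at this
      exact joinS_of this
  · refine joinS_le (fun p q => ?_) (joinS_of (orbS_step (Set.mem_insert _ _) x))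
    apply orbS_le
    rintro s (rfl | hs) p
    · exact new_le hσ hφ h _ (fun p => joinS_of (orbS_step (Set.mem_insert _ _) p))
        joinS_uv p
    · exact joinS_of (orbS_step (Set.mem_insert_of_mem _ hs) p)

/-- Parity lemma. -/
theorem parity [Finite F] (hθ : FPF θ) (hσ : FPF σ) (hφ : FPF φ) (h : φ x ≠ σ x)
    (hn : ¬ (orbS {switchP σ φ x, θ}) x (φ x)) : (orbS {φ, θ}) x (σ x) := by
  by_contra ho
  set rn := orbS {switchP σ φ x, θ} with hrn
  set ro := orbS {φ, θ} with hro
  have nφ : ∀ p, rn p (switchP σ φ x p) := orbS_step (by simp)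
  have nθ : ∀ p, rn p (θ p) := orbS_step (by simp)
  have oφ : ∀ p, ro p (φ p) := orbS_step (by simp)
  have oθ : ∀ p, ro p (θ p) := orbS_step (by simp)
  let A : Set F := {p | rn x p ∧ ro x p}
  have hxA : x ∈ A := ⟨rn.refl _, ro.refl _⟩
  have e1 : Even A.ncard := even_of_inv A θ
    (fun p hp => ⟨rn.trans hp.1 (nθ p), ro.trans hp.2 (oθ p)⟩) (fun p _ => hθ.inv p)
    (fun p _ => hθ.2 p)
  have e2 : Even (A \ {x}).ncard := by
    refine even_of_inv _ φ ?_ (fun p _ => hφ.inv p) (fun p _ => hφ.2 p)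
    rintro p ⟨hp, hpx⟩
    have hpx : p ≠ x := hpx
    have p2 : p ≠ σ x := by rintro rfl; exact ho hp.2
    have p3 : p ≠ φ x := by rintro rfl; exact hn hp.1
    have p4 : p ≠ φ (σ x) := by
      rintro rfl
      exact ho (ro.trans hp.2 (ro.symm (oφ _)))
    refine ⟨⟨?_, ro.trans hp.2 (oφ p)⟩, ?_⟩
    · have := nφ p
      rw [switchP_other hφ hpx p2 p3 p4] at this
      exact rn.trans hp.1 this
    · intro k
      apply p3
      have k : φ p = x := k
      rw [← k, hφ.inv]
  have e3 := Set.ncard_sdiff_singleton_add_one hxA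
  rw [← e3] at e1
  exact (Nat.not_even_iff_odd.2 e2.add_one) e1

theorem genus_eq' (θ σ φ : Equiv.Perm F) : genus θ σ φ =
    (Nat.card (Quotient (orbS {θ, σ})) : ℤ) - Nat.card (Quotient (orbS {φ, σ}))
      - Nat.card (Quotient (orbS {φ, θ})) + 2 * Nat.card (Quotient (orbS {φ, θ, σ})) := by
  unfold genus
  rw [orbCount_eq, orbCount_eq, orbCount_eq, orbCount_eq]
  have : ({θ, σ, φ} : Set (Equiv.Perm F)) = {φ, θ, σ} := by
    ext; simp; tauto
  rw [this, Set.pair_comm σ φ, Set.pair_comm θ φ]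

theorem switch_vertex [Finite F] (hσ : FPF σ) (hφ : FPF φ) (h : φ x ≠ σ x) :
    Nat.card (Quotient (orbS {φ, σ})) + 1 = Nat.card (Quotient (orbS {switchP σ φ x, σ})) := by
  rw [join_sigma hσ hφ h {σ} rfl]
  apply joinS_card
  intro k
  have := orbS_closed {x, σ x} ?_ k
  · have h1 := hφ.2 x
    simp at this
    tauto
  have hi := (switchP_fpf (σ := σ) (x := x) hφ)
  have e1 : switchP σ φ x x = σ x := switchP_self hσ hφ
  have e1' : switchP σ φ x (σ x) = x := by rw [← e1, hi.inv]
  rintro s (rfl | rfl) p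
  · have := hi.inv p
    simp only [Set.mem_insert_iff, Set.mem_singleton_iff]
    constructor
    · rintro (rfl | rfl) <;> simp [*]
    · rintro (k | k) <;> rw [k] at this <;> rw [← this] <;> simp [*]
  · have := hσ.inv p
    have := hσ.inv x
    simp only [Set.mem_insert_iff, Set.mem_singleton_iff]
    constructor
    · rintro (rfl | rfl) <;> simp [*]
    · rintro (k | k)
      · right; rw [← k, hσ.inv]
      · left; exact s.injective k

theorem switch_le [Finite F] (hθ : FPF θ) (hσ : FPF σ) (hφ : FPF φ) :
    genus θ σ (switchP σ φ x) ≤ genus θ σ φ ∧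
    (¬ (orbS {φ, θ}) x (σ x) → genus θ σ (switchP σ φ x) = genus θ σ φ) ∧
    (¬ (orbS {switchP σ φ x, θ, σ}) x (φ x) → genus θ σ (switchP σ φ x) = genus θ σ φ) := by
  by_cases h : φ x = σ x
  · rw [switchP_triv h]; simp
  have hV := switch_vertex hσ hφ h
  have hC := join_sigma hσ hφ h {θ, σ} (by simp)
  have hF := join_face hσ hφ h {θ}
  have hP := parity hθ hσ hφ h
  have hCF : ¬ (orbS {switchP σ φ x, θ, σ}) x (φ x) → ¬ (orbS {switchP σ φ x, θ}) x (φ x) := by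
    intro k k'
    apply k
    refine orbS_le ?_ k'
    rintro s (rfl | rfl) p <;> exact orbS_step (by simp) p
  rw [genus_eq', genus_eq']
  have hC' : (orbS {switchP σ φ x, θ, σ}) x (φ x) → Nat.card (Quotient (orbS {φ, θ, σ})) =
      Nat.card (Quotient (orbS {switchP σ φ x, θ, σ})) := by
    intro k; rw [hC, joinS_eq k]
  have hC'' : ¬ (orbS {switchP σ φ x, θ, σ}) x (φ x) → Nat.card (Quotient (orbS {φ, θ, σ})) + 1 =
      Nat.card (Quotient (orbS {switchP σ φ x, θ, σ})) := by
    intro k; rw [hC, joinS_card k]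
  by_cases c : (orbS {switchP σ φ x, θ, σ}) x (φ x)
  · have a1 := hC' c
    by_cases d : (orbS {switchP σ φ x, θ}) x (φ x) <;> by_cases d' : (orbS {φ, θ}) x (σ x)
    · rw [joinS_eq d, joinS_eq d'] at hF
      have a2 := congrArg (fun r => Nat.card (Quotient r)) hF
      simp only [c, d', not_true, false_imp_iff, and_true]
      omega
    · have a2 := joinS_card d'
      rw [joinS_eq d] at hF
      rw [hF] at a2
      simp only [c, d', not_true, not_false_eq_true, false_imp_iff, and_true, true_imp_iff]
      omega
    · have a2 := joinS_card d
      rw [joinS_eq d'] at hF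
      rw [← hF] at a2
      simp only [c, d', not_true, false_imp_iff, and_true]
      omega
    · exact (d' (hP d)).elim
  · have a1 := hC'' c
    have d := hCF c
    have d' := hP d
    have a2 := joinS_card d
    rw [joinS_eq d'] at hF
    rw [← hF] at a2
    omega

end switch
theorem remove_count {F : Type*} [Finite F] (e : Set F) (S : Set (Equiv.Perm F))
    (S0 : Set (Equiv.Perm {f : F // f ∉ e}))
    (hcl : ∀ s ∈ S, ∀ p, p ∈ e ↔ s p ∈ e)
    (h1 : ∀ s ∈ S, ∃ s0 ∈ S0, ∀ a : {f : F // f ∉ e}, (s0 a : F) = s a)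
    (h2 : ∀ s0 ∈ S0, ∃ s ∈ S, ∀ a : {f : F // f ∉ e}, (s0 a : F) = s a) :
    Nat.card (Quotient (orbS S0)) + (Quotient.mk (orbS S) '' e).ncard =
      Nat.card (Quotient (orbS S)) := by
  have up : ∀ p q : {f : F // f ∉ e}, (orbS S0) p q → (orbS S) p.1 q.1 := by
    intro p q hpq
    refine orbS_le (r := (orbS S).comap Subtype.val) ?_ hpq
    intro s0 hs0 p
    obtain ⟨s, hs, k⟩ := h2 s0 hs0
    change (orbS S) p.1 (s0 p).1
    rw [k]
    exact orbS_step hs _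
  let r : Setoid F :=
    { r := fun p q => (p ∈ e ∧ q ∈ e) ∨ ∃ (hp : p ∉ e) (hq : q ∉ e), (orbS S0) ⟨p, hp⟩ ⟨q, hq⟩
      iseqv := by
        refine ⟨?_, ?_, ?_⟩
        · intro p
          by_cases hp : p ∈ e
          · exact Or.inl ⟨hp, hp⟩
          · exact Or.inr ⟨hp, hp, (orbS S0).refl _⟩
        · rintro p q (⟨a, b⟩ | ⟨a, b, c⟩)
          · exact Or.inl ⟨b, a⟩
          · exact Or.inr ⟨b, a, (orbS S0).symm c⟩
        · rintro p q w (⟨a, b⟩ | ⟨a, b, c⟩) (⟨a', b'⟩ | ⟨a', b', c'⟩)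
          · exact Or.inl ⟨a, b'⟩
          · exact (a' b).elim
          · exact (b a').elim
          · exact Or.inr ⟨a, b', (orbS S0).trans c c'⟩ }
  have down : ∀ p q : {f : F // f ∉ e}, (orbS S) p.1 q.1 → (orbS S0) p q := by
    intro p q hpq
    have : r p.1 q.1 := by
      refine orbS_le (r := r) ?_ hpq
      intro s hs p
      by_cases hp : p ∈ e
      · exact Or.inl ⟨hp, (hcl s hs p).1 hp⟩
      · have hp' : s p ∉ e := fun k => hp ((hcl s hs p).2 k)
        refine Or.inr ⟨hp, hp', ?_⟩
        obtain ⟨s0, hs0, k⟩ := h1 s hs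
        have := orbS_step hs0 ⟨p, hp⟩
        have e1 : s0 ⟨p, hp⟩ = ⟨s p, hp'⟩ := Subtype.ext (k _)
        rwa [e1] at this
    rcases this with ⟨a, _⟩ | ⟨_, _, c⟩
    · exact (p.2 a).elim
    · exact c
  let f : Quotient (orbS S0) → Quotient (orbS S) :=
    Quotient.map' (s₁ := orbS S0) (s₂ := orbS S) Subtype.val (fun p q h => up p q h)
  have hf : Function.Injective f := by
    intro p q hpq
    induction p using Quotient.inductionOn with | h p => ?_
    induction q using Quotient.inductionOn with | h q => ?_
    exact Quotient.sound (down p q (Quotient.exact hpq))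
  have hr : Set.range f = (Quotient.mk (orbS S) '' e)ᶜ := by
    ext q
    induction q using Quotient.inductionOn with | h q => ?_
    constructor
    · rintro ⟨p, hp⟩ ⟨w, hw, k⟩
      induction p using Quotient.inductionOn with | h p => ?_
      have k1 : (orbS S) p.1 q := Quotient.exact hp
      have k2 : (orbS S) w q := Quotient.exact k
      exact p.2 (((orbS_closed e hcl k1).trans (orbS_closed e hcl k2).symm).2 hw)
    · intro hq
      have hq' : q ∉ e := fun k => hq ⟨q, k, rfl⟩
      exact ⟨Quotient.mk _ ⟨q, hq'⟩, rfl⟩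
  have h3 := Set.ncard_add_ncard_compl (Quotient.mk (orbS S) '' e)
  have h4 : (Set.range f).ncard = Nat.card (Quotient (orbS S0)) := by
    rw [← Nat.card_range_of_injective hf]; rfl
  rw [hr] at h4
  omega

inductive Reach {F : Type*} (σ φ : Equiv.Perm F) (e : Set F) : F → F → Prop
  | base (u : F) (hu : u ∉ e) : Reach σ φ e u u
  | step (u b : F) (hu : u ∈ e) (h : Reach σ φ e (φ (σ u)) b) : Reach σ φ e u b

theorem reach_base {F : Type*} {σ φ : Equiv.Perm F} {e : Set F} {u b : F}
    (h : Reach σ φ e u b) (hu : u ∉ e) : b = u := by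
  cases h with
  | base _ => rfl
  | step _ _ hu' _ => exact (hu hu').elim

theorem reach_of {F : Type*} (σ φ : Equiv.Perm F) (e : Set F) (m : ℕ) (u : F)
    (h1 : ((φ * σ) ^ m) u ∉ e) (h2 : ∀ j < m, ((φ * σ) ^ j) u ∈ e) :
    Reach σ φ e u (((φ * σ) ^ m) u) := by
  induction m generalizing u with
  | zero => exact Reach.base _ h1
  | succ m ih =>
    have hu : u ∈ e := h2 0 (Nat.succ_pos _)
    refine Reach.step _ _ hu ?_
    have e1 : ∀ j, ((φ * σ) ^ (j + 1)) u = ((φ * σ) ^ j) (φ (σ u)) := by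
      intro j; rw [pow_succ]; rfl
    rw [e1] at h1 ⊢
    exact ih _ h1 (fun j hj => by rw [← e1]; exact h2 _ (by omega))

theorem reach_switch {F : Type*} {σ φ : Equiv.Perm F} (hσ : FPF σ) (hφ : FPF φ) (e : Set F)
    (x : F) (hx : x ∈ e) (hx' : σ x ∈ e) (u b : F) (h : Reach σ φ e u b) :
    ∀ v, u = φ v → v ≠ x → v ≠ σ x → Reach σ (switchP σ φ x) e (switchP σ φ x v) b := by
  by_cases ht : φ x = σ x
  · rw [switchP_triv ht]
    rintro v rfl _ _
    exact h
  have hi := (switchP_fpf (σ := σ) (x := x) hφ).inv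
  have e2 := switchP_a hσ hφ ht
  have e2' : switchP σ φ x (φ (σ x)) = φ x := by rw [← e2, hi]
  -- the element `u` itself (never `x` or `σ x`) can be taken as a start of a chain
  have key : (u ≠ x → u ≠ σ x → Reach σ (switchP σ φ x) e u b) ∧
      (u = x → Reach σ (switchP σ φ x) e (φ (σ x)) b) ∧
      (u = σ x → Reach σ (switchP σ φ x) e (φ x) b) := by
    have nb1 : φ (σ x) ≠ x := by
      intro k; apply ht; rw [← k, hφ.inv, k]
    have nb2 : φ (σ x) ≠ σ x := hφ.2 _
    have na1 : φ x ≠ x := hφ.2 _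
    induction h with
    | base u hu =>
      refine ⟨fun _ _ => Reach.base _ hu, ?_, ?_⟩
      · rintro rfl; exact (hu hx).elim
      · rintro rfl; exact (hu hx').elim
    | step u b hu h ih =>
      refine ⟨fun h1 h2 => ?_, ?_, ?_⟩
      · refine Reach.step _ _ hu ?_
        have v1 : σ u ≠ x := by intro k; apply h2; rw [← k, hσ.inv]
        have v2 : σ u ≠ σ x := fun k => h1 (σ.injective k)
        by_cases v3 : σ u = φ x
        · rw [v3, e2]; exact ih.2.1 (by rw [v3, hφ.inv])
        by_cases v4 : σ u = φ (σ x)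
        · rw [v4, e2']; exact ih.2.2 (by rw [v4, hφ.inv])
        rw [switchP_other hφ v1 v2 v3 v4]
        apply ih.1
        · intro k; apply v3; rw [← k, hφ.inv]
        · intro k; apply v4; rw [← k, hφ.inv]
      · rintro rfl
        exact ih.1 nb1 nb2
      · rintro rfl
        rw [hσ.inv] at ih
        exact ih.1 na1 ht
  rintro v rfl v1 v2
  by_cases v3 : v = φ x
  · rw [v3, e2]; exact key.2.1 (by rw [v3, hφ.inv])
  by_cases v4 : v = φ (σ x)
  · rw [v4, e2']; exact key.2.2 (by rw [v4, hφ.inv])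
  rw [switchP_other hφ v1 v2 v3 v4]
  apply key.1
  · intro k; apply v3; rw [← k, hφ.inv]
  · intro k; apply v4; rw [← k, hφ.inv]

/-- Structure of an edge. -/
theorem edge_struct {F : Type*} [Finite F] {θ σ : Equiv.Perm F} (hθ : FPF θ) (hσ : FPF σ) (x : F)
    (h4 : Nat.card (orbSet {θ, σ} x) = 4) :
    σ x ≠ θ x ∧ θ (σ x) = σ (θ x) ∧ orbSet {θ, σ} x = {x, σ x, θ x, σ (θ x)} := by
  have iθ := hθ.inv
  have iσ := hσ.inv
  change (orbSet {θ, σ} x).ncard = 4 at h4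
  have hne : σ x ≠ θ x := by
    intro k
    have hsub : orbSet {θ, σ} x ⊆ {x, σ x} := by
      intro p hp
      refine (orbS_closed {x, σ x} ?_ (mem_orbSet.1 hp)).2 (by simp)
      rintro s hs p
      have hh : ∀ p ∈ ({x, σ x} : Set F), s p ∈ ({x, σ x} : Set F) := by
        rintro p (rfl | rfl) <;> rcases hs with rfl | rfl
        · simp [k]
        · simp
        · rw [k, iθ]; simp
        · rw [iσ]; simp
      have is : s (s p) = p := by rcases hs with rfl | rfl; exacts [iθ p, iσ p]
      exact ⟨hh p, fun q => by have := hh _ q; rwa [is] at this⟩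
    have := Set.ncard_le_ncard hsub
    have h2 := Set.ncard_insert_le x {σ x}
    rw [Set.ncard_singleton] at h2
    omega
  have m1 : ∀ p, (orbS {θ, σ}) p (θ p) := orbS_step (by simp)
  have m2 : ∀ p, (orbS {θ, σ}) p (σ p) := orbS_step (by simp)
  have sy : ∀ {p q}, (orbS {θ, σ}) p q → (orbS {θ, σ}) q p := fun h => (orbS {θ, σ}).symm h
  have tr : ∀ {p q r}, (orbS {θ, σ}) p q → (orbS {θ, σ}) q r → (orbS {θ, σ}) p r :=
    fun h h' => (orbS {θ, σ}).trans h h'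
  have hcard : ({x, σ x, θ x, σ (θ x)} : Set F).ncard = 4 := by
    rw [Set.ncard_eq_succ]
    refine ⟨x, {σ x, θ x, σ (θ x)}, ?_, rfl, ?_⟩
    · have := (hσ.2 x).symm
      have := (hθ.2 x).symm
      have : x ≠ σ (θ x) := by intro k; apply hne; nth_rw 1 [k]; rw [iσ]
      simp [*]
    · rw [Set.ncard_eq_three]
      refine ⟨σ x, θ x, σ (θ x), hne, ?_, (hσ.2 _).symm, rfl⟩
      intro k; exact hθ.2 x (σ.injective k).symm
  have hsub : ({x, σ x, θ x, σ (θ x)} : Set F) ⊆ orbSet {θ, σ} x := by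
    rintro p (rfl | rfl | rfl | rfl) <;> apply mem_orbSet.2
    · exact (orbS {θ, σ}).refl _
    · exact sy (m2 _)
    · exact sy (m1 _)
    · exact sy (tr (m1 _) (m2 _))
  have heq := Set.eq_of_subset_of_ncard_le hsub (by omega)
  refine ⟨hne, ?_, heq.symm⟩
  have : θ (σ x) ∈ orbSet {θ, σ} x := mem_orbSet.2 (sy (tr (m2 _) (m1 _)))
  rw [← heq] at this
  rcases this with k | k | k | k
  · exact (hne (by rw [← iθ (σ x), k])).elim
  · exact (hθ.2 _ k).elim
  · exact (hσ.2 _ (θ.injective k)).elim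
  · exact k

theorem closed_iff {F : Type*} {s : Equiv.Perm F} (hs : FPF s) (A : Set F)
    (h : ∀ p ∈ A, s p ∈ A) (p : F) : p ∈ A ↔ s p ∈ A :=
  ⟨h p, fun k => by have := h _ k; rwa [hs.inv] at this⟩

/-- Removing an edge on which `φ = σ` does not change the genus. -/
theorem genus_remove {F : Type*} [Finite F] {θ σ φ : Equiv.Perm F} (hθ : FPF θ) (hσ : FPF σ)
    (hφ : FPF φ) (x : F) (e : Set F) (he : e = {x, σ x, θ x, σ (θ x)})
    (hne : σ x ≠ θ x) (hc : θ (σ x) = σ (θ x))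
    (hx : φ x = σ x) (hy : φ (θ x) = σ (θ x))
    (θ₀ σ₀ φ₀ : Equiv.Perm {f : F // f ∉ e})
    (h1 : ∀ a, (θ₀ a : F) = θ a) (h2 : ∀ a, (σ₀ a : F) = σ a) (h3 : ∀ a, (φ₀ a : F) = φ a) :
    genus θ₀ σ₀ φ₀ = genus θ σ φ := by
  have iθ := hθ.inv
  have iσ := hσ.inv
  have iφ := hφ.inv
  have hx' : φ (σ x) = x := by rw [← hx, iφ]
  have hy' : φ (σ (θ x)) = θ x := by rw [← hy, iφ]
  have hc' : θ (σ (θ x)) = σ x := by rw [← hc, iθ]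
  have cθ : ∀ p, p ∈ e ↔ θ p ∈ e := closed_iff hθ e (by
    rw [he]; rintro p (rfl | rfl | rfl | rfl) <;> simp [*])
  have cσ : ∀ p, p ∈ e ↔ σ p ∈ e := closed_iff hσ e (by
    rw [he]; rintro p (rfl | rfl | rfl | rfl) <;> simp [*])
  have cφ : ∀ p, p ∈ e ↔ φ p ∈ e := closed_iff hφ e (by
    rw [he]; rintro p (rfl | rfl | rfl | rfl) <;> simp [*])
  have one : ∀ r : Setoid F, r x (σ x) → r x (θ x) → r x (σ (θ x)) →
      (Quotient.mk r '' e).ncard = 1 := by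
    intro r r1 r2 r3
    rw [Set.ncard_eq_one]
    refine ⟨Quotient.mk r x, ?_⟩
    have q1 := Quotient.sound (s := r) r1
    have q2 := Quotient.sound (s := r) r2
    have q3 := Quotient.sound (s := r) r3
    rw [he]
    simp only [Set.image_insert_eq, Set.image_singleton, ← q1, ← q2, ← q3]
    simp
  have tr : ∀ (r : Setoid F) {p q w}, r p q → r q w → r p w := fun r _ _ _ h h' => r.trans h h'
  have E1 := remove_count e {θ, σ} {θ₀, σ₀}
    (by rintro s (rfl | rfl) p; exacts [cθ p, cσ p]) (by simp [h1, h2]) (by simp [h1, h2])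
  have E2 := remove_count e {φ, σ} {φ₀, σ₀}
    (by rintro s (rfl | rfl) p; exacts [cφ p, cσ p]) (by simp [h3, h2]) (by simp [h3, h2])
  have E3 := remove_count e {φ, θ} {φ₀, θ₀}
    (by rintro s (rfl | rfl) p; exacts [cφ p, cθ p]) (by simp [h3, h1]) (by simp [h3, h1])
  have E4 := remove_count e {φ, θ, σ} {φ₀, θ₀, σ₀}
    (by rintro s (rfl | rfl | rfl) p; exacts [cφ p, cθ p, cσ p])
    (by simp [h3, h1, h2]) (by simp [h3, h1, h2])
  rw [one] at E1 E3 E4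
  · have two : (Quotient.mk (orbS {φ, σ}) '' e).ncard = 2 := by
      rw [Set.ncard_eq_two]
      refine ⟨Quotient.mk _ x, Quotient.mk _ (θ x), ?_, ?_⟩
      · intro k
        have k : (orbS {φ, σ}) x (θ x) := Quotient.exact k
        have := orbS_closed {x, σ x} ?_ k
        · have n1 := hθ.2 x
          simp [n1, hne.symm] at this
        · have c1 : ∀ p ∈ ({x, σ x} : Set F), σ p ∈ ({x, σ x} : Set F) := by
            rintro p (rfl | rfl) <;> simp [*]
          have c2 : ∀ p ∈ ({x, σ x} : Set F), φ p ∈ ({x, σ x} : Set F) := by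
            rintro p (rfl | rfl) <;> simp [*]
          intro s hs p
          rcases hs with hs | hs
          · rw [hs]; exact closed_iff hφ _ c2 p
          · rw [hs]; exact closed_iff hσ _ c1 p
      · have q1 : Quotient.mk (orbS {φ, σ}) x = Quotient.mk _ (σ x) :=
          Quotient.sound (orbS_step (by simp) _)
        have q2 : Quotient.mk (orbS {φ, σ}) (θ x) = Quotient.mk _ (σ (θ x)) :=
          Quotient.sound (orbS_step (by simp) _)
        rw [he]
        simp only [Set.image_insert_eq, Set.image_singleton, ← q1, ← q2]
        simp
    rw [two] at E2
    rw [genus_eq', genus_eq']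
    omega
  · exact orbS_step (by simp) x
  · exact orbS_step (by simp) x
  · exact tr _ (orbS_step (s := θ) (by simp) x) (orbS_step (by simp) _)
  · have := orbS_step (S := {φ, θ}) (s := φ) (by simp) x
    rwa [hx] at this
  · exact orbS_step (by simp) x
  · have := orbS_step (S := {φ, θ}) (s := φ) (by simp) (θ x)
    rw [hy] at this
    exact tr _ (orbS_step (s := θ) (by simp) x) this
  · exact orbS_step (by simp) x
  · exact orbS_step (by simp) x
  · exact tr _ (orbS_step (s := θ) (by simp) x) (orbS_step (by simp) _)

theorem main_aux {F : Type*} [Finite F] {θ σ φ : Equiv.Perm F} (hθ : FPF θ) (hσ : FPF σ)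
    (hφ : FPF φ) (x : F) (e : Set F) (he : e = {x, σ x, θ x, σ (θ x)})
    (hne : σ x ≠ θ x) (hc : θ (σ x) = σ (θ x))
    (θ₀ σ₀ φ₀ : Equiv.Perm {f : F // f ∉ e})
    (hdel : IsEdgeDeletion σ φ e θ₀ σ₀ φ₀ θ) :
    genus θ₀ σ₀ φ₀ ≤ genus θ σ φ ∧
    ((φ x = σ x ∨ ¬ (orbS {φ, θ}) x (σ x)) → genus θ₀ σ₀ φ₀ = genus θ σ φ) := by
  have iσ := hσ.inv
  have iθ := hθ.inv
  set φ1 := switchP σ φ x with hφ1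
  set φ2 := switchP σ φ1 (θ x) with hφ2
  have f1 : FPF φ1 := switchP_fpf hφ
  have f2 : FPF φ2 := switchP_fpf f1
  have s1 : φ1 x = σ x := switchP_self hσ hφ
  have s1' : φ1 (σ x) = x := by rw [← s1, f1.inv]
  have s2 : φ2 (θ x) = σ (θ x) := switchP_self hσ f1
  have s2' : φ2 (σ (θ x)) = θ x := by rw [← s2, f2.inv]
  have n1 := hθ.2 x
  have n2 : x ≠ σ (θ x) := by intro k; apply hne; nth_rw 1 [k]; rw [iσ]
  have s3 : φ2 x = σ x := by
    rw [hφ2, switchP_other f1 n1.symm n2, s1]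
    · intro k; apply hne; rw [← s1]; nth_rw 1 [k]; rw [f1.inv]
    · intro k; apply n1; apply σ.injective; rw [← s1]; nth_rw 2 [k]; rw [f1.inv]
  have s3' : φ2 (σ x) = x := by rw [← s3, f2.inv]
  have cφ : ∀ p, p ∈ e ↔ φ2 p ∈ e := closed_iff f2 e (by
    rw [he]; intro p hp
    rcases hp with hp | hp | hp | hp <;> rw [hp]
    · rw [s3]; simp
    · rw [s3']; simp
    · rw [s2]; simp
    · rw [s2']; simp)
  have cσ : ∀ p, p ∈ e ↔ σ p ∈ e := closed_iff hσ e (by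
    rw [he]; rintro p (rfl | rfl | rfl | rfl) <;> simp [*])
  have cθ : ∀ p, p ∈ e ↔ θ p ∈ e := closed_iff hθ e (by
    have hc' : θ (σ (θ x)) = σ x := by rw [← hc, iθ]
    rw [he]; rintro p (rfl | rfl | rfl | rfl) <;> simp [*])
  have me : x ∈ e := by simp [he]
  have me1 : σ x ∈ e := by simp [he]
  have me2 : θ x ∈ e := by simp [he]
  have me3 : σ (θ x) ∈ e := by simp [he]
  have hrest : ∀ a, (φ₀ a : F) = φ2 a := by
    intro a
    obtain ⟨m, m1, m2, m3⟩ := hdel.2 a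
    have r0 := reach_of σ φ e m _ m1 m2
    rw [← m3] at r0
    have r1 := reach_switch hσ hφ e x me me1 _ _ r0 a rfl
      (fun k => a.2 (k ▸ me)) (fun k => a.2 (k ▸ me1))
    have r2 := reach_switch hσ f1 e (θ x) me2 me3 _ _ r1 a rfl
      (fun k => a.2 (k ▸ me2)) (fun k => a.2 (k ▸ me3))
    have na : φ2 a ∉ e := fun k => a.2 ((cφ _).2 k)
    change Reach σ φ2 e (φ2 a) _ at r2
    exact reach_base r2 na
  have g0 : genus θ₀ σ₀ φ₀ = genus θ σ φ2 :=
    genus_remove hθ hσ f2 x e he hne hc s3 s2 θ₀ σ₀ φ₀ (fun a => (hdel.1 a).1)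
      (fun a => (hdel.1 a).2) hrest
  have g2 : genus θ σ φ2 = genus θ σ φ1 := by
    by_cases ht : φ1 (θ x) = σ (θ x)
    · rw [hφ2, switchP_triv ht]
    · apply (switch_le hθ hσ f1).2.2
      intro k
      have := orbS_closed e ?_ k
      · have k2 := this.1 me2
        rw [he] at k2
        rcases k2 with k2 | k2 | k2 | k2
        · apply hne; rw [← s1]; nth_rw 1 [← k2]; rw [f1.inv]
        · exact n1 (f1.inv (θ x) ▸ (by rw [k2, s1']))
        · exact f1.2 _ k2
        · exact ht k2
      · rintro s hs p
        rcases hs with hs | hs | hs <;> rw [hs]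
        exacts [cφ p, cθ p, cσ p]
  have g1 := switch_le (x := x) hθ hσ hφ
  rw [g0, g2]
  refine ⟨g1.1, ?_⟩
  rintro (k | k)
  · rw [hφ1, switchP_triv k]
  · exact g1.2.1 k

theorem stmt7 {F : Type*} [Fintype F]
    (θ σ' φ' : Equiv.Perm F) (h : IsGraphEmb θ σ' φ') (x : F)
    (e : Set F) (he : e = orbSet {θ, σ'} x)
    (θ₀ σ₀ φ₀ : Equiv.Perm {f : F // f ∉ e})
    (hdel : IsEdgeDeletion σ' φ' e θ₀ σ₀ φ₀ θ) :
    genus θ₀ σ₀ φ₀ ≤ genus θ σ' φ' ∧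
    ((Nat.card ((fun f => orbSet {θ, φ'} f) '' e) = 2 ∨
        ∃ f ∈ e, Nat.card (orbSet {σ', φ'} f) = 2) →
      genus θ₀ σ₀ φ₀ = genus θ σ' φ') := by
  obtain ⟨hθ, hσ, hφ, h4⟩ := h
  have E := fun p => edge_struct hθ hσ p (h4 p)
  have M : ∀ f, f ∈ e → _ := fun f hf =>
    main_aux hθ hσ hφ f e
      (by
        rw [← (E f).2.2, he]
        rw [he] at hf
        exact (MulAction.orbit_eq_iff.2 hf).symm) (E f).1 (E f).2.1 θ₀ σ₀ φ₀ hdel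
  have hxe : x ∈ e := by rw [he]; exact MulAction.mem_orbit_self x
  refine ⟨(M x hxe).1, ?_⟩
  rintro (hf | ⟨f, hf, h2⟩)
  · apply (M x hxe).2
    right
    intro k
    have sub : ((fun f => orbSet {θ, φ'} f) '' e) ⊆ {orbSet {θ, φ'} x} := by
      rintro _ ⟨f, hfe, rfl⟩
      refine MulAction.orbit_eq_iff.2 ?_
      rw [Set.pair_comm]
      change (orbS {φ', θ}) f x
      have st : ∀ p, (orbS {φ', θ}) p (θ p) := orbS_step (by simp)
      rw [he, (E x).2.2] at hfe
      have sy : ∀ {p q}, (orbS {φ', θ}) p q → (orbS {φ', θ}) q p :=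
        fun h => (orbS {φ', θ}).symm h
      rcases hfe with rfl | rfl | rfl | rfl
      · exact (orbS {φ', θ}).refl _
      · exact sy k
      · exact sy (st x)
      · rw [← (E x).2.1]
        exact sy ((orbS {φ', θ}).trans k (st _))
    have c := Set.ncard_le_ncard sub
    rw [Set.ncard_singleton] at c
    change Set.ncard _ = 2 at hf
    omega
  · apply (M f hf).2
    left
    change Set.ncard _ = 2 at h2
    by_contra hne
    have sy : ∀ {p q}, (orbS {σ', φ'}) p q → (orbS {σ', φ'}) q p :=
      fun h => (orbS {σ', φ'}).symm h
    have sub : ({f, σ' f, φ' f} : Set F) ⊆ orbSet {σ', φ'} f := by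
      rintro p (rfl | rfl | rfl) <;> apply mem_orbSet.2
      · exact (orbS {σ', φ'}).refl _
      · exact sy (orbS_step (by simp) _)
      · exact sy (orbS_step (by simp) _)
    have c := Set.ncard_le_ncard sub
    have c3 : ({f, σ' f, φ' f} : Set F).ncard = 3 :=
      Set.ncard_eq_three.2 ⟨_, _, _, (hσ.2 f).symm, (hφ.2 f).symm, fun k => hne k.symm, rfl⟩
    omega
end

section
/- If E₀ is obtained from a graph embedding E by drawing a new edge, then the genus of E₀ is at least the genus of E. Furthermore, if the new edge is drawn along the boundary of a face, then the genera of E and E₀ are equal. -/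
namespace GE

open Equiv

variable {F : Type*}

theorem FPF.inv {π : Perm F} (h : FPF π) (a : F) : π (π a) = a := by
  have := congrArg (fun p : Perm F => p a) h.1
  simpa using this

/-- The orbit equivalence relation. -/
def gen (S : Set (Perm F)) : Setoid F := MulAction.orbitRel (Subgroup.closure S) F

theorem orbCount_eq (S : Set (Perm F)) : orbCount S = Nat.card (Quotient (gen S)) := rfl

theorem gen_resp {S : Set (Perm F)} {s : Perm F} (hs : s ∈ S) (a : F) : gen S a (s a) := by
  apply Setoid.symm'
  exact ⟨⟨s, Subgroup.subset_closure hs⟩, rfl⟩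

theorem gen_le {S : Set (Perm F)} {T : Setoid F} (h : ∀ s ∈ S, ∀ a, T a (s a)) {a b : F}
    (hab : gen S a b) : T a b := by
  obtain ⟨⟨g, hg⟩, rfl⟩ := hab
  apply Setoid.symm'
  change T b (g b)
  have key : ∀ b, T b (g b) := by
    induction hg using Subgroup.closure_induction with
    | mem s hs => exact fun b => h s hs b
    | one => exact fun b => Setoid.refl' T b
    | mul p q _ _ hp hq => exact fun b => Setoid.trans' T (hq b) (hp (q b))
    | inv p _ hp =>
      intro b
      have := hp (p⁻¹ b)
      rw [← Perm.mul_apply, mul_inv_cancel, Perm.one_apply] at this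
      exact Setoid.symm' T this
  exact key b

theorem mem_orbSet {S : Set (Perm F)} {a b : F} : b ∈ orbSet S a ↔ gen S b a := Iff.rfl

theorem card_join_eq {R T : Setoid F} {a b : F} (hRT : ∀ p q, R p q → T p q)
    (hmin : ∀ T' : Setoid F, (∀ p q, R p q → T' p q) → T' a b → ∀ p q, T p q → T' p q)
    (h : R a b) : Nat.card (Quotient R) = Nat.card (Quotient T) := by
  have : R = T := Setoid.ext fun p q => ⟨hRT p q, hmin R (fun _ _ h => h) h p q⟩
  rw [this]

theorem card_join_ne [Finite F] {R T : Setoid F} {a b : F} (hRT : ∀ p q, R p q → T p q)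
    (hT : T a b)
    (hmin : ∀ T' : Setoid F, (∀ p q, R p q → T' p q) → T' a b → ∀ p q, T p q → T' p q)
    (h : ¬ R a b) : Nat.card (Quotient R) = Nat.card (Quotient T) + 1 := by
  classical
  let mk : F → Quotient R := Quotient.mk R
  have mk_iff : ∀ p q, mk p = mk q ↔ R p q := fun p q => Quotient.eq
  let f : F → Quotient R := fun p => if mk p = mk b then mk a else mk p
  have hTker : T = Setoid.ker f := by
    apply Setoid.ext
    intro p q
    constructor
    · apply hmin
      · intro p q hpq
        have := (mk_iff p q).2 hpq
        simp only [Setoid.ker_def, f, this]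
      · simp only [Setoid.ker_def, f]
        simp
    · intro hpq
      have key : ∀ p r, f p = mk r → T p r := by
        intro p r hr
        simp only [f] at hr
        split_ifs at hr with h1
        · have h1 := hRT _ _ ((mk_iff _ _).1 h1)
          have h2 := hRT _ _ ((mk_iff _ _).1 hr)
          exact T.trans' h1 (T.trans' (T.symm' hT) h2)
        · exact hRT _ _ ((mk_iff _ _).1 hr)
      obtain ⟨r, hr⟩ := Quotient.exists_rep (f p)
      have hr : f p = mk r := hr.symm
      have hpq : f p = f q := hpq
      exact T.trans' (key p r hr) (T.symm' (key q r (hpq ▸ hr)))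
  have e : Quotient T ≃ Set.range f := by
    rw [hTker]; exact Setoid.quotientKerEquivRange f
  have hr : Set.range f = {mk b}ᶜ := by
    ext z
    constructor
    · rintro ⟨p, rfl⟩
      simp only [f, Set.mem_compl_iff, Set.mem_singleton_iff]
      split_ifs with h1
      · rwa [mk_iff]
      · exact h1
    · intro hz
      obtain ⟨p, rfl⟩ := Quotient.exists_rep z
      refine ⟨p, ?_⟩
      have : ¬ mk p = mk b := hz
      simp only [f, this, if_false]
      rfl
  rw [Nat.card_congr e, hr]
  have := Set.ncard_add_ncard_compl ({mk b} : Set (Quotient R))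
  rw [Set.ncard_singleton] at this
  rw [← this, add_comm]
  rfl

/-! ### Detaching a half edge -/

/-- replace the pairs (x, φ x), (y, φ y) by (x, y), (φ x, φ y). -/
def det [DecidableEq F] (φ : Perm F) (x y : F) : Perm F := swap x (φ y) * φ * swap x (φ y)

section det
variable [DecidableEq F] {φ : Perm F} {x y : F}

theorem det_fpf (h : FPF φ) : FPF (det φ x y) := by
  constructor
  · ext a; simp [det, FPF.inv h]
  · intro a ha
    simp only [det, Perm.mul_apply] at ha
    have := congrArg (swap x (φ y)) ha
    rw [swap_apply_self] at this
    exact h.2 _ this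

theorem det_x (h : FPF φ) (hxy : x ≠ y) : det φ x y x = y := by
  have := h.2 y
  simp only [det, Perm.mul_apply, swap_apply_left, FPF.inv h]
  rw [swap_apply_of_ne_of_ne hxy.symm this.symm]

theorem det_y (h : FPF φ) (hxy : x ≠ y) : det φ x y y = x := by
  have := congrArg (det φ x y) (det_x h hxy)
  rw [FPF.inv (det_fpf h)] at this
  exact this.symm

theorem det_off (h : FPF φ) {a : F} (h1 : a ≠ x) (h3 : φ a ≠ x)
    (h4 : φ a ≠ y) (h2 : a ≠ y) : det φ x y a = φ a := by
  have : a ≠ φ y := fun h' => h4 (by rw [h', FPF.inv h])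
  simp only [det, Perm.mul_apply]
  rw [swap_apply_of_ne_of_ne h1 this, swap_apply_of_ne_of_ne h3]
  exact fun h' => h2 (φ.injective h')

theorem det_fx (h : FPF φ) (hxy : x ≠ y) (_ : φ x ≠ y) :
    det φ x y (φ x) = φ y := by
  have : φ x ≠ φ y := fun h' => hxy (φ.injective h')
  simp only [det, Perm.mul_apply]
  rw [swap_apply_of_ne_of_ne (h.2 x) this, FPF.inv h, swap_apply_left]

theorem det_fy (h : FPF φ) (hxy : x ≠ y) : det φ x y (φ y) = φ x := by
  have : φ x ≠ φ y := fun h' => hxy (φ.injective h')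
  simp only [det, Perm.mul_apply]
  rw [swap_apply_right, swap_apply_of_ne_of_ne (h.2 x) this]

theorem det_eq (h : FPF φ) (h2 : φ x = y) : det φ x y = φ := by
  subst h2
  ext a
  simp [det, FPF.inv h]

/-- `T` respects `φ` off the four flags. -/
def Off (φ : Perm F) (x y : F) (T : Setoid F) : Prop :=
  ∀ z, z ≠ x → z ≠ y → φ z ≠ x → φ z ≠ y → T z (φ z)

theorem resp_iff (h : FPF φ) (T : Setoid F) :
    (∀ z, T z (φ z)) ↔ Off φ x y T ∧ T x (φ x) ∧ T y (φ y) := by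
  constructor
  · exact fun H => ⟨fun z _ _ _ _ => H z, H x, H y⟩
  · rintro ⟨H, H1, H2⟩ z
    by_cases h1 : z = x
    · rw [h1]; exact H1
    by_cases h2 : z = y
    · rw [h2]; exact H2
    by_cases h3 : φ z = x
    · have := FPF.inv h z
      rw [h3] at this ⊢
      rw [← this]; exact T.symm' H1
    by_cases h4 : φ z = y
    · have := FPF.inv h z
      rw [h4] at this ⊢
      rw [← this]; exact T.symm' H2
    exact H z h1 h2 h3 h4

theorem resp_det_iff (h : FPF φ) (hxy : x ≠ y) (hu : φ x ≠ y) (T : Setoid F) :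
    (∀ z, T z (det φ x y z)) ↔ Off φ x y T ∧ T x y ∧ T (φ x) (φ y) := by
  constructor
  · intro H
    refine ⟨fun z h1 h2 h3 h4 => ?_, ?_, ?_⟩
    · have := H z
      rwa [det_off h h1 h3 h4 h2] at this
    · have := H x
      rwa [det_x h hxy] at this
    · have := H (φ x)
      rwa [det_fx h hxy hu] at this
  · rintro ⟨H, H1, H2⟩ z
    by_cases h1 : z = x
    · rw [h1, det_x h hxy]; exact H1
    by_cases h2 : z = y
    · rw [h2, det_y h hxy]; exact T.symm' H1
    by_cases h3 : φ z = x
    · have := FPF.inv h z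
      rw [h3] at this
      rw [← this, det_fx h hxy hu]; exact H2
    by_cases h4 : φ z = y
    · have := FPF.inv h z
      rw [h4] at this
      rw [← this, det_fy h hxy]; exact T.symm' H2
    rw [det_off h h1 h3 h4 h2]
    exact H z h1 h2 h3 h4

end det

theorem parity (k : ℕ) : ∀ {α β : Perm F}, FPF α → FPF β → ∀ x, β (((α * β) ^ k) x) ≠ x := by
  induction k with
  | zero => intro α β _ hβ x; simpa using hβ.2 x
  | succ k ih =>
    intro α β hα hβ x hx
    apply ih hβ hα (β x)
    have e : (α * β) ^ (k + 1) = α * (β * α) ^ k * β := by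
      rw [pow_succ', mul_assoc, mul_assoc]
      congr 1
      exact (mul_pow_mul β α k).symm
    rw [e] at hx
    simp only [Perm.mul_apply] at hx
    have := congrArg β hx
    rwa [FPF.inv hβ] at this

/-- Following the path from `x` in the `θ, φ` graph. -/
theorem path [Finite F] [DecidableEq F] {θ φ : Perm F} (hθ : FPF θ) (hφ : FPF φ) (x y : F) :
    ∃ w, (w = y ∨ w = φ x ∨ w = φ y) ∧
      ∀ T : Setoid F, (∀ z, T z (θ z)) → Off φ x y T → T x w := by
  classical
  let z : ℕ → F := fun k => ((φ * θ) ^ k) x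
  have hz : ∀ k, z (k + 1) = φ (θ (z k)) := fun k => by simp [z, pow_succ']
  let P : ℕ → Prop := fun k => θ (z k) = y ∨ θ (z k) = φ x ∨ θ (z k) = φ y
  have hex : ∃ k, P k := by
    obtain ⟨n, hn, h1⟩ := (isOfFinOrder_of_finite (φ * θ)).exists_pow_eq_one
    obtain ⟨m, rfl⟩ : ∃ m, n = m + 1 := ⟨n - 1, by omega⟩
    refine ⟨m, Or.inr (Or.inl ?_)⟩
    have h2 := hz m
    have h3 : z (m + 1) = x := by simp [z, h1]
    rw [h3] at h2
    rw [h2, FPF.inv hφ]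
  refine ⟨θ (z (Nat.find hex)), Nat.find_spec hex, fun T hT hO => ?_⟩
  have main : ∀ k ≤ Nat.find hex, T x (z k) := by
    intro k
    induction k with
    | zero => intro _; exact T.refl' x
    | succ k ih =>
      intro hk
      have h1 := ih (by omega)
      have h2 : ¬ P k := Nat.find_min hex (by omega)
      have hx : θ (z k) ≠ x := parity k hφ hθ x
      simp only [P, not_or] at h2
      have h3 := hO (θ (z k)) hx h2.1
        (fun h => h2.2.1 (by rw [← h, FPF.inv hφ]))
        (fun h => h2.2.2 (by rw [← h, FPF.inv hφ]))
      rw [hz]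
      exact T.trans' h1 (T.trans' (hT _) h3)
  exact T.trans' (main _ le_rfl) (hT _)

/-- The two-block setoid. -/
def blk (e : Set F) : Setoid F where
  r a b := a ∈ e ↔ b ∈ e
  iseqv := ⟨fun _ => Iff.rfl, Iff.symm, Iff.trans⟩

theorem blk_iff {e : Set F} {a b : F} : blk e a b ↔ (a ∈ e ↔ b ∈ e) := Iff.rfl

/-- The join of a relation with a pair. -/
def J (R : Setoid F) (a b : F) : Setoid F := sInf {T | (∀ p q, R p q → T p q) ∧ T a b}

theorem J_le {R : Setoid F} {a b : F} : ∀ p q, R p q → J R a b p q :=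
  fun p q h _ hT => hT.1 p q h

theorem J_mem {R : Setoid F} {a b : F} : J R a b a b := fun _ hT => hT.2

theorem J_min {R : Setoid F} {a b : F} (T' : Setoid F) (h1 : ∀ p q, R p q → T' p q)
    (h2 : T' a b) (p q : F) (h : J R a b p q) : T' p q := h T' ⟨h1, h2⟩

section step
variable [DecidableEq F] {θ σ φ : Perm F} {x y : F}

/-- When the pair `x, y` is already related. -/
theorem join_same {S : Set (Perm F)} (hφ : FPF φ) (hσ : σ ∈ S) (hy : σ x = y) (hxy : x ≠ y)
    (hu : φ x ≠ y) :
    (∀ p q, gen (insert (det φ x y) S) p q → gen (insert φ S) p q) ∧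
    gen (insert φ S) x (φ x) ∧
    ∀ T' : Setoid F, (∀ p q, gen (insert (det φ x y) S) p q → T' p q) → T' x (φ x) →
      ∀ p q, gen (insert φ S) p q → T' p q := by
  refine ⟨fun p q => ?_, gen_resp (Set.mem_insert _ _) x, fun T' h1 h2 p q => ?_⟩
  · apply gen_le
    rintro s (rfl | hs)
    · have h0 := (resp_iff (x := x) (y := y) hφ (gen (insert φ S))).1
        (gen_resp (Set.mem_insert _ _))
      have hx : gen (insert φ S) x y := hy ▸ gen_resp (Set.mem_insert_of_mem _ hσ) x
      refine (resp_det_iff hφ hxy hu _).2 ⟨h0.1, hx, ?_⟩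
      exact Setoid.trans' _ (Setoid.symm' _ h0.2.1) (Setoid.trans' _ hx h0.2.2)
    · exact gen_resp (Set.mem_insert_of_mem _ hs)
  · apply gen_le
    have h3 := (resp_det_iff hφ hxy hu T').1
      (fun z => h1 _ _ (gen_resp (Set.mem_insert _ _) z))
    rintro s (rfl | hs)
    · refine (resp_iff (x := x) (y := y) hφ T').2 ⟨h3.1, h2, ?_⟩
      exact T'.trans' (T'.symm' h3.2.1) (T'.trans' h2 h3.2.2)
    · exact fun a => h1 _ _ (gen_resp (Set.mem_insert_of_mem _ hs) a)

theorem step_V [Finite F] (hσ : FPF σ) (hφ : FPF φ) (hy : σ x = y) (hu : φ x ≠ y) :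
    orbCount {det φ x y, σ} = orbCount {φ, σ} + 1 := by
  have hxy : x ≠ y := hy ▸ (hσ.2 x).symm
  obtain ⟨h1, h2, h3⟩ := join_same (S := {σ}) hφ rfl hy hxy hu
  refine card_join_ne h1 h2 h3 fun h => ?_
  have : blk ({x, y} : Set F) x (φ x) := by
    refine gen_le ?_ h
    have hyx : σ y = x := by rw [← hy, FPF.inv hσ]
    rintro s (rfl | rfl) a
    · have H : ∀ a, a ∈ ({x, y} : Set F) → det φ x y a ∈ ({x, y} : Set F) := by
        rintro a (rfl | rfl)
        · rw [det_x hφ hxy]; simp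
        · rw [det_y hφ hxy]; simp
      refine ⟨H a, fun h => ?_⟩
      have := H _ h
      rwa [FPF.inv (det_fpf hφ)] at this
    · have H : ∀ a, a ∈ ({x, y} : Set F) → s a ∈ ({x, y} : Set F) := by
        rintro a (rfl | rfl)
        · rw [hy]; simp
        · rw [hyx]; simp
      refine ⟨H a, fun h => ?_⟩
      have := H _ h
      rwa [FPF.inv hσ] at this
  have := (blk_iff.1 this).1 (by simp)
  rcases this with h | h
  · exact hφ.2 x h
  · exact hu h

theorem step_C [Finite F] (hφ : FPF φ) (hy : σ x = y) (hxy : x ≠ y) (hu : φ x ≠ y) :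
    (gen {det φ x y, θ, σ} x (φ x) → orbCount {det φ x y, θ, σ} = orbCount {φ, θ, σ}) ∧
    (¬ gen {det φ x y, θ, σ} x (φ x) →
      orbCount {det φ x y, θ, σ} = orbCount {φ, θ, σ} + 1) := by
  obtain ⟨h1, h2, h3⟩ := join_same (S := {θ, σ}) hφ (by simp) hy hxy hu
  exact ⟨fun h => card_join_eq h1 h3 h, fun h => card_join_ne h1 h2 h3 h⟩

theorem step_F [Finite F] (hφ : FPF φ) (hxy : x ≠ y) (hu : φ x ≠ y) :
    ∃ H : ℕ,
    (gen {φ, θ} x y → orbCount {φ, θ} = H) ∧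
    (¬ gen {φ, θ} x y → orbCount {φ, θ} = H + 1) ∧
    (gen {det φ x y, θ} x (φ x) → orbCount {det φ x y, θ} = H) ∧
    (¬ gen {det φ x y, θ} x (φ x) → orbCount {det φ x y, θ} = H + 1) := by
  let T : Setoid F := J (gen {φ, θ}) x y
  have hT0 : ∀ z, T z (θ z) := fun z => J_le _ _ (gen_resp (by simp) z)
  have hT1 := (resp_iff (x := x) (y := y) hφ T).1 fun z => J_le _ _ (gen_resp (by simp) z)
  have hT2 : T x y := J_mem
  have h1 : ∀ p q, gen {det φ x y, θ} p q → T p q := by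
    intro p q
    apply gen_le
    rintro s (rfl | rfl)
    · refine (resp_det_iff hφ hxy hu T).2 ⟨hT1.1, hT2, ?_⟩
      exact T.trans' (T.symm' hT1.2.1) (T.trans' hT2 hT1.2.2)
    · exact hT0
  have h3 : ∀ T' : Setoid F, (∀ p q, gen {det φ x y, θ} p q → T' p q) → T' x (φ x) →
      ∀ p q, T p q → T' p q := by
    intro T' h4 h5
    have h6 := (resp_det_iff hφ hxy hu T').1 fun z => h4 _ _ (gen_resp (by simp) z)
    apply J_min
    · intro p q
      apply gen_le
      rintro s (rfl | rfl)
      · refine (resp_iff (x := x) (y := y) hφ T').2 ⟨h6.1, h5, ?_⟩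
        exact T'.trans' (T'.symm' h6.2.1) (T'.trans' h5 h6.2.2)
      · exact fun z => h4 _ _ (gen_resp (by simp) z)
    · exact h6.2.1
  exact ⟨Nat.card (Quotient T), fun h => card_join_eq J_le J_min h,
    fun h => card_join_ne J_le J_mem J_min h, fun h => card_join_eq h1 h3 h,
    fun h => card_join_ne h1 hT1.2.1 h3 h⟩

theorem genus_eq (θ σ φ : Perm F) : genus θ σ φ =
    (orbCount {θ, σ} : ℤ) - orbCount {φ, σ} - orbCount {φ, θ} + 2 * orbCount {φ, θ, σ} := by
  have e : ({θ, σ, φ} : Set (Perm F)) = {φ, θ, σ} := by ext; simp; tauto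
  rw [genus, e, Set.pair_comm σ φ, Set.pair_comm θ φ]

theorem step [Finite F] (hθ : FPF θ) (hσ : FPF σ) (hφ : FPF φ) (hy : σ x = y) (hu : φ x ≠ y) :
    genus θ σ (det φ x y) ≤ genus θ σ φ ∧
    (¬ gen {det φ x y, θ, σ} x (φ x) → genus θ σ (det φ x y) = genus θ σ φ) ∧
    (¬ gen {φ, θ} x y → genus θ σ (det φ x y) = genus θ σ φ) := by
  have hxy : x ≠ y := hy ▸ (hσ.2 x).symm
  have hV := step_V hσ hφ hy hu
  obtain ⟨hC1, hC2⟩ := step_C (θ := θ) hφ hy hxy hu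
  obtain ⟨H, hF1, hF2, hF3, hF4⟩ := step_F (θ := θ) hφ hxy hu
  obtain ⟨w, hw, hp⟩ := path hθ hφ x y
  have hR1 := (resp_det_iff hφ hxy hu (gen {det φ x y, θ, σ})).1 (gen_resp (by simp))
  have hf := (resp_iff (x := x) (y := y) hφ (gen {φ, θ})).1 (gen_resp (by simp))
  have hf1 := (resp_det_iff hφ hxy hu (gen {det φ x y, θ})).1 (gen_resp (by simp))
  have pC := hp _ (gen_resp (by simp)) hR1.1
  have pF := hp _ (gen_resp (by simp)) hf.1
  have pF1 := hp _ (gen_resp (by simp)) hf1.1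
  have hle : gen {det φ x y, θ} x (φ x) → gen {det φ x y, θ, σ} x (φ x) := by
    apply gen_le
    rintro s (rfl | rfl) <;> exact gen_resp (by simp)
  have A : ¬ gen {det φ x y, θ, σ} x (φ x) → gen {φ, θ} x y := by
    intro h
    rcases hw with rfl | rfl | rfl
    · exact pF
    · exact (h pC).elim
    · exact (h (Setoid.trans' _ pC (Setoid.symm' _ hR1.2.2))).elim
  have B : ¬ gen {φ, θ} x y → gen {det φ x y, θ} x (φ x) := by
    intro h
    rcases hw with rfl | rfl | rfl
    · exact (h pF).elim
    · exact pF1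
    · exact (h (Setoid.trans' _ pF (Setoid.symm' _ hf.2.2))).elim
  rw [genus_eq, genus_eq]
  by_cases c1 : gen {det φ x y, θ, σ} x (φ x) <;> by_cases c2 : gen {φ, θ} x y <;>
    by_cases c3 : gen {det φ x y, θ} x (φ x) <;>
    simp only [c1, c2, c3, not_true_eq_false, not_false_eq_true, forall_true_left,
      false_imp_iff, imp_false, and_true, true_and, and_self] at hle A B hC1 hC2 hF1 hF2 hF3 hF4 ⊢ <;>
    omega

end step


/-! ### Restriction to the complement of the edge -/

theorem card_split [Finite F] {e : Set F} (R : Setoid F) (R' : Setoid {f : F // f ∉ e})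
    (hsat : ∀ a b, R a b → (a ∈ e ↔ b ∈ e)) (h : ∀ a b, R' a b ↔ R a b) :
    Nat.card (Quotient R) = Nat.card (Quotient R') + (Quotient.mk R '' e).ncard := by
  let g : Quotient R' → Quotient R := Quotient.map Subtype.val fun a b hab => (h a b).1 hab
  have hg : Function.Injective g := by
    intro p q
    induction p using Quotient.inductionOn with | _ a
    induction q using Quotient.inductionOn with | _ b
    intro hpq
    exact Quotient.sound ((h a b).2 (Quotient.exact hpq))
  have hr : Set.range g = (Quotient.mk R '' e)ᶜ := by
    ext z
    constructor
    · rintro ⟨p, rfl⟩ ⟨b, hb, hbz⟩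
      induction p using Quotient.inductionOn with | _ a
      exact a.2 ((hsat _ _ (Quotient.exact hbz)).1 hb)
    · intro hz
      induction z using Quotient.inductionOn with | _ a
      exact ⟨Quotient.mk R' ⟨a, fun ha => hz ⟨a, ha, rfl⟩⟩, rfl⟩
  have h1 := Set.ncard_add_ncard_compl (Quotient.mk R '' e)
  rw [← hr, ← Nat.card_coe_set_eq (Set.range g),
    ← Nat.card_congr (Equiv.ofInjective g hg)] at h1
  omega

theorem gen_sub {e : Set F} {S : Set (Perm F)} {S' : Set (Perm {f : F // f ∉ e})}
    (h1 : ∀ s ∈ S, ∃ s' ∈ S', ∀ a, (s' a : F) = s a)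
    (h2 : ∀ s' ∈ S', ∃ s ∈ S, ∀ a, (s' a : F) = s a)
    (he : ∀ s ∈ S, ∀ a, a ∈ e ↔ s a ∈ e) (a b : {f : F // f ∉ e}) :
    gen S' a b ↔ gen S a b := by
  constructor
  · intro h
    refine gen_le (T := Setoid.comap Subtype.val (gen S)) ?_ h
    intro s' hs' a
    obtain ⟨s, hs, hss⟩ := h2 s' hs'
    change gen S a (s' a)
    rw [hss]
    exact gen_resp hs _
  · intro h
    let T : Setoid F :=
      { r := fun a b => (a ∈ e ∧ b ∈ e) ∨ ∃ (ha : a ∉ e) (hb : b ∉ e), gen S' ⟨a, ha⟩ ⟨b, hb⟩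
        iseqv := by
          refine ⟨fun a => ?_, ?_, ?_⟩
          · by_cases ha : a ∈ e
            · exact Or.inl ⟨ha, ha⟩
            · exact Or.inr ⟨ha, ha, Setoid.refl' _ _⟩
          · rintro a b (⟨h1, h2⟩ | ⟨h1, h2, h3⟩)
            · exact Or.inl ⟨h2, h1⟩
            · exact Or.inr ⟨h2, h1, Setoid.symm' _ h3⟩
          · rintro a b c (⟨h1, h2⟩ | ⟨h1, h2, h3⟩) (⟨k1, k2⟩ | ⟨k1, k2, k3⟩)
            · exact Or.inl ⟨h1, k2⟩
            · exact (k1 h2).elim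
            · exact (h2 k1).elim
            · exact Or.inr ⟨h1, k2, Setoid.trans' _ h3 k3⟩ }
    have : T a b := by
      refine gen_le ?_ h
      intro s hs a
      by_cases ha : a ∈ e
      · exact Or.inl ⟨ha, (he s hs a).1 ha⟩
      · have hb : s a ∉ e := fun h => ha ((he s hs a).2 h)
        refine Or.inr ⟨ha, hb, ?_⟩
        obtain ⟨s', hs', hss⟩ := h1 s hs
        have : (⟨s a, hb⟩ : {f : F // f ∉ e}) = s' ⟨a, ha⟩ := Subtype.ext (hss ⟨a, ha⟩).symm
        rw [this]
        exact gen_resp hs' _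
    rcases this with ⟨h1, _⟩ | ⟨_, _, h3⟩
    · exact (a.2 h1).elim
    · exact h3

theorem orbCount_split [Finite F] {e : Set F} {S : Set (Perm F)}
    {S' : Set (Perm {f : F // f ∉ e})}
    (h1 : ∀ s ∈ S, ∃ s' ∈ S', ∀ a, (s' a : F) = s a)
    (h2 : ∀ s' ∈ S', ∃ s ∈ S, ∀ a, (s' a : F) = s a)
    (he : ∀ s ∈ S, ∀ a, a ∈ e ↔ s a ∈ e) :
    orbCount S = orbCount S' + (Quotient.mk (gen S) '' e).ncard :=
  card_split _ _ (fun a b hab => blk_iff.1 (gen_le (T := blk e) he hab)) (gen_sub h1 h2 he)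

theorem ncard_one {e : Set F} {R : Setoid F} {x : F} (hx : x ∈ e) (h : ∀ a ∈ e, R x a) :
    (Quotient.mk R '' e).ncard = 1 := by
  rw [Set.ncard_eq_one]
  refine ⟨Quotient.mk R x, ?_⟩
  ext z
  constructor
  · rintro ⟨a, ha, rfl⟩
    exact Quotient.sound (R.symm' (h a ha))
  · rintro rfl
    exact ⟨x, hx, rfl⟩

theorem edge_facts [Finite F] {θ σ : Perm F} (hθ : FPF θ) (hσ : FPF σ) (x : F)
    (h4 : Nat.card (orbSet {θ, σ} x) = 4) :
    σ (θ x) = θ (σ x) ∧ θ x ≠ σ x ∧ orbSet {θ, σ} x = {x, σ x, θ x, θ (σ x)} := by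
  classical
  rw [Nat.card_coe_set_eq] at h4
  have cl : ∀ E : Set F, x ∈ E → (∀ a ∈ E, θ a ∈ E) → (∀ a ∈ E, σ a ∈ E) →
      orbSet {θ, σ} x ⊆ E := by
    intro E hx h1 h2 b hb
    have : blk E b x := by
      refine gen_le ?_ (mem_orbSet.1 hb)
      rintro s (rfl | rfl) a
      · exact ⟨h1 a, fun h => by have := h1 _ h; rwa [FPF.inv hθ] at this⟩
      · exact ⟨h2 a, fun h => by have := h2 _ h; rwa [FPF.inv hσ] at this⟩
    exact (blk_iff.1 this).2 hx
  have mx : x ∈ orbSet {θ, σ} x := mem_orbSet.2 (Setoid.refl' _ _)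
  have mθ : ∀ a ∈ orbSet {θ, σ} x, θ a ∈ orbSet {θ, σ} x := fun a ha =>
    mem_orbSet.2 (Setoid.trans' _ (Setoid.symm' _ (gen_resp (by simp) a)) (mem_orbSet.1 ha))
  have mσ : ∀ a ∈ orbSet {θ, σ} x, σ a ∈ orbSet {θ, σ} x := fun a ha =>
    mem_orbSet.2 (Setoid.trans' _ (Setoid.symm' _ (gen_resp (by simp) a)) (mem_orbSet.1 ha))
  have ne : θ x ≠ σ x := by
    intro h
    have : orbSet {θ, σ} x ⊆ {x, θ x} := by
      apply cl
      · simp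
      · rintro a (rfl | rfl)
        · simp
        · simp [FPF.inv hθ]
      · rintro a (rfl | rfl)
        · simp [h]
        · simp [h, FPF.inv hσ]
    have h1 := Set.ncard_le_ncard this
    have h2 := Set.ncard_insert_le x {θ x}
    rw [Set.ncard_singleton] at h2
    omega
  have a1 : θ (σ x) ≠ x := fun h => ne (by rw [← congrArg θ h, FPF.inv hθ])
  have a2 : σ (θ x) ≠ x := fun h => ne (by rw [← congrArg σ h, FPF.inv hσ])
  have a3 : θ (σ x) ≠ θ x := fun h => hσ.2 x (θ.injective h)
  have a4 : σ (θ x) ≠ σ x := fun h => hθ.2 x (σ.injective h)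
  have b1 := hθ.2 x
  have b2 := hσ.2 x
  have b3 := hθ.2 (σ x)
  have b4 := hσ.2 (θ x)
  have comm : σ (θ x) = θ (σ x) := by
    by_contra hne
    have hsub : (({x, σ x, θ x, θ (σ x), σ (θ x)} : Finset F) : Set F) ⊆ orbSet {θ, σ} x := by
      intro a ha
      simp only [Finset.coe_insert, Finset.coe_singleton, Set.mem_insert_iff,
        Set.mem_singleton_iff] at ha
      rcases ha with rfl | rfl | rfl | rfl | rfl
      exacts [mx, mσ _ mx, mθ _ mx, mθ _ (mσ _ mx), mσ _ (mθ _ mx)]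
    have h1 := Set.ncard_le_ncard hsub
    rw [Set.ncard_coe_finset] at h1
    have h5 : ({x, σ x, θ x, θ (σ x), σ (θ x)} : Finset F).card = 5 := by
      rw [Finset.card_insert_of_notMem, Finset.card_insert_of_notMem,
        Finset.card_insert_of_notMem, Finset.card_insert_of_notMem, Finset.card_singleton] <;>
      simp only [Finset.mem_insert, Finset.mem_singleton, not_or] <;>
      grind
    omega
  refine ⟨comm, ne, Set.Subset.antisymm ?_ ?_⟩
  · apply cl
    · simp
    · rintro a (rfl | rfl | rfl | rfl) <;> simp [FPF.inv hθ]
    · rintro a (rfl | rfl | rfl | rfl)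
      · simp
      · simp [FPF.inv hσ]
      · simp [comm]
      · rw [← comm, FPF.inv hσ]; simp
  · rintro a (rfl | rfl | rfl | rfl)
    exacts [mx, mσ _ mx, mθ _ mx, mθ _ (mσ _ mx)]

/-- `b` is reached from `a` walking around the vertex through flags of `e`. -/
def Reach (σ φ : Perm F) (e : Set F) (a b : F) : Prop :=
  ∃ m : ℕ, (∀ j < m, ((φ * σ) ^ j) (φ a) ∈ e) ∧ b = ((φ * σ) ^ m) (φ a)

theorem Reach.base (σ φ : Perm F) (e : Set F) (a : F) : Reach σ φ e a (φ a) :=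
  ⟨0, by simp, by simp⟩

theorem Reach.next {σ φ : Perm F} {e : Set F} {a b : F} (h : Reach σ φ e a b) (hb : b ∈ e) :
    Reach σ φ e a (φ (σ b)) := by
  obtain ⟨m, h1, rfl⟩ := h
  refine ⟨m + 1, fun j hj => ?_, by simp [pow_succ']⟩
  rcases Nat.lt_succ_iff_lt_or_eq.1 hj with h | rfl
  · exact h1 j h
  · exact hb

theorem Reach.unique {σ φ : Perm F} {e : Set F} {a b c : F} (h : Reach σ φ e a b) (hb : b ∉ e)
    (h' : Reach σ φ e a c) (hc : c ∉ e) : b = c := by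
  obtain ⟨m, h1, rfl⟩ := h
  obtain ⟨n, h2, rfl⟩ := h'
  rcases lt_trichotomy m n with h | rfl | h
  · exact (hb (h2 m h)).elim
  · rfl
  · exact (hc (h1 n h)).elim

/-- One detachment in terms of reaching. -/
theorem det_walk [DecidableEq F] {σ φ : Perm F} {x y a : F} (hσ : FPF σ) (hφ : FPF φ)
    (hy : σ x = y) (h1 : a ≠ x) (h2 : a ≠ y) :
    (det φ x y a = φ a ∧ φ a ≠ x ∧ φ a ≠ y) ∨
    ((φ a = x ∨ φ a = y) ∧ det φ x y a = φ (σ (φ a))) := by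
  have hxy : x ≠ y := hy ▸ (hσ.2 x).symm
  by_cases h3 : φ a = x
  · right
    have ha : a = φ x := by rw [← h3, FPF.inv hφ]
    refine ⟨Or.inl h3, ?_⟩
    rw [h3, hy]
    rw [ha]
    exact det_fx hφ hxy (fun h => h2 (ha.trans h))
  by_cases h4 : φ a = y
  · right
    have ha : a = φ y := by rw [← h4, FPF.inv hφ]
    refine ⟨Or.inr h4, ?_⟩
    rw [h4, ← hy, FPF.inv hσ, hy, ha]
    exact det_fy hφ hxy
  exact Or.inl ⟨det_off hφ h1 h3 h4 h2, h3, h4⟩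

end GE

/-- `E₀ = (θ₀, σ₀, φ₀)` on `F` is obtained from `E = (θ, σ, φ)` on the complement of `e`
by drawing the new edge `e`; equivalently, `E` is obtained from `E₀` by deleting `e`.
The new edge is drawn along the boundary of a face exactly when, in the resulting
embedding, it is incident with two distinct faces. -/
theorem stmt10 {F : Type*} [Fintype F]
    (θ₀ σ₀ φ₀ : Equiv.Perm F) (h0 : IsGraphEmb θ₀ σ₀ φ₀) (x : F)
    (e : Set F) (he : e = orbSet {θ₀, σ₀} x)
    (θ σ' φ' : Equiv.Perm {f : F // f ∉ e})
    (hdraw : IsEdgeDeletion σ₀ φ₀ e θ σ' φ' θ₀) :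
    genus θ σ' φ' ≤ genus θ₀ σ₀ φ₀ ∧
    (Nat.card ((fun f => orbSet {θ₀, φ₀} f) '' e) = 2 →
      genus θ₀ σ₀ φ₀ = genus θ σ' φ') := by
  classical
  obtain ⟨hθ, hσ, hφ, h4⟩ := h0
  obtain ⟨comm, hne, horb⟩ := GE.edge_facts hθ hσ x (h4 x)
  rw [horb] at he
  obtain ⟨hd1, hd2⟩ := hdraw
  -- the flags of the new edge
  obtain ⟨y, hy⟩ : ∃ y, σ₀ x = y := ⟨_, rfl⟩
  obtain ⟨x', hx'⟩ : ∃ z, θ₀ x = z := ⟨_, rfl⟩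
  obtain ⟨y', hy'⟩ : ∃ z, θ₀ y = z := ⟨_, rfl⟩
  rw [hy, hx', hy'] at he
  rw [hx', hy, hy'] at comm
  rw [hx', hy] at hne
  have hyx : σ₀ y = x := by rw [← hy, GE.FPF.inv hσ]
  have hyx' : σ₀ y' = x' := by rw [← comm, GE.FPF.inv hσ]
  have hx'x : θ₀ x' = x := by rw [← hx', GE.FPF.inv hθ]
  have hy'y : θ₀ y' = y := by rw [← hy', GE.FPF.inv hθ]
  have n1 : x ≠ y := by rw [← hy]; exact (hσ.2 x).symm
  have n2 : x ≠ x' := by rw [← hx']; exact (hθ.2 x).symm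
  have n3 : y ≠ y' := by rw [← hy']; exact (hθ.2 y).symm
  have n4 : x' ≠ y' := by rw [← comm]; exact (hσ.2 x').symm
  have n5 : x ≠ y' := by
    intro h
    apply hne
    rw [← hx', h, hy'y]
  have xe : x ∈ e := by rw [he]; simp
  have ye : y ∈ e := by rw [he]; simp
  have xe' : x' ∈ e := by rw [he]; simp
  have ye' : y' ∈ e := by rw [he]; simp
  have ecases : ∀ a ∈ e, a = x ∨ a = y ∨ a = x' ∨ a = y' := by
    intro a ha; rw [he] at ha; exact ha
  have θe : ∀ a ∈ e, θ₀ a ∈ e := by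
    intro a ha
    rcases ecases a ha with rfl | rfl | rfl | rfl
    · rwa [hx']
    · rwa [hy']
    · rwa [hx'x]
    · rwa [hy'y]
  have σe : ∀ a ∈ e, σ₀ a ∈ e := by
    intro a ha
    rcases ecases a ha with rfl | rfl | rfl | rfl
    · rwa [hy]
    · rwa [hyx]
    · rwa [comm]
    · rwa [hyx']
  have inv_iff : ∀ s : Equiv.Perm F, FPF s → (∀ a ∈ e, s a ∈ e) → ∀ a, a ∈ e ↔ s a ∈ e := by
    intro s hs h a
    exact ⟨h a, fun h' => by have := h _ h'; rwa [GE.FPF.inv hs] at this⟩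
  -- detach both ends
  let φ₁ := GE.det φ₀ x y
  have hφ₁ : FPF φ₁ := GE.det_fpf hφ
  let φ₂ := GE.det φ₁ x' y'
  have hφ₂ : FPF φ₂ := GE.det_fpf hφ₁
  have e1 : φ₁ x = y := GE.det_x hφ n1
  have e2 : φ₁ y = x := GE.det_y hφ n1
  have f1 : φ₂ x = y := by
    rw [← e1]
    exact GE.det_off hφ₁ n2 (by rw [e1]; exact hne.symm) (by rw [e1]; exact n3) n5
  have f2 : φ₂ y = x := by rw [← f1, GE.FPF.inv hφ₂]
  have f3 : φ₂ x' = y' := GE.det_x hφ₁ n4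
  have f4 : φ₂ y' = x' := GE.det_y hφ₁ n4
  have φe : ∀ a ∈ e, φ₂ a ∈ e := by
    intro a ha
    rcases ecases a ha with rfl | rfl | rfl | rfl
    · rwa [f1]
    · rwa [f2]
    · rwa [f3]
    · rwa [f4]
  have hrest : ∀ a : {f : F // f ∉ e}, (φ' a : F) = φ₂ a := by
    rintro ⟨a, ha⟩
    obtain ⟨m, hm1, hm2, hm3⟩ := hd2 ⟨a, ha⟩
    have hout : φ₂ a ∉ e := fun h => ha ((inv_iff φ₂ hφ₂ φe a).2 h)
    have r1 : GE.Reach σ₀ φ₀ e a (φ' ⟨a, ha⟩) := ⟨m, hm2, hm3⟩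
    refine r1.unique (φ' ⟨a, ha⟩).2 ?_ hout
    have ax : a ≠ x := fun h => ha (h ▸ xe)
    have ay : a ≠ y := fun h => ha (h ▸ ye)
    have ax' : a ≠ x' := fun h => ha (h ▸ xe')
    have ay' : a ≠ y' := fun h => ha (h ▸ ye')
    have r2 : GE.Reach σ₀ φ₀ e a (φ₁ a) := by
      rcases GE.det_walk hσ hφ hy ax ay with ⟨h, _⟩ | ⟨h1, h2⟩
      · exact h ▸ GE.Reach.base _ _ _ _
      · change GE.Reach σ₀ φ₀ e a (GE.det φ₀ x y a)
        rw [h2]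
        refine (GE.Reach.base _ _ _ _).next ?_
        rcases h1 with h | h <;> rw [h] <;> assumption
    rcases GE.det_walk hσ hφ₁ comm ax' ay' with ⟨h, _⟩ | ⟨h1, h2⟩
    · change GE.Reach σ₀ φ₀ e a (GE.det φ₁ x' y' a)
      rw [h]; exact r2
    · change GE.Reach σ₀ φ₀ e a (GE.det φ₁ x' y' a)
      rw [h2]
      have hb : φ₁ a ∈ e := by rcases h1 with h | h <;> rw [h] <;> assumption
      have hc : σ₀ (φ₁ a) ≠ x ∧ σ₀ (φ₁ a) ≠ y := by
        rcases h1 with h | h <;> rw [h]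
        · rw [comm]; exact ⟨n5.symm, n3.symm⟩
        · rw [hyx']; exact ⟨n2.symm, hne⟩
      rcases GE.det_walk hσ hφ hy hc.1 hc.2 with ⟨h, _⟩ | ⟨k1, k2⟩
      · change GE.Reach σ₀ φ₀ e a (GE.det φ₀ x y (σ₀ (φ₁ a)))
        rw [h]; exact r2.next hb
      · change GE.Reach σ₀ φ₀ e a (GE.det φ₀ x y (σ₀ (φ₁ a)))
        rw [k2]
        refine (r2.next hb).next ?_
        rcases k1 with h | h <;> rw [h] <;> assumption
  have hθr : ∀ a : {f : F // f ∉ e}, (θ a : F) = θ₀ a := fun a => (hd1 a).1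
  have hσr : ∀ a : {f : F // f ∉ e}, (σ' a : F) = σ₀ a := fun a => (hd1 a).2
  have θi := inv_iff θ₀ hθ θe
  have σi := inv_iff σ₀ hσ σe
  have φi := inv_iff φ₂ hφ₂ φe
  -- counting
  have rel : ∀ R : Setoid F, (∀ a, R a (θ₀ a)) → ((∀ a, R a (σ₀ a)) ∨ (∀ a, R a (φ₂ a))) →
      ∀ a ∈ e, R x a := by
    intro R h1 h2
    have hxy : R x y := by
      rcases h2 with h | h
      · exact hy ▸ h x
      · exact f1 ▸ h x
    intro a ha
    rcases ecases a ha with rfl | rfl | rfl | rfl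
    · exact R.refl' _
    · exact hxy
    · exact hx' ▸ h1 x
    · exact R.trans' hxy (hy' ▸ h1 y)
  have cE : orbCount {θ₀, σ₀} = orbCount {θ, σ'} + 1 := by
    rw [GE.orbCount_split (e := e) (S := {θ₀, σ₀}) (S' := {θ, σ'})
      (by simp [hθr, hσr]) (by simp [hθr, hσr]) (by simp [← θi, ← σi])]
    rw [GE.ncard_one xe]
    apply rel
    · exact GE.gen_resp (by simp)
    · left; exact GE.gen_resp (by simp)
  have cC : orbCount {φ₂, θ₀, σ₀} = orbCount {φ', θ, σ'} + 1 := by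
    rw [GE.orbCount_split (e := e) (S := {φ₂, θ₀, σ₀}) (S' := {φ', θ, σ'})
      (by simp [hθr, hσr, hrest]) (by simp [hθr, hσr, hrest]) (by simp [← θi, ← σi, ← φi])]
    rw [GE.ncard_one xe]
    apply rel
    · exact GE.gen_resp (by simp)
    · left; exact GE.gen_resp (by simp)
  have cF : orbCount {φ₂, θ₀} = orbCount {φ', θ} + 1 := by
    rw [GE.orbCount_split (e := e) (S := {φ₂, θ₀}) (S' := {φ', θ})
      (by simp [hθr, hrest]) (by simp [hθr, hrest]) (by simp [← θi, ← φi])]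
    rw [GE.ncard_one xe]
    apply rel
    · exact GE.gen_resp (by simp)
    · right; exact GE.gen_resp (by simp)
  have cV : orbCount {φ₂, σ₀} = orbCount {φ', σ'} + 2 := by
    rw [GE.orbCount_split (e := e) (S := {φ₂, σ₀}) (S' := {φ', σ'})
      (by simp [hσr, hrest]) (by simp [hσr, hrest]) (by simp [← σi, ← φi])]
    have hxx : ¬ GE.gen {φ₂, σ₀} x x' := by
      intro h
      have hb : GE.blk ({x, y} : Set F) x x' := by
        refine GE.gen_le ?_ h
        have H : ∀ s : Equiv.Perm F, FPF s → s x = y → ∀ a,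
            a ∈ ({x, y} : Set F) ↔ s a ∈ ({x, y} : Set F) := by
          intro s hs hsx
          have hsy : s y = x := by rw [← hsx, GE.FPF.inv hs]
          have H1 : ∀ a ∈ ({x, y} : Set F), s a ∈ ({x, y} : Set F) := by
            rintro a (rfl | rfl)
            · rw [hsx]; simp
            · rw [hsy]; simp
          exact fun a => ⟨H1 a, fun h' => by have := H1 _ h'; rwa [GE.FPF.inv hs] at this⟩
        rintro s (rfl | rfl)
        · exact H _ hφ₂ f1
        · exact H _ hσ hy
      rcases (GE.blk_iff.1 hb).1 (by simp) with h | h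
      · exact n2 h.symm
      · exact hne h
    have him : Quotient.mk (GE.gen {φ₂, σ₀}) '' e =
        {Quotient.mk (GE.gen {φ₂, σ₀}) x, Quotient.mk (GE.gen {φ₂, σ₀}) x'} := by
      have q1 : Quotient.mk (GE.gen {φ₂, σ₀}) x = Quotient.mk (GE.gen {φ₂, σ₀}) y :=
        Quotient.sound (hy ▸ GE.gen_resp (by simp) x)
      have q2 : Quotient.mk (GE.gen {φ₂, σ₀}) x' = Quotient.mk (GE.gen {φ₂, σ₀}) y' :=
        Quotient.sound (comm ▸ GE.gen_resp (by simp) x')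
      rw [he]
      simp only [Set.image_insert_eq, Set.image_singleton, ← q1, ← q2]
      simp
    rw [him, Set.ncard_pair]
    exact fun h => hxx (Quotient.exact h)
  have hg : genus θ₀ σ₀ φ₂ = genus θ σ' φ' := by
    rw [GE.genus_eq, GE.genus_eq]
    omega
  have s1 : genus θ₀ σ₀ φ₁ ≤ genus θ₀ σ₀ φ₀ := by
    by_cases hu : φ₀ x = y
    · exact (congrArg (genus θ₀ σ₀) (GE.det_eq hφ hu)).le
    · exact (GE.step hθ hσ hφ hy hu).1
  have s2 : genus θ₀ σ₀ φ₂ = genus θ₀ σ₀ φ₁ := by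
    by_cases hu : φ₁ x' = y'
    · exact congrArg (genus θ₀ σ₀) (GE.det_eq hφ₁ hu)
    · refine (GE.step hθ hσ hφ₁ comm hu).2.1 fun h => ?_
      have hb : GE.blk e x' (φ₁ x') := by
        refine GE.gen_le ?_ h
        rintro s (rfl | rfl | rfl)
        exacts [φi, θi, σi]
      have hm := (GE.blk_iff.1 hb).1 xe'
      rcases ecases _ hm with h | h | h | h
      · have := congrArg φ₁ h
        rw [GE.FPF.inv hφ₁, e1] at this
        exact hne this
      · have := congrArg φ₁ h
        rw [GE.FPF.inv hφ₁, e2] at this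
        exact n2 this.symm
      · exact hφ₁.2 _ h
      · exact hu h
  refine ⟨by omega, fun hcard => ?_⟩
  have hface : ¬ GE.gen {φ₀, θ₀} x y := by
    intro h
    have hR : ∀ a ∈ e, GE.gen {θ₀, φ₀} a x := by
      rw [Set.pair_comm] at h
      intro a ha
      have hθx : ∀ a, GE.gen {θ₀, φ₀} a (θ₀ a) := GE.gen_resp (by simp)
      apply Setoid.symm'
      rcases ecases a ha with rfl | rfl | rfl | rfl
      · exact Setoid.refl' _ _
      · exact h
      · exact hx' ▸ hθx x
      · exact Setoid.trans' _ h (hy' ▸ hθx y)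
    have him : (fun f => orbSet {θ₀, φ₀} f) '' e = {orbSet {θ₀, φ₀} x} := by
      ext z
      constructor
      · rintro ⟨a, ha, rfl⟩
        ext b
        exact ⟨fun hb => GE.mem_orbSet.2 (Setoid.trans' _ (GE.mem_orbSet.1 hb) (hR a ha)),
          fun hb => GE.mem_orbSet.2
            (Setoid.trans' _ (GE.mem_orbSet.1 hb) (Setoid.symm' _ (hR a ha)))⟩
      · rintro rfl
        exact ⟨x, xe, rfl⟩
    rw [him] at hcard
    simp at hcard
  have hu : φ₀ x ≠ y := by
    intro h
    apply hface
    rw [← h]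
    exact GE.gen_resp (by simp) x
  have s3 : genus θ₀ σ₀ φ₁ = genus θ₀ σ₀ φ₀ := (GE.step hθ hσ hφ hy hu).2.2 hface
  omega
end

section
/- Let ℓ > 1 and let B_ℓ be the graph obtained as follows: take ℓ disjoint copies of K₅ minus an edge, with v_i, w_i the two nonadjacent vertices of the i-th copy; add two new vertices v and w, joining v to all v_i and w to all w_i. Then the Euler genus of B_ℓ is at least ℓ/2. -/
/-- The combinatorial embedding `(θ, σ, φ)` with flag set `Fl` realizes the simple
graph `G` via the assignment `p` of flags to graph vertices. -/
def Realizes {Fl V : Type*} (θ σ' φ' : Equiv.Perm Fl) (G : SimpleGraph V) (p : Fl → V) : Prop :=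
  (∀ f, p (σ' f) = p f) ∧ (∀ f, p (φ' f) = p f) ∧
  (∀ f, G.Adj (p f) (p (θ f))) ∧
  (∀ f f', p f = p f' → f' ∈ orbSet {σ', φ'} f) ∧
  (∀ u v, G.Adj u v → ∃ f, p f = u ∧ p (θ f) = v) ∧
  (∀ f f', p f = p f' → p (θ f) = p (θ f') → f' ∈ orbSet {θ, σ'} f)

/-- The graph `B_ℓ`: `ℓ` disjoint copies of `K₅` minus an edge (the missing edge of
copy `i` joining `(i,0)` and `(i,1)`), an apex `inr 0 = v` adjacent to every `(i,0)`,
and an apex `inr 1 = w` adjacent to every `(i,1)`. -/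
def Bgraph (ℓ : ℕ) : SimpleGraph ((Fin ℓ × Fin 5) ⊕ Fin 2) :=
  SimpleGraph.fromRel (fun a b =>
    match a, b with
    | .inl (i, x), .inl (j, y) => i = j ∧ x ≠ y ∧ ¬(x = 0 ∧ y = 1) ∧ ¬(x = 1 ∧ y = 0)
    | .inl (_, x), .inr z => (z = 0 ∧ x = 0) ∨ (z = 1 ∧ x = 1)
    | .inr _, .inl _ => False
    | .inr _, .inr _ => False)

theorem orb_ind {F : Type*} {S : Set (Equiv.Perm F)} (hS : ∀ s ∈ S, s * s = 1) (P : F → Prop)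
    (hP : ∀ s ∈ S, ∀ x, P x → P (s x)) {f g : F} (hf : P f) (hg : g ∈ orbSet S f) : P g := by
  obtain ⟨⟨s, hs⟩, rfl⟩ := hg
  have key : ∀ x, P x ↔ P (s x) := by
    induction hs using Subgroup.closure_induction with
    | mem s hs =>
      intro x
      refine ⟨hP s hs x, fun hx => ?_⟩
      have := hP s hs _ hx
      rwa [← Equiv.Perm.mul_apply, hS s hs] at this
    | one => intro x; rfl
    | mul a b _ _ ha hb => intro x; exact (hb x).trans (ha _)
    | inv a ha ih =>
      intro x
      have := ih (a⁻¹ x)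
      have e : a (a⁻¹ x) = x := by simp
      rw [e] at this
      exact this.symm
  exact (key f).1 hf

theorem mem_orb {F : Type*} {S : Set (Equiv.Perm F)} {s : Equiv.Perm F} (hs : s ∈ S) {f g : F}
    (hg : g ∈ orbSet S f) : s g ∈ orbSet S f := by
  obtain ⟨⟨t, ht⟩, rfl⟩ := hg
  exact ⟨⟨s * t, Subgroup.mul_mem _ (Subgroup.subset_closure hs) ht⟩, rfl⟩

theorem even_of_inv_s14 {F : Type*} [DecidableEq F] (s : Finset F) (g : F → F)
    (h1 : ∀ x ∈ s, g x ∈ s) (h2 : ∀ x ∈ s, g (g x) = x) (h3 : ∀ x ∈ s, g x ≠ x) :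
    Even s.card := by
  have : ∑ x ∈ s, (1 : ZMod 2) = 0 :=
    Finset.sum_involution (fun x _ => g x) (fun _ _ => by decide) (fun x hx _ => h3 x hx) h1 h2
  rw [Finset.sum_const, nsmul_eq_mul, mul_one] at this
  exact (ZMod.natCast_eq_zero_iff_even).1 this

theorem adj_ll (ℓ : ℕ) (i j : Fin ℓ) (x y : Fin 5) :
    (Bgraph ℓ).Adj (.inl (i, x)) (.inl (j, y)) ↔
      i = j ∧ x ≠ y ∧ ¬(x = 0 ∧ y = 1) ∧ ¬(x = 1 ∧ y = 0) := by
  simp only [Bgraph, SimpleGraph.fromRel_adj]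
  grind

theorem adj_lr (ℓ : ℕ) (i : Fin ℓ) (x : Fin 5) (z : Fin 2) :
    (Bgraph ℓ).Adj (.inl (i, x)) (.inr z) ↔ (z = 0 ∧ x = 0) ∨ (z = 1 ∧ x = 1) := by
  simp [Bgraph, SimpleGraph.fromRel_adj]

theorem adj_rl (ℓ : ℕ) (i : Fin ℓ) (x : Fin 5) (z : Fin 2) :
    (Bgraph ℓ).Adj (.inr z) (.inl (i, x)) ↔ (z = 0 ∧ x = 0) ∨ (z = 1 ∧ x = 1) := by
  simp [Bgraph, SimpleGraph.fromRel_adj]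

theorem adj_rr (ℓ : ℕ) (z z' : Fin 2) : ¬ (Bgraph ℓ).Adj (.inr z) (.inr z') := by
  simp [Bgraph, SimpleGraph.fromRel_adj]

theorem exists_other (ℓ : ℕ) (hl : 1 < ℓ) (u a : (Fin ℓ × Fin 5) ⊕ Fin 2) :
    ∃ b, b ≠ a ∧ (Bgraph ℓ).Adj u b := by
  have two : ∀ b c, b ≠ c → (Bgraph ℓ).Adj u b → (Bgraph ℓ).Adj u c →
      ∃ b, b ≠ a ∧ (Bgraph ℓ).Adj u b := by
    intro b c hbc hb hc
    by_cases h : b = a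
    · exact ⟨c, fun h' => hbc (h.trans h'.symm), hc⟩
    · exact ⟨b, h, hb⟩
  rcases u with ⟨i, x⟩ | z
  · by_cases hx : x = 2
    · refine two (.inl (i, 3)) (.inl (i, 4)) (by simp) ?_ ?_ <;> rw [adj_ll] <;> subst hx <;> simp
    · by_cases hx3 : x = 3
      · refine two (.inl (i, 2)) (.inl (i, 4)) (by simp) ?_ ?_ <;> rw [adj_ll] <;> subst hx3 <;> simp
      · refine two (.inl (i, 2)) (.inl (i, 3)) (by simp) ?_ ?_ <;> rw [adj_ll] <;> simp [hx, hx3]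
  · have hz : z = 0 ∨ z = 1 := by omega
    refine two (.inl (⟨0, by omega⟩, if z = 0 then 0 else 1))
      (.inl (⟨1, hl⟩, if z = 0 then 0 else 1)) (by simp) ?_ ?_ <;> rw [adj_rl] <;>
      rcases hz with rfl | rfl <;> simp

/-- flags whose dart lies in the injective family `e` of darts -/
theorem card_family {Fl V ι : Type*} [Fintype Fl] [DecidableEq Fl] [Fintype ι] [DecidableEq V]
    (d : Fl → V × V)
    (e : ι → V × V) (he : Function.Injective e)
    (h2 : ∀ k, (Finset.univ.filter (fun f => d f = e k)).card = 2)
    (s : Finset Fl) (hs : ∀ f, f ∈ s ↔ ∃ k, d f = e k) :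
    s.card = 2 * Fintype.card ι := by
  classical
  have : s = Finset.univ.biUnion (fun k => Finset.univ.filter (fun f => d f = e k)) := by
    ext f; simp [hs]
  rw [this, Finset.card_biUnion]
  · simp [h2, mul_comm]
  · intro a _ b _ hab
    rw [Function.onFun, Finset.disjoint_left]
    intro f hf hf'
    simp at hf hf'
    exact hab (he (hf.symm.trans hf'))

/-- all the local facts -/
theorem local_facts {Fl V : Type*} [Fintype Fl] [DecidableEq Fl] [DecidableEq V]
    (G : SimpleGraph V) (hG : ∀ u a, ∃ b, b ≠ a ∧ G.Adj u b)
    (θ σ' φ' : Equiv.Perm Fl) (h : IsGraphEmb θ σ' φ')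
    (p : Fl → V) (hp : Realizes θ σ' φ' G p) :
    (∀ u v, G.Adj u v →
      (Finset.univ.filter (fun f => (p f, p (θ f)) = (u, v))).card = 2) ∧
    (∀ g, p (θ (φ' g)) ≠ p (θ g)) := by
  obtain ⟨⟨t2, tn⟩, ⟨s2, sn⟩, ⟨f2, fn⟩, h4⟩ := h
  obtain ⟨ps, pf, padj, pv, pe, pd⟩ := hp
  have ne : ∀ f, p f ≠ p (θ f) := fun f => (padj f).ne
  have four : ∀ f g, g ∈ orbSet {θ, σ'} f → g = f ∨ g = σ' f ∨ g = θ f ∨ g = θ (σ' f) := by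
    intro f g hg
    have hsub : ({f, σ' f, θ f, θ (σ' f)} : Set Fl) ⊆ orbSet {θ, σ'} f := by
      have h0 : f ∈ orbSet {θ, σ'} f := MulAction.mem_orbit_self f
      have h1 : σ' f ∈ orbSet {θ, σ'} f := mem_orb (by simp) h0
      have h2 : θ f ∈ orbSet {θ, σ'} f := mem_orb (by simp) h0
      have h3 : θ (σ' f) ∈ orbSet {θ, σ'} f := mem_orb (by simp) h1
      intro x hx
      rcases hx with rfl | rfl | rfl | rfl <;> assumption
    have hc : ({f, σ' f, θ f, θ (σ' f)} : Set Fl).ncard = 4 := by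
      have e : ({f, σ' f, θ f, θ (σ' f)} : Set Fl)
        = (({f, σ' f, θ f, θ (σ' f)} : Finset Fl) : Set Fl) := by simp
      rw [e, Set.ncard_coe_finset]
      have a1 := sn f
      have a2 := ne f
      have a3 := ne (σ' f)
      have a4 := ps f
      rw [Finset.card_insert_of_notMem, Finset.card_insert_of_notMem,
        Finset.card_insert_of_notMem, Finset.card_singleton]
      · simp; exact a1.symm
      · simp only [Finset.mem_insert, Finset.mem_singleton]
        rintro (h | h)
        · apply a2; rw [← h, ps]
        · apply a3; rw [← h]
      · simp only [Finset.mem_insert, Finset.mem_singleton]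
        rintro (h | h | h)
        · exact a1 h.symm
        · apply a2; rw [← h]
        · apply a3; rw [← h, ps]
    have := Set.eq_of_subset_of_ncard_le hsub (by
      rw [hc]; exact (h4 f).le) (Set.toFinite _)
    rw [← this] at hg
    simpa using hg
  have two : ∀ f g, p f = p g → p (θ f) = p (θ g) → g = f ∨ g = σ' f := by
    intro f g h1 h2
    rcases four f g (pd f g h1 h2) with h | h | h | h
    · exact .inl h
    · exact .inr h
    · exact absurd (h1.trans (congrArg p h)) (ne f)
    · exact absurd ((ps f).trans (h1.trans (congrArg p h))) (ne (σ' f))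
  have comm : ∀ f, σ' (θ f) = θ (σ' f) := by
    intro f
    have hm : σ' (θ f) ∈ orbSet {θ, σ'} f :=
      mem_orb (by simp) (mem_orb (by simp) (MulAction.mem_orbit_self f))
    have a := ne f
    have b := ps (θ f)
    rcases four f _ hm with h | h | h | h
    · exact absurd (by rw [← b, h]) a
    · exact absurd (by rw [← b, h, ps]) a
    · exact absurd h (sn _)
    · exact h
  have pts : ∀ f, p (θ (σ' f)) = p (θ f) := fun f => by rw [← comm, ps]
  refine ⟨?_, ?_⟩
  · intro u v huv
    obtain ⟨f, h1, h2⟩ := pe u v huv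
    rw [Finset.card_eq_two]
    refine ⟨f, σ' f, (sn f).symm, ?_⟩
    ext g
    simp only [Finset.mem_filter, Finset.mem_univ, true_and, Prod.mk.injEq, Finset.mem_insert,
      Finset.mem_singleton]
    constructor
    · rintro ⟨h3, h4⟩
      exact two f g (h1.trans h3.symm) (h2.trans h4.symm)
    · rintro (rfl | rfl)
      · exact ⟨h1, h2⟩
      · exact ⟨(ps f).trans h1, (pts f).trans h2⟩
  · intro g hg
    have hφ : φ' g = σ' g := by
      rcases two g (φ' g) (pf g).symm hg.symm with h | h
      · exact absurd h (fn g)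
      · exact h
    have ff : ∀ x, φ' (φ' x) = x := fun x => by rw [← Equiv.Perm.mul_apply, f2]; rfl
    have ss : ∀ x, σ' (σ' x) = x := fun x => by rw [← Equiv.Perm.mul_apply, s2]; rfl
    obtain ⟨b, hb, hadj⟩ := hG (p g) (p (θ g))
    obtain ⟨k, hk1, hk2⟩ := pe _ _ hadj
    have : k = g ∨ k = σ' g := by
      refine orb_ind (S := {σ', φ'}) ?_ (fun k => k = g ∨ k = σ' g) ?_ (.inl rfl) (pv g k hk1.symm)
      · rintro s (rfl | rfl) <;> assumption
      · rintro s (rfl | rfl) x (rfl | rfl)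
        · exact .inr rfl
        · exact .inl (ss _)
        · exact .inr hφ
        · left; rw [← hφ, ff]
    rcases this with rfl | rfl
    · exact hb hk2.symm
    · exact hb (by rw [← hk2, pts])

theorem six_card {Fl V : Type*} [DecidableEq Fl] [DecidableEq V] (d : Fl → V × V)
    (x1 x2 x3 x4 x5 x6 : Fl) (a b c e : V)
    (h1 : d x1 = (a, b)) (h2 : d x2 = (b, a)) (h3 : d x3 = (b, c)) (h4 : d x4 = (c, b))
    (h5 : d x5 = (c, e)) (h6 : d x6 = (e, c))
    (hab : a ≠ b) (hbc : b ≠ c) (hac : a ≠ c) (hce : c ≠ e) (hbe : b ≠ e) :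
    6 ≤ ({x1, x2, x3, x4, x5, x6} : Finset Fl).card := by
  have h := Finset.card_image_le (s := ({x1, x2, x3, x4, x5, x6} : Finset Fl)) (f := d)
  have hi : Finset.image d ({x1, x2, x3, x4, x5, x6} : Finset Fl)
      = {(a, b), (b, a), (b, c), (c, b), (c, e), (e, c)} := by
    simp [Finset.image_insert, h1, h2, h3, h4, h5, h6]
  have hc : ({(a, b), (b, a), (b, c), (c, b), (c, e), (e, c)} : Finset (V × V)).card = 6 := by
    rw [Finset.card_insert_of_notMem, Finset.card_insert_of_notMem,
      Finset.card_insert_of_notMem, Finset.card_insert_of_notMem,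
      Finset.card_insert_of_notMem, Finset.card_singleton] <;>
    simp only [Finset.mem_insert, Finset.mem_singleton, Prod.mk.injEq] <;> grind
  rw [hi, hc] at h
  exact h

abbrev cz (z : Fin 2) : Fin 5 := if z = 0 then 0 else 1

abbrev K5m : Type :=
  {xy : Fin 5 × Fin 5 // xy.1 ≠ xy.2 ∧ ¬(xy.1 = 0 ∧ xy.2 = 1) ∧ ¬(xy.1 = 1 ∧ xy.2 = 0)}

theorem card_K5m : Fintype.card K5m = 18 := by decide

theorem cz_iff (z : Fin 2) (x : Fin 5) : ((z = 0 ∧ x = 0) ∨ (z = 1 ∧ x = 1)) ↔ x = cz z := by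
  revert z x; decide

theorem cz_inj {z z' : Fin 2} (h : cz z = cz z') : z = z' := by
  revert z z'; decide

theorem fiber_bound {A B : Type*} [DecidableEq B] (s : Finset A) (t : Finset B) (q : A → B) (n : ℕ)
    (hm : ∀ x ∈ s, q x ∈ t) (hn : ∀ y ∈ t, n ≤ (s.filter (fun x => q x = y)).card) :
    n * t.card ≤ s.card := by
  rw [Finset.card_eq_sum_card_fiberwise (f := q) (s := s) (t := t) hm, mul_comm, ← smul_eq_mul]
  exact Finset.card_nsmul_le_sum _ _ _ hn

theorem face_count (ℓ : ℕ) {Fl Q : Type*} [Fintype Fl] [Fintype Q]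
    [DecidableEq Fl] [DecidableEq Q] (θ φ : Equiv.Perm Fl)
    (tt : ∀ x, θ (θ x) = x) (ff : ∀ x, φ (φ x) = x) (fn : ∀ x, φ x ≠ x) (tn : ∀ x, θ x ≠ x)
    (p : Fl → (Fin ℓ × Fin 5) ⊕ Fin 2)
    (pf : ∀ x, p (φ x) = p x) (padj : ∀ f, (Bgraph ℓ).Adj (p f) (p (θ f)))
    (L2 : ∀ u v, (Bgraph ℓ).Adj u v →
      (Finset.univ.filter (fun f => (p f, p (θ f)) = (u, v))).card = 2)
    (NB : ∀ g, p (θ (φ g)) ≠ p (θ g))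
    (q : Fl → Q) (qs : Function.Surjective q) (qt : ∀ x, q (θ x) = q x) (qf : ∀ x, q (φ x) = q x) :
    Fintype.card Q ≤ 5 * ℓ ∧ Fintype.card Fl = 44 * ℓ := by
  -- shapes
  have shR : ∀ f z, p f = .inr z → ∃ i, p (θ f) = .inl (i, cz z) := by
    intro f z hz
    have := padj f
    rw [hz] at this
    rcases h : p (θ f) with ⟨i, x⟩ | z'
    · rw [h, adj_rl, cz_iff] at this
      exact ⟨i, by rw [this]⟩
    · rw [h] at this; exact absurd this (adj_rr _ _ _)
  have shLR : ∀ f i x z, p f = .inl (i, x) → p (θ f) = .inr z → x = cz z := by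
    intro f i x z hx hz
    have := padj f
    rw [hx, hz, adj_lr, cz_iff] at this
    exact this
  have shLL : ∀ f i x j y, p f = .inl (i, x) → p (θ f) = .inl (j, y) →
      j = i ∧ x ≠ y ∧ ¬(x = 0 ∧ y = 1) ∧ ¬(x = 1 ∧ y = 0) := by
    intro f i x j y hx hy
    have := padj f
    rw [hx, hy, adj_ll] at this
    exact ⟨this.1.symm, this.2⟩
  have ne : ∀ f, p f ≠ p (θ f) := fun f => (padj f).ne
  let inw : Finset Fl := Finset.univ.filter (fun f => ∃ z, p f = .inr z)
  let inner : Fin ℓ → Finset Fl := fun i =>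
    Finset.univ.filter (fun f => ∃ x y, p f = .inl (i, x) ∧ p (θ f) = .inl (i, y))
  let outi : Fin ℓ → Finset Fl := fun i =>
    Finset.univ.filter (fun f => ∃ x z, p f = .inl (i, x) ∧ p (θ f) = .inr z)
  have m_inw : ∀ f, f ∈ inw ↔ ∃ z, p f = .inr z := by intro f; simp [inw]
  have m_inner : ∀ i f, f ∈ inner i ↔ ∃ x y, p f = .inl (i, x) ∧ p (θ f) = .inl (i, y) := by
    intro i f; simp [inner]
  have m_outi : ∀ i f, f ∈ outi i ↔ ∃ x z, p f = .inl (i, x) ∧ p (θ f) = .inr z := by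
    intro i f; simp [outi]
  have c_inw : inw.card = 4 * ℓ := by
    have := card_family (fun f => (p f, p (θ f)))
      (fun k : Fin ℓ × Fin 2 => (.inr k.2, .inl (k.1, cz k.2))) ?_ ?_ inw ?_
    · rw [this]; simp; ring
    · rintro ⟨i, z⟩ ⟨j, z'⟩ h
      simp only [Prod.mk.injEq, Sum.inl.injEq, Sum.inr.injEq] at h ⊢
      exact ⟨h.2.1, h.1⟩
    · rintro ⟨i, z⟩
      exact L2 _ _ (by rw [adj_rl, cz_iff])
    · intro f
      rw [m_inw]
      constructor
      · rintro ⟨z, hz⟩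
        obtain ⟨i, hi⟩ := shR f z hz
        exact ⟨(i, z), by rw [hz, hi]⟩
      · rintro ⟨⟨i, z⟩, h⟩
        exact ⟨z, (Prod.mk.inj h).1⟩
  have c_outi : ∀ i, (outi i).card = 4 := by
    intro i
    have := card_family (fun f => (p f, p (θ f)))
      (fun z : Fin 2 => (.inl (i, cz z), .inr z)) ?_ ?_ (outi i) ?_
    · rw [this]; simp
    · intro z z' h
      simp only [Prod.mk.injEq, Sum.inr.injEq] at h
      exact h.2
    · intro z
      exact L2 _ _ (by rw [adj_lr, cz_iff])
    · intro f
      rw [m_outi]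
      constructor
      · rintro ⟨x, z, hx, hz⟩
        exact ⟨z, by rw [hx, hz, shLR f i x z hx hz]⟩
      · rintro ⟨z, h⟩
        exact ⟨_, z, (Prod.mk.inj h).1, (Prod.mk.inj h).2⟩
  have c_inner : ∀ i, (inner i).card = 36 := by
    intro i
    have := card_family (fun f => (p f, p (θ f)))
      (fun k : K5m => (.inl (i, k.1.1), .inl (i, k.1.2))) ?_ ?_ (inner i) ?_
    · rw [this, card_K5m]
    · rintro ⟨⟨x, y⟩, h1⟩ ⟨⟨x', y'⟩, h2⟩ h
      simp only [Prod.mk.injEq, Sum.inl.injEq, true_and] at h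
      simp [h.1, h.2]
    · intro k
      exact L2 _ _ (by rw [adj_ll]; exact ⟨rfl, k.2⟩)
    · intro f
      rw [m_inner]
      constructor
      · rintro ⟨x, y, hx, hy⟩
        exact ⟨⟨(x, y), (shLL f i x i y hx hy).2⟩, by rw [hx, hy]⟩
      · rintro ⟨k, h⟩
        exact ⟨_, _, (Prod.mk.inj h).1, (Prod.mk.inj h).2⟩
  have c_all : Fintype.card Fl = 44 * ℓ := by
    have : (Finset.univ : Finset Fl)
        = inw ∪ (inw.image θ ∪ Finset.univ.biUnion inner) := by
      ext f
      simp only [Finset.mem_univ, true_iff, Finset.mem_union, Finset.mem_image,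
        Finset.mem_biUnion, true_and]
      rcases h : p f with ⟨i, x⟩ | z
      · rcases h' : p (θ f) with ⟨j, y⟩ | z
        · obtain ⟨rfl, -⟩ := shLL f i x j y h h'
          exact .inr (.inr ⟨j, (m_inner _ _).2 ⟨x, y, h, h'⟩⟩)
        · exact .inr (.inl ⟨θ f, (m_inw _).2 ⟨z, h'⟩, tt f⟩)
      · exact .inl ((m_inw _).2 ⟨z, h⟩)
    rw [← Finset.card_univ, this, Finset.card_union_of_disjoint, Finset.card_union_of_disjoint,
      Finset.card_image_of_injective _ θ.injective, Finset.card_biUnion, c_inw]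
    · simp [c_inner]; ring
    · intro i _ j _ hij
      rw [Function.onFun, Finset.disjoint_left]
      intro f hf hf'
      obtain ⟨x, y, h1, -⟩ := (m_inner _ _).1 hf
      obtain ⟨x', y', h2, -⟩ := (m_inner _ _).1 hf'
      rw [h1] at h2
      simp at h2
      exact hij h2.1
    · rw [Finset.disjoint_left]
      intro f hf hf'
      obtain ⟨g, hg, rfl⟩ := Finset.mem_image.1 hf
      obtain ⟨i, -, hi⟩ := Finset.mem_biUnion.1 hf'
      obtain ⟨x, y, h1, h2⟩ := (m_inner _ _).1 hi
      obtain ⟨z, hz⟩ := (m_inw _).1 hg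
      rw [tt, hz] at h2
      cases h2
    · rw [Finset.disjoint_left]
      intro f hf hf'
      obtain ⟨z, hz⟩ := (m_inw _).1 hf
      rcases Finset.mem_union.1 hf' with h | h
      · obtain ⟨g, hg, rfl⟩ := Finset.mem_image.1 h
        obtain ⟨z', hz'⟩ := (m_inw _).1 hg
        obtain ⟨i, hi⟩ := shR _ _ hz'
        rw [hi] at hz; cases hz
      · obtain ⟨i, -, hi⟩ := Finset.mem_biUnion.1 h
        obtain ⟨x, y, h1, h2⟩ := (m_inner _ _).1 hi
        rw [hz] at h1; cases h1
  refine ⟨?_, c_all⟩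
  -- parity
  have parity : ∀ i f x z, p f = .inr z → p (θ f) = .inl (i, x) →
      ∃ f' z' x', f' ≠ f ∧ q f' = q f ∧ p f' = .inr z' ∧ p (θ f') = .inl (i, x') := by
    intro i f x z hz hx
    let A : Finset Fl := Finset.univ.filter (fun g => q g = q f ∧ ∃ a, p g = .inl (i, a))
    let B : Finset Fl := (inner i).filter (fun g => q g = q f)
    let O : Finset Fl := (outi i).filter (fun g => q g = q f)
    have eA : Even A.card := by
      refine even_of_inv_s14 A φ ?_ (fun x _ => ff x) (fun x _ => fn x)
      intro g hg
      simp only [A, Finset.mem_filter, Finset.mem_univ, true_and] at hg ⊢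
      rwa [qf, pf]
    have eB : Even B.card := by
      refine even_of_inv_s14 B θ ?_ (fun x _ => tt x) (fun x _ => tn x)
      intro g hg
      simp only [B, Finset.mem_filter, m_inner] at hg ⊢
      rw [qt, tt]
      obtain ⟨⟨x, y, h1, h2⟩, h3⟩ := hg
      exact ⟨⟨y, x, h2, h1⟩, h3⟩
    have hAB : A = B ∪ O := by
      ext g
      simp only [A, B, O, Finset.mem_filter, Finset.mem_univ, true_and, Finset.mem_union,
        m_inner, m_outi]
      constructor
      · rintro ⟨hq, a, ha⟩
        rcases h : p (θ g) with ⟨j, y⟩ | z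
        · obtain ⟨rfl, -⟩ := shLL g i a j y ha h
          exact .inl ⟨⟨a, y, ha, rfl⟩, hq⟩
        · exact .inr ⟨⟨a, z, ha, rfl⟩, hq⟩
      · rintro (⟨⟨a, y, ha, -⟩, hq⟩ | ⟨⟨a, y, ha, -⟩, hq⟩)
        · exact ⟨hq, a, ha⟩
        · exact ⟨hq, a, ha⟩
    have hdis : Disjoint B O := by
      rw [Finset.disjoint_left]
      intro g h1 h2
      simp only [B, O, Finset.mem_filter, m_inner, m_outi] at h1 h2
      obtain ⟨⟨_, _, _, h1⟩, -⟩ := h1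
      obtain ⟨⟨_, _, _, h2⟩, -⟩ := h2
      rw [h1] at h2; cases h2
    rw [hAB, Finset.card_union_of_disjoint hdis] at eA
    have eO : Even O.card := (Nat.even_add.1 eA).1 eB
    have hmem : θ f ∈ O := by
      simp only [O, Finset.mem_filter, m_outi]
      exact ⟨⟨x, z, hx, by rw [tt]; exact hz⟩, qt f⟩
    have hpos : 0 < O.card := Finset.card_pos.2 ⟨_, hmem⟩
    have h1 : 1 < O.card := by
      obtain ⟨k, hk⟩ := eO
      omega
    obtain ⟨o, ho, hne⟩ := Finset.exists_mem_ne h1 (θ f)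
    simp only [O, Finset.mem_filter, m_outi] at ho
    obtain ⟨⟨x', z', h2, h3⟩, h4⟩ := ho
    refine ⟨θ o, z', x', ?_, by rw [qt, h4], h3, by rw [tt]; exact h2⟩
    rintro rfl
    exact hne (tt o).symm
  let T : Finset Q := inw.image q
  have hT : 4 * T.card ≤ inw.card := by
    refine fiber_bound inw T q 4 (fun x hx => Finset.mem_image_of_mem q hx) ?_
    intro t ht
    obtain ⟨g, hg, rfl⟩ := Finset.mem_image.1 ht
    obtain ⟨z, hz⟩ := (m_inw _).1 hg
    obtain ⟨i, hi⟩ := shR g z hz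
    have hz2 : p (φ g) = .inr z := by rw [pf, hz]
    obtain ⟨j, hj⟩ := shR (φ g) z hz2
    have hij : i ≠ j := by
      rintro rfl
      exact NB g (hj.trans hi.symm)
    obtain ⟨g', z1, x1, hne1, hq1, hp1, ht1⟩ := parity i g _ z hz hi
    obtain ⟨g'', z2, x2, hne2, hq2, hp2, ht2⟩ := parity j (φ g) _ z hz2 hj
    have hcard : ({g, g', φ g, g''} : Finset Fl).card = 4 := by
      have d1 : ∀ {a b : Fl} {x y : Fin 5}, p (θ a) = .inl (i, x) → p (θ b) = .inl (j, y) →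
          a ≠ b := by
        rintro a b x y ha hb rfl
        rw [ha] at hb
        simp at hb
        exact hij hb.1
      rw [Finset.card_insert_of_notMem, Finset.card_insert_of_notMem,
        Finset.card_insert_of_notMem, Finset.card_singleton]
      · simp; exact hne2.symm
      · simp only [Finset.mem_insert, Finset.mem_singleton]
        rintro (h | h)
        · exact d1 ht1 hj h
        · exact d1 ht1 ht2 h
      · simp only [Finset.mem_insert, Finset.mem_singleton]
        rintro (h | h | h)
        · exact hne1 h.symm
        · exact d1 hi hj h
        · exact d1 hi ht2 h
    rw [← hcard]
    apply Finset.card_le_card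
    intro y hy
    simp only [Finset.mem_insert, Finset.mem_singleton] at hy
    rw [Finset.mem_filter, m_inw]
    rcases hy with rfl | rfl | rfl | rfl
    · exact ⟨⟨_, hz⟩, rfl⟩
    · exact ⟨⟨_, hp1⟩, hq1⟩
    · exact ⟨⟨_, hz2⟩, qf _⟩
    · exact ⟨⟨_, hp2⟩, hq2.trans (qf _)⟩
  let N : Fin ℓ → Finset Q := fun i =>
    Finset.univ.filter (fun t => t ∉ T ∧ ∃ f ∈ inner i, q f = t)
  have hN : ∀ i, (N i).card ≤ 4 := by
    intro i
    let R : Finset Fl := (inner i).filter (fun f => q f ∉ T)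
    let R' : Finset Fl := (inner i).filter (fun f => q f ∈ T)
    have hRR : R'.card + R.card = 36 := by
      rw [← c_inner i]
      exact Finset.card_filter_add_card_filter_not _
    have hR' : 8 ≤ R'.card := by
      have hphi : ∀ o ∈ outi i, ∃ x y, (x = 0 ∨ x = 1) ∧ y ≠ 0 ∧ y ≠ 1 ∧ p (φ o) = .inl (i, x) ∧
          p (θ (φ o)) = .inl (i, y) ∧ q (φ o) ∈ T := by
        intro o ho
        obtain ⟨x, z, h1, h2⟩ := (m_outi _ _).1 ho
        have hx := shLR o i x z h1 h2
        have h3 : p (φ o) = .inl (i, x) := by rw [pf, h1]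
        have hqT : q (φ o) ∈ T := by
          rw [qf, ← qt]
          exact Finset.mem_image_of_mem q ((m_inw _).2 ⟨z, h2⟩)
        rcases h : p (θ (φ o)) with ⟨j, y⟩ | z'
        · obtain ⟨rfl, h4, h5, h6⟩ := shLL _ _ _ _ _ h3 h
          have hx01 : x = 0 ∨ x = 1 := by
            rw [hx]; simp only [cz]; split_ifs <;> simp
          refine ⟨x, y, hx01, ?_, ?_, h3, rfl, hqT⟩
          · rintro rfl; rcases hx01 with h | h
            · exact h4 h
            · exact h6 ⟨h, rfl⟩
          · rintro rfl; rcases hx01 with h | h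
            · exact h5 ⟨h, rfl⟩
            · exact h4 h
        · exfalso
          have := shLR _ _ _ _ h3 h
          have hzz := cz_inj (hx.symm.trans this)
          apply NB o
          rw [h, h2, hzz]
      have hU : ((outi i).image φ ∪ (outi i).image (fun o => θ (φ o))).card = 8 := by
        rw [Finset.card_union_of_disjoint, Finset.card_image_of_injective _ φ.injective,
          Finset.card_image_of_injective (f := fun o => θ (φ o)) _
            (θ.injective.comp φ.injective), c_outi]
        rw [Finset.disjoint_left]
        intro f h1 h2
        obtain ⟨o, ho, rfl⟩ := Finset.mem_image.1 h1
        obtain ⟨o', ho', he⟩ := Finset.mem_image.1 h2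
        obtain ⟨x, y, hx, -, -, hpx, -, -⟩ := hphi o ho
        obtain ⟨x', y', -, hy0, hy1, -, hpy, -⟩ := hphi o' ho'
        rw [he, hpx] at hpy
        simp at hpy
        rcases hx with h | h
        · exact hy0 (hpy.symm.trans h)
        · exact hy1 (hpy.symm.trans h)
      rw [← hU]
      apply Finset.card_le_card
      intro f hf
      rw [Finset.mem_filter, m_inner]
      rcases Finset.mem_union.1 hf with h | h
      · obtain ⟨o, ho, rfl⟩ := Finset.mem_image.1 h
        obtain ⟨x, y, -, -, -, hpx, hpy, hq⟩ := hphi o ho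
        exact ⟨⟨x, y, hpx, hpy⟩, hq⟩
      · obtain ⟨o, ho, rfl⟩ := Finset.mem_image.1 h
        obtain ⟨x, y, -, -, -, hpx, hpy, hq⟩ := hphi o ho
        exact ⟨⟨y, x, hpy, by rw [tt]; exact hpx⟩, by rw [qt]; exact hq⟩
    have h6 : 6 * (N i).card ≤ R.card := by
      refine fiber_bound R (N i) q 6 ?_ ?_
      · intro f hf
        simp only [R, Finset.mem_filter] at hf
        simp only [N, Finset.mem_filter, Finset.mem_univ, true_and]
        exact ⟨hf.2, f, hf.1, rfl⟩
      · intro t ht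
        simp only [N, Finset.mem_filter, Finset.mem_univ, true_and] at ht
        obtain ⟨htT, f, hf, rfl⟩ := ht
        have stθ : ∀ g, g ∈ inner i ∧ q g = q f → θ g ∈ inner i ∧ q (θ g) = q f := by
          rintro g ⟨h1, h2⟩
          obtain ⟨x, y, hx, hy⟩ := (m_inner _ _).1 h1
          exact ⟨(m_inner _ _).2 ⟨y, x, hy, by rw [tt]; exact hx⟩, by rw [qt, h2]⟩
        have stφ : ∀ g, g ∈ inner i ∧ q g = q f → φ g ∈ inner i ∧ q (φ g) = q f := by
          rintro g ⟨h1, h2⟩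
          obtain ⟨x, y, hx, hy⟩ := (m_inner _ _).1 h1
          have h3 : p (φ g) = .inl (i, x) := by rw [pf, hx]
          refine ⟨(m_inner _ _).2 ?_, by rw [qf, h2]⟩
          rcases h : p (θ (φ g)) with ⟨j, y⟩ | z'
          · obtain ⟨rfl, -⟩ := shLL _ _ _ _ _ h3 h
            exact ⟨x, y, h3, rfl⟩
          · exfalso
            apply htT
            rw [← h2, ← qf, ← qt]
            exact Finset.mem_image_of_mem q ((m_inw _).2 ⟨z', h⟩)
        have k1 : f ∈ inner i ∧ q f = q f := ⟨hf, rfl⟩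
        have k2 := stθ _ k1
        have k3 := stφ _ k2
        have k4 := stθ _ k3
        have k5 := stφ _ k4
        have k6 := stθ _ k5
        have n1 := NB (θ f)
        have n2 := NB (θ (φ (θ f)))
        rw [tt] at n1 n2
        refine (six_card (fun f => (p f, p (θ f))) f (θ f) (φ (θ f)) (θ (φ (θ f)))
          (φ (θ (φ (θ f)))) (θ (φ (θ (φ (θ f))))) (p f) (p (θ f)) (p (θ (φ (θ f))))
          (p (θ (φ (θ (φ (θ f)))))) ?_ ?_ ?_ ?_ ?_ ?_ ?_ ?_ ?_ ?_ ?_).trans ?_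
        · rfl
        · simp only [tt]
        · simp only [pf]
        · simp only [tt, pf]
        · simp only [pf]
        · simp only [tt, pf]
        · exact ne f
        · have := ne (φ (θ f)); rwa [pf] at this
        · exact n1.symm
        · have := ne (φ (θ (φ (θ f)))); rwa [pf] at this
        · rw [pf] at n2; exact n2.symm
        · apply Finset.card_le_card
          intro y hy
          have key : y ∈ inner i ∧ q y = q f := by
            simp only [Finset.mem_insert, Finset.mem_singleton] at hy
            rcases hy with rfl | rfl | rfl | rfl | rfl | rfl <;> assumption
          simp only [R, Finset.mem_filter]
          exact ⟨⟨key.1, by rw [key.2]; exact htT⟩, key.2⟩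
    omega
  have hcov : (Finset.univ : Finset Q) ⊆ T ∪ Finset.univ.biUnion N := by
    intro t _
    by_cases ht : t ∈ T
    · exact Finset.mem_union_left _ ht
    · apply Finset.mem_union_right
      obtain ⟨f, rfl⟩ := qs t
      rcases h : p f with ⟨i, x⟩ | z
      · rcases h' : p (θ f) with ⟨j, y⟩ | z
        · obtain ⟨rfl, -⟩ := shLL f i x j y h h'
          refine Finset.mem_biUnion.2 ⟨j, Finset.mem_univ _, ?_⟩
          simp only [N, Finset.mem_filter, Finset.mem_univ, true_and]
          exact ⟨ht, f, (m_inner _ _).2 ⟨x, y, h, h'⟩, rfl⟩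
        · exfalso; apply ht
          rw [← qt]
          exact Finset.mem_image_of_mem q ((m_inw _).2 ⟨z, h'⟩)
      · exfalso; apply ht
        exact Finset.mem_image_of_mem q ((m_inw _).2 ⟨z, h⟩)
  have h1 := Finset.card_le_card hcov
  have h2 := Finset.card_union_le T (Finset.univ.biUnion N)
  have h3 : (Finset.univ.biUnion N).card ≤ ℓ * 4 := by
    have := Finset.card_biUnion_le_card_mul Finset.univ N 4 (fun i _ => hN i)
    simpa using this
  rw [Finset.card_univ] at h1
  omega

theorem stmt14 (ℓ : ℕ) (hl : 1 < ℓ) {Fl : Type*} [Fintype Fl]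
    (θ σ' φ' : Equiv.Perm Fl) (h : IsGraphEmb θ σ' φ')
    (p : Fl → (Fin ℓ × Fin 5) ⊕ Fin 2) (hp : Realizes θ σ' φ' (Bgraph ℓ) p) :
    (ℓ : ℤ) ≤ 2 * genus θ σ' φ' := by
  classical
  obtain ⟨L2, NB⟩ := local_facts (Bgraph ℓ) (exists_other ℓ hl) θ σ' φ' h p hp
  obtain ⟨⟨t2, tn⟩, ⟨s2, sn⟩, ⟨f2, fn⟩, h4⟩ := h
  obtain ⟨ps, pf, padj, pv, pe, pd⟩ := hp
  have tt : ∀ x, θ (θ x) = x := fun x => by rw [← Equiv.Perm.mul_apply, t2]; rfl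
  have ff : ∀ x, φ' (φ' x) = x := fun x => by rw [← Equiv.Perm.mul_apply, f2]; rfl
  have quot_eq : ∀ (S : Set (Equiv.Perm Fl)) (s : Equiv.Perm Fl), s ∈ S → ∀ x,
      (Quotient.mk (MulAction.orbitRel (Subgroup.closure S) Fl) (s x)) = Quotient.mk _ x := by
    intro S s hs x
    apply Quotient.sound
    exact mem_orb hs (MulAction.mem_orbit_self x)
  -- faces
  have hF := face_count ℓ (Q := MulAction.orbitRel.Quotient (Subgroup.closure {θ, φ'}) Fl)
    θ φ' tt ff fn tn p pf padj L2 NB (Quotient.mk _) Quotient.mk_surjective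
    (quot_eq _ θ (by simp)) (quot_eq _ φ' (by simp))
  obtain ⟨hF, hcard⟩ := hF
  have hF' : orbCount {θ, φ'} ≤ 5 * ℓ := by
    rw [orbCount, Nat.card_eq_fintype_card]; exact hF
  -- vertices
  have hV : orbCount {σ', φ'} ≤ 5 * ℓ + 2 := by
    rw [orbCount, Nat.card_eq_fintype_card]
    have : Function.Injective (fun t : MulAction.orbitRel.Quotient
        (Subgroup.closure {σ', φ'}) Fl => p t.out) := by
      intro a b hab
      have hm := pv _ _ hab
      rw [← Quotient.out_eq a, ← Quotient.out_eq b]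
      exact (Quotient.sound (s := MulAction.orbitRel (Subgroup.closure {σ', φ'}) Fl) hm).symm
    have := Fintype.card_le_of_injective _ this
    simp at this
    omega
  -- edges
  have hE : 11 * ℓ ≤ orbCount {θ, σ'} := by
    rw [orbCount, Nat.card_eq_fintype_card]
    have hle : (Finset.univ : Finset Fl).card ≤ 4 * (Finset.univ : Finset (MulAction.orbitRel.Quotient
        (Subgroup.closure {θ, σ'}) Fl)).card := by
      refine Finset.card_le_mul_card_image_of_maps_to
        (f := Quotient.mk (MulAction.orbitRel (Subgroup.closure {θ, σ'}) Fl))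
        (fun _ _ => Finset.mem_univ _) 4 ?_
      intro t _
      obtain ⟨f, rfl⟩ := Quotient.mk_surjective t
      rw [← h4 f, ← Set.ncard_coe_finset]
      refine Set.ncard_le_ncard ?_ (Set.toFinite _)
      intro x hx
      simp only [Finset.coe_filter, Finset.mem_univ, true_and, Set.mem_ofPred_eq] at hx
      exact Quotient.exact hx
    rw [Finset.card_univ, Finset.card_univ, hcard] at hle
    omega
  have hC : 1 ≤ orbCount {θ, σ', φ'} := by
    rw [orbCount]
    have hne : Nonempty Fl := Fintype.card_pos_iff.1 (by omega)
    obtain ⟨f⟩ := hne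
    have : Nonempty (MulAction.orbitRel.Quotient (Subgroup.closure {θ, σ', φ'}) Fl) :=
      ⟨Quotient.mk _ f⟩
    exact Nat.card_pos
  rw [genus]
  omega
end

section
/- Replacing each edge uv of a graph G by a copy of K₅ on {u, v, a_uv, b_uv, c_uv} with three new private vertices yields a graph G' such that G has a vertex cover of size at most k if and only if G' has a set of at most k vertices whose deletion leaves a planar graph. Hence Planar Vertex Deletion is NP-hard and, assuming ETH, requires time 2^{Ω(k)}. -/
/-- `H` is planar: it is realized by some combinatorial embedding of genus `0`. -/
def IsPlanarG {W : Type*} (H : SimpleGraph W) : Prop :=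
  ∃ (Fl : Type) (_ : Fintype Fl) (θ σ' φ' : Equiv.Perm Fl) (p : Fl → W),
    IsGraphEmb θ σ' φ' ∧ Realizes θ σ' φ' H p ∧ genus θ σ' φ' ≤ 0

/-- Replace every edge `uv` of `G` by a `K₅` on `u, v` and three private new vertices. -/
def gadget {V : Type*} (G : SimpleGraph V) : SimpleGraph (V ⊕ (G.edgeSet × Fin 3)) :=
  SimpleGraph.fromRel (fun a b =>
    match a, b with
    | .inl u, .inl w => G.Adj u w
    | .inl u, .inr ⟨e, _⟩ => u ∈ (e : Sym2 V)
    | .inr ⟨e, _⟩, .inl u => u ∈ (e : Sym2 V)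
    | .inr ⟨e, i⟩, .inr ⟨e', j⟩ => e = e' ∧ i ≠ j)

section OrbitLemmas

variable {F : Type*}

lemma orb_refl (S : Set (Equiv.Perm F)) (x : F) : x ∈ orbSet S x :=
  MulAction.mem_orbit_self x

lemma orb_symm {S : Set (Equiv.Perm F)} {x y : F} (h : y ∈ orbSet S x) : x ∈ orbSet S y :=
  (MulAction.orbitRel (Subgroup.closure S) F).symm h

lemma orb_trans {S : Set (Equiv.Perm F)} {x y z : F} (h : y ∈ orbSet S x)
    (h' : z ∈ orbSet S y) : z ∈ orbSet S x :=
  (MulAction.orbitRel (Subgroup.closure S) F).trans h' h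

lemma orb_step {S : Set (Equiv.Perm F)} {s : Equiv.Perm F} (hs : s ∈ S) (x : F) :
    s x ∈ orbSet S x :=
  ⟨⟨s, Subgroup.subset_closure hs⟩, rfl⟩

lemma orb_inv {X : Type*} {S : Set (Equiv.Perm F)} {f : F → X}
    (hf : ∀ s ∈ S, ∀ x, f (s x) = f x) {x y : F} (h : y ∈ orbSet S x) : f y = f x := by
  obtain ⟨⟨g, hg⟩, rfl⟩ := h
  change f (g x) = f x
  induction hg using Subgroup.closure_induction generalizing x with
  | mem s hs => exact hf s hs x
  | one => rfl
  | mul a b _ _ ha hb => rw [Equiv.Perm.mul_apply, ha, hb]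
  | inv a _ ha => have := @ha (a⁻¹ x); rw [show a (a⁻¹ x) = x by simp] at this; exact this.symm

lemma orb_mono {S T : Set (Equiv.Perm F)} (hST : S ⊆ T) {x y : F} (h : y ∈ orbSet S x) :
    y ∈ orbSet T x := by
  obtain ⟨⟨g, hg⟩, rfl⟩ := h
  exact ⟨⟨g, Subgroup.closure_mono hST hg⟩, rfl⟩

lemma le_orbCount [Finite F] {X : Type*} (S : Set (Equiv.Perm F)) (f : F → X)
    (hf : ∀ s ∈ S, ∀ x, f (s x) = f x) (hs : Function.Surjective f) :
    Nat.card X ≤ orbCount S := by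
  unfold orbCount
  refine Nat.card_le_card_of_surjective
    (Quotient.lift f (fun a b (h : a ∈ orbSet S b) => orb_inv hf h)) ?_
  intro x
  obtain ⟨y, rfl⟩ := hs x
  exact ⟨Quotient.mk _ y, rfl⟩

lemma orbCount_le {X : Type*} [Finite X] (S : Set (Equiv.Perm F)) (g : X → F)
    (hg : ∀ x, ∃ y, x ∈ orbSet S (g y)) : orbCount S ≤ Nat.card X := by
  unfold orbCount
  refine Nat.card_le_card_of_surjective
    (fun y => (Quotient.mk _ (g y) : MulAction.orbitRel.Quotient (Subgroup.closure S) F)) ?_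
  intro q
  induction q using Quotient.inductionOn with
  | h x =>
    obtain ⟨y, hy⟩ := hg x
    exact ⟨y, Quotient.sound (orb_symm hy)⟩

/-- The orbits of two commuting involutions. -/
lemma orb_comm {θ σ : Equiv.Perm F} (hθ : ∀ x, θ (θ x) = x) (hσ : ∀ x, σ (σ x) = x)
    (hc : ∀ x, θ (σ x) = σ (θ x)) (x : F) :
    orbSet {θ, σ} x = {x, σ x, θ x, σ (θ x)} := by
  ext y
  constructor
  · intro h
    have key : ∀ s ∈ ({θ, σ} : Set (Equiv.Perm F)), ∀ y,
        (s y ∈ ({x, σ x, θ x, σ (θ x)} : Set F)) = (y ∈ ({x, σ x, θ x, σ (θ x)} : Set F)) := by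
      intro s hs y
      have h1 : ∀ y, y ∈ ({x, σ x, θ x, σ (θ x)} : Set F) →
          s y ∈ ({x, σ x, θ x, σ (θ x)} : Set F) := by
        intro y hy
        simp only [Set.mem_insert_iff, Set.mem_singleton_iff] at hs hy ⊢
        rcases hs with rfl | rfl <;> rcases hy with rfl | rfl | rfl | rfl <;>
          simp [hθ, hσ, hc]
      refine propext ⟨fun h => ?_, h1 y⟩
      have h2 := h1 _ h
      simp only [Set.mem_insert_iff, Set.mem_singleton_iff] at hs
      rcases hs with rfl | rfl
      · rwa [hθ] at h2
      · rwa [hσ] at h2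
    have := orb_inv key h
    rw [this]; simp
  · intro h
    simp only [Set.mem_insert_iff, Set.mem_singleton_iff] at h
    have s1 : ∀ z, θ z ∈ orbSet {θ, σ} z := fun z => orb_step (by simp) z
    have s2 : ∀ z, σ z ∈ orbSet {θ, σ} z := fun z => orb_step (by simp) z
    rcases h with rfl | rfl | rfl | rfl
    · exact orb_refl _ _
    · exact s2 _
    · exact s1 _
    · exact orb_trans (s1 _) (s2 _)

end OrbitLemmas

/-! ### Local models: planar maps of `K₄` and `K₃` -/

abbrev LF4 := Fin 4 × Fin 3 × Bool
abbrev LF3 := Fin 3 × Fin 2 × Bool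

def nb4 : Fin 4 → Fin 3 → Fin 4 := ![![1, 2, 3], ![0, 3, 2], ![0, 1, 3], ![0, 2, 1]]
def bk4 : Fin 4 → Fin 3 → Fin 3 := ![![0, 0, 0], ![0, 2, 1], ![1, 2, 1], ![2, 2, 1]]
def fc4 : Fin 4 → Fin 3 → Bool → Fin 4 := fun x k s =>
  (![![![3, 0], ![0, 1], ![1, 3]], ![![0, 3], ![3, 2], ![2, 0]], ![![1, 0], ![0, 2], ![2, 1]],
    ![![3, 1], ![1, 2], ![2, 3]]] : Fin 4 → Fin 3 → Fin 2 → Fin 4) x k (if s then 1 else 0)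
def nb3 : Fin 3 → Fin 2 → Fin 3 := ![![1, 2], ![0, 2], ![0, 1]]
def bk3 : Fin 3 → Fin 2 → Fin 2 := ![![0, 0], ![0, 1], ![1, 1]]
def fc3 : Fin 3 → Fin 2 → Bool → Fin 2 := fun x k s =>
  (![![![0, 1], ![1, 0]], ![![1, 0], ![0, 1]], ![![0, 1], ![1, 0]]] :
    Fin 3 → Fin 2 → Fin 2 → Fin 2) x k (if s then 1 else 0)

def th4 (l : LF4) : LF4 := (nb4 l.1 l.2.1, bk4 l.1 l.2.1, !l.2.2)
def th3 (l : LF3) : LF3 := (nb3 l.1 l.2.1, bk3 l.1 l.2.1, !l.2.2)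
def si4 (l : LF4) : LF4 := (l.1, l.2.1, !l.2.2)
def si3 (l : LF3) : LF3 := (l.1, l.2.1, !l.2.2)
def ph4 (l : LF4) : LF4 := (l.1, if l.2.2 then l.2.1 + 1 else l.2.1 - 1, !l.2.2)
def ph3 (l : LF3) : LF3 := (l.1, if l.2.2 then l.2.1 + 1 else l.2.1 - 1, !l.2.2)

section Build

variable {N4 N3 : Type} (s : Equiv.Perm N4)

def phE (e : N4) (l : LF4) : N4 :=
  if l = (3, 2, true) then s e else if l = (3, 0, false) then s.symm e else e

def thF : (N4 × LF4) ⊕ (N3 × LF3) → (N4 × LF4) ⊕ (N3 × LF3)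
  | .inl (e, l) => .inl (e, th4 l)
  | .inr (e, l) => .inr (e, th3 l)
def siF : (N4 × LF4) ⊕ (N3 × LF3) → (N4 × LF4) ⊕ (N3 × LF3)
  | .inl (e, l) => .inl (e, si4 l)
  | .inr (e, l) => .inr (e, si3 l)
def phF : (N4 × LF4) ⊕ (N3 × LF3) → (N4 × LF4) ⊕ (N3 × LF3)
  | .inl (e, l) => .inl (phE s e l, ph4 l)
  | .inr (e, l) => .inr (e, ph3 l)

lemma th4_inv : ∀ l, th4 (th4 l) = l := by decide
lemma th3_inv : ∀ l, th3 (th3 l) = l := by decide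
lemma si4_inv : ∀ l, si4 (si4 l) = l := by decide
lemma si3_inv : ∀ l, si3 (si3 l) = l := by decide
lemma ph4_inv : ∀ l, ph4 (ph4 l) = l := by decide
lemma ph3_inv : ∀ l, ph3 (ph3 l) = l := by decide
lemma ph4_a : ∀ l, ph4 l = (3, 0, false) ↔ l = (3, 2, true) := by decide
lemma ph4_b : ∀ l, ph4 l = (3, 2, true) ↔ l = (3, 0, false) := by decide

lemma thF_inv : Function.Involutive (thF : (N4 × LF4) ⊕ (N3 × LF3) → _) := by
  rintro (⟨e, l⟩ | ⟨e, l⟩) <;> simp [thF, th4_inv, th3_inv]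
lemma siF_inv : Function.Involutive (siF : (N4 × LF4) ⊕ (N3 × LF3) → _) := by
  rintro (⟨e, l⟩ | ⟨e, l⟩) <;> simp [siF, si4_inv, si3_inv]
lemma phF_inv : Function.Involutive (phF s : (N4 × LF4) ⊕ (N3 × LF3) → _) := by
  rintro (⟨e, l⟩ | ⟨e, l⟩)
  · simp only [phF, ph4_inv, phE, ph4_a, ph4_b]
    by_cases h1 : l = (3, 2, true)
    · subst h1; simp
    · by_cases h2 : l = (3, 0, false)
      · subst h2; simp
      · simp [h1, h2]
  · simp [phF, ph3_inv]

end Build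

lemma exists_fiber_cycle {X Y : Type*} [Finite X] (f : X → Y) :
    ∃ s : Equiv.Perm X, (∀ x, f (s x) = f x) ∧ ∀ x y, f x = f y → s.SameCycle x y := by
  classical
  have := Fintype.ofFinite X
  have h : ∀ y : Y, ∃ t : Equiv.Perm {x // f x = y}, ∀ a b, t.SameCycle a b := by
    intro y
    obtain ⟨t, ht, -⟩ := Finset.exists_cycleOn (Finset.univ : Finset {x // f x = y})
    exact ⟨t, fun a b => ht.2 (by simp) (by simp)⟩
  choose t ht using h
  let eq := Equiv.sigmaFiberEquiv f
  refine ⟨eq.symm.trans ((Equiv.sigmaCongrRight t).trans eq), ?_, ?_⟩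
  · intro x
    exact (t (f x) ⟨x, rfl⟩).2
  · intro x y hxy
    have key : ∀ (n : ℕ) (a : {z // f z = f y}),
        ((eq.symm.trans ((Equiv.sigmaCongrRight t).trans eq)) ^ n) a.1 = ((t (f y)) ^ n) a := by
      intro n
      induction n with
      | zero => intro a; rfl
      | succ n ih =>
        intro a
        rw [pow_succ, pow_succ, Equiv.Perm.mul_apply, Equiv.Perm.mul_apply, ← ih]
        congr 1
        obtain ⟨a, ha⟩ := a
        have : ∀ w (hw : f a = w), (eq.symm.trans ((Equiv.sigmaCongrRight t).trans eq)) a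
            = (t w ⟨a, hw⟩ : X) := by rintro w rfl; rfl
        exact this _ ha
    obtain ⟨n, -, hn⟩ := (ht (f y) ⟨x, hxy⟩ ⟨y, rfl⟩).exists_pow_eq'
    refine ⟨n, ?_⟩
    have := key n ⟨x, hxy⟩
    rw [hn] at this
    exact_mod_cast this

lemma loc4_fix : ∀ l, th4 l ≠ l ∧ si4 l ≠ l ∧ ph4 l ≠ l ∧ th4 l ≠ si4 l := by decide
lemma loc3_fix : ∀ l, th3 l ≠ l ∧ si3 l ≠ l ∧ ph3 l ≠ l ∧ th3 l ≠ si3 l := by decide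
lemma loc4_comm : ∀ l, th4 (si4 l) = si4 (th4 l) := by decide
lemma loc3_comm : ∀ l, th3 (si3 l) = si3 (th3 l) := by decide
lemma loc4_adj : ∀ l : LF4, l.1 ≠ (th4 l).1 := by decide
lemma loc3_adj : ∀ l : LF3, l.1 ≠ (th3 l).1 := by decide
lemma loc4_ex : ∀ i j : Fin 4, i ≠ j → ∃ l : LF4, l.1 = i ∧ (th4 l).1 = j := by decide
lemma loc3_ex : ∀ i j : Fin 3, i ≠ j → ∃ l : LF3, l.1 = i ∧ (th3 l).1 = j := by decide
lemma loc4_uniq : ∀ l l' : LF4, l.1 = l'.1 → (th4 l).1 = (th4 l').1 → l' = l ∨ l' = si4 l := by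
  decide
lemma loc3_uniq : ∀ l l' : LF3, l.1 = l'.1 → (th3 l).1 = (th3 l').1 → l' = l ∨ l' = si3 l := by
  decide
lemma loc4_face : ∀ l : LF4, fc4 (th4 l).1 (th4 l).2.1 (th4 l).2.2 = fc4 l.1 l.2.1 l.2.2 ∧
    fc4 (ph4 l).1 (ph4 l).2.1 (ph4 l).2.2 = fc4 l.1 l.2.1 l.2.2 := by decide
lemma loc3_face : ∀ l : LF3, fc3 (th3 l).1 (th3 l).2.1 (th3 l).2.2 = fc3 l.1 l.2.1 l.2.2 ∧
    fc3 (ph3 l).1 (ph3 l).2.1 (ph3 l).2.2 = fc3 l.1 l.2.1 l.2.2 := by decide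
lemma loc4_face_surj : ∀ i : Fin 4, ∃ l : LF4, fc4 l.1 l.2.1 l.2.2 = i := by decide
lemma loc3_face_surj : ∀ i : Fin 2, ∃ l : LF3, fc3 l.1 l.2.1 l.2.2 = i := by decide

def er4 : Fin 6 → LF4 := ![(0, 0, true), (0, 1, true), (0, 2, true), (1, 1, true), (1, 2, true),
  (2, 2, true)]
def er3 : Fin 3 → LF3 := ![(0, 0, true), (0, 1, true), (1, 1, true)]
lemma loc4_edge : ∀ l, ∃ i, l = er4 i ∨ l = si4 (er4 i) ∨ l = th4 (er4 i) ∨ l = si4 (th4 (er4 i)) := by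
  decide
lemma loc3_edge : ∀ l, ∃ i, l = er3 i ∨ l = si3 (er3 i) ∨ l = th3 (er3 i) ∨ l = si3 (th3 (er3 i)) := by
  decide

/-- the label of a (vertex or face) index in a rooted `K₄`: `3` is shared between the copies. -/
def lab4 {N4 U : Type*} (N3 : Type*) (n : ℕ) (u : N4 → U) (e : N4) (i : Fin 4) :
    ((N4 × Fin 3) ⊕ U) ⊕ (N3 × Fin n) :=
  if h : i.val < 3 then .inl (.inl (e, ⟨i.val, h⟩)) else .inl (.inr (u e))

lemma planar_of_data {W : Type*} (H : SimpleGraph W) (N4 N3 : Type) [Fintype N4] [Fintype N3]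
    (q4 : N4 → Fin 4 → W) (q3 : N3 → Fin 3 → W)
    (h4 : ∀ e e' i i', q4 e i = q4 e' i' → i = i' ∧ (i ≠ 3 → e = e'))
    (h3 : ∀ e e' i i', q3 e i = q3 e' i' → i = i' ∧ e = e')
    (h43 : ∀ e e' i i', q4 e i ≠ q3 e' i')
    (hadj : ∀ x y, H.Adj x y ↔ (∃ e i j, i ≠ j ∧ x = q4 e i ∧ y = q4 e j) ∨
      (∃ e i j, i ≠ j ∧ x = q3 e i ∧ y = q3 e j)) : IsPlanarG H := by
  classical
  let U := Set.range (fun e => q4 e 3)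
  let u : N4 → U := fun e => ⟨q4 e 3, e, rfl⟩
  obtain ⟨s, hs1, hs2⟩ := exists_fiber_cycle u
  have hu : ∀ {e e'}, q4 e 3 = q4 e' 3 → u e = u e' := fun h => Subtype.ext h
  have hu' : ∀ {e e'}, u e = u e' → q4 e 3 = q4 e' 3 := fun h => congrArg Subtype.val h
  have husurj : Function.Surjective u := by rintro ⟨_, e, rfl⟩; exact ⟨e, rfl⟩
  have hss : ∀ e, u (s.symm e) = u e := fun e => by
    have := hs1 (s.symm e); rw [Equiv.apply_symm_apply] at this; exact this.symm
  let Fl := (N4 × LF4) ⊕ (N3 × LF3)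
  let θ : Equiv.Perm Fl := Function.Involutive.toPerm _ thF_inv
  let σ : Equiv.Perm Fl := Function.Involutive.toPerm _ siF_inv
  let φ : Equiv.Perm Fl := Function.Involutive.toPerm _ (phF_inv s)
  let p : Fl → W := fun f => match f with
    | .inl (e, l) => q4 e l.1
    | .inr (e, l) => q3 e l.1
  have hθ : ∀ x, θ (θ x) = x := thF_inv
  have hσ : ∀ x, σ (σ x) = x := siF_inv
  have hφ : ∀ x, φ (φ x) = x := phF_inv s
  have hc : ∀ x, θ (σ x) = σ (θ x) := by
    rintro (⟨e, l⟩ | ⟨e, l⟩)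
    · exact congrArg (fun z => Sum.inl (e, z)) (loc4_comm l)
    · exact congrArg (fun z => Sum.inr (e, z)) (loc3_comm l)
  have fθ : ∀ x, θ x ≠ x := by
    rintro (⟨e, l⟩ | ⟨e, l⟩) h
    · exact (loc4_fix l).1 (congrArg Prod.snd (Sum.inl.inj h))
    · exact (loc3_fix l).1 (congrArg Prod.snd (Sum.inr.inj h))
  have fσ : ∀ x, σ x ≠ x := by
    rintro (⟨e, l⟩ | ⟨e, l⟩) h
    · exact (loc4_fix l).2.1 (congrArg Prod.snd (Sum.inl.inj h))
    · exact (loc3_fix l).2.1 (congrArg Prod.snd (Sum.inr.inj h))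
  have fφ : ∀ x, φ x ≠ x := by
    rintro (⟨e, l⟩ | ⟨e, l⟩) h
    · exact (loc4_fix l).2.2.1 (congrArg Prod.snd (Sum.inl.inj h))
    · exact (loc3_fix l).2.2.1 (congrArg Prod.snd (Sum.inr.inj h))
  have fθσ : ∀ x, θ x ≠ σ x := by
    rintro (⟨e, l⟩ | ⟨e, l⟩) h
    · exact (loc4_fix l).2.2.2 (congrArg Prod.snd (Sum.inl.inj h))
    · exact (loc3_fix l).2.2.2 (congrArg Prod.snd (Sum.inr.inj h))
  have hphE : ∀ e l, u (phE s e l) = u e := by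
    intro e l
    unfold phE
    split_ifs
    · exact hs1 e
    · exact hss e
    · rfl
  have hphE' : ∀ e (l : LF4), l.1 ≠ 3 → phE s e l = e := by
    intro e l hl
    unfold phE
    rw [if_neg (by rintro rfl; exact hl rfl), if_neg (by rintro rfl; exact hl rfl)]
  -- local connectivity at a vertex
  have sσ : ∀ z, σ z ∈ orbSet {σ, φ} z := fun z => orb_step (by simp) z
  have sφ : ∀ z, φ z ∈ orbSet {σ, φ} z := fun z => orb_step (by simp) z
  have v4 : ∀ e (l : LF4), (Sum.inl (e, l) : Fl) ∈ orbSet {σ, φ} (Sum.inl (e, (l.1, 0, false))) := by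
    rintro e ⟨x, k, b⟩
    have c0 := orb_refl {σ, φ} (Sum.inl (e, (x, 0, false)) : Fl)
    have c1 : (Sum.inl (e, (x, 0, true)) : Fl) ∈ orbSet {σ, φ} (Sum.inl (e, (x, 0, false))) :=
      sσ _
    have c2 : (Sum.inl (e, (x, 1, false)) : Fl) ∈ orbSet {σ, φ} (Sum.inl (e, (x, 0, false))) := by
      refine orb_trans c1 ?_
      have := sφ (Sum.inl (e, (x, 0, true)))
      have h : phE s e (x, 0, true) = e := by simp [phE]
      change Sum.inl (phE s e (x, 0, true), _) ∈ _ at this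
      rwa [h] at this
    have c3 : (Sum.inl (e, (x, 1, true)) : Fl) ∈ orbSet {σ, φ} (Sum.inl (e, (x, 0, false))) :=
      orb_trans c2 (sσ _)
    have c4 : (Sum.inl (e, (x, 2, false)) : Fl) ∈ orbSet {σ, φ} (Sum.inl (e, (x, 0, false))) := by
      refine orb_trans c3 ?_
      have := sφ (Sum.inl (e, (x, 1, true)))
      have h : phE s e (x, 1, true) = e := by simp [phE]
      change Sum.inl (phE s e (x, 1, true), _) ∈ _ at this
      rwa [h] at this
    have c5 : (Sum.inl (e, (x, 2, true)) : Fl) ∈ orbSet {σ, φ} (Sum.inl (e, (x, 0, false))) :=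
      orb_trans c4 (sσ _)
    fin_cases k <;> cases b <;> assumption
  have v3 : ∀ e (l : LF3), (Sum.inr (e, l) : Fl) ∈ orbSet {σ, φ} (Sum.inr (e, (l.1, 0, false))) := by
    rintro e ⟨x, k, b⟩
    have c0 := orb_refl {σ, φ} (Sum.inr (e, (x, 0, false)) : Fl)
    have c1 : (Sum.inr (e, (x, 0, true)) : Fl) ∈ orbSet {σ, φ} (Sum.inr (e, (x, 0, false))) :=
      sσ _
    have c2 : (Sum.inr (e, (x, 1, false)) : Fl) ∈ orbSet {σ, φ} (Sum.inr (e, (x, 0, false))) :=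
      orb_trans c1 (sφ _)
    have c3 : (Sum.inr (e, (x, 1, true)) : Fl) ∈ orbSet {σ, φ} (Sum.inr (e, (x, 0, false))) :=
      orb_trans c2 (sσ _)
    fin_cases k <;> cases b <;> assumption
  have vs : ∀ e, (Sum.inl (s e, (3, 0, false)) : Fl) ∈ orbSet {σ, φ} (Sum.inl (e, (3, 0, false))) := by
    intro e
    refine orb_trans (v4 e (3, 2, true)) ?_
    have := sφ (Sum.inl (e, (3, 2, true)))
    have h : phE s e (3, 2, true) = s e := by simp [phE]
    change Sum.inl (phE s e (3, 2, true), _) ∈ _ at this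
    rwa [h] at this
  have vu : ∀ e e', u e = u e' →
      (Sum.inl (e', (3, 0, false)) : Fl) ∈ orbSet {σ, φ} (Sum.inl (e, (3, 0, false))) := by
    intro e e' h
    obtain ⟨n, -, rfl⟩ := (hs2 e e' h).exists_pow_eq'
    clear h
    induction n with
    | zero => exact orb_refl _ _
    | succ n ih =>
      rw [pow_succ', Equiv.Perm.mul_apply]
      exact orb_trans ih (vs _)
  have hV : ∀ f f', p f = p f' → f' ∈ orbSet {σ, φ} f := by
    rintro (⟨e, l⟩ | ⟨e, l⟩) (⟨e', l'⟩ | ⟨e', l'⟩) h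
    · obtain ⟨h1, h2⟩ := h4 _ _ _ _ h
      refine orb_trans (orb_symm (v4 e l)) (orb_trans ?_ (v4 e' l'))
      rw [← h1]
      by_cases h3 : l.1 = 3
      · rw [h3]
        apply vu
        apply hu
        have h : q4 e l.1 = q4 e' l'.1 := h
        rw [← h1, h3] at h
        exact h
      · rw [h2 h3]; exact orb_refl _ _
    · exact absurd h (h43 _ _ _ _)
    · exact absurd h.symm (h43 _ _ _ _)
    · obtain ⟨h1, rfl⟩ := h3 _ _ _ _ h
      refine orb_trans (orb_symm (v3 e l)) ?_
      rw [h1]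
      exact v3 e l'
  refine ⟨Fl, inferInstance, θ, σ, φ, p, ⟨⟨?_, fθ⟩, ⟨?_, fσ⟩, ⟨?_, fφ⟩, ?_⟩, ⟨?_, ?_, ?_, hV, ?_, ?_⟩, ?_⟩
  · ext1 x; exact hθ x
  · ext1 x; exact hσ x
  · ext1 x; exact hφ x
  · intro x
    rw [orb_comm hθ hσ hc]
    have n1 := (fσ x).symm
    have n2 := (fθ x).symm
    have n3 : x ≠ σ (θ x) := fun h => fθσ (θ x) (by rw [← h, hθ])
    have n4 := (fθσ x).symm
    have n5 : σ x ≠ σ (θ x) := fun h => n2 (σ.injective h)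
    have n6 := (fσ (θ x)).symm
    have : ({x, σ x, θ x, σ (θ x)} : Set Fl) = (({x, σ x, θ x, σ (θ x)} : Finset Fl) : Set Fl) := by
      simp
    rw [this, Nat.card_coe_set_eq, Set.ncard_coe_finset]
    rw [Finset.card_insert_of_notMem, Finset.card_insert_of_notMem, Finset.card_insert_of_notMem,
      Finset.card_singleton] <;> simp [n1, n2, n3, n4, n5, n6]
  · rintro (⟨e, l⟩ | ⟨e, l⟩) <;> rfl
  · rintro (⟨e, l⟩ | ⟨e, l⟩)
    · change q4 (phE s e l) l.1 = q4 e l.1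
      by_cases h3 : l.1 = 3
      · rw [h3]; exact hu' (hphE e l)
      · rw [hphE' e l h3]
    · rfl
  · rintro (⟨e, l⟩ | ⟨e, l⟩)
    · exact (hadj _ _).2 (Or.inl ⟨e, l.1, (th4 l).1, loc4_adj l, rfl, rfl⟩)
    · exact (hadj _ _).2 (Or.inr ⟨e, l.1, (th3 l).1, loc3_adj l, rfl, rfl⟩)
  · intro x y hxy
    rcases (hadj x y).1 hxy with ⟨e, i, j, hij, rfl, rfl⟩ | ⟨e, i, j, hij, rfl, rfl⟩
    · obtain ⟨l, rfl, rfl⟩ := loc4_ex i j hij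
      exact ⟨Sum.inl (e, l), rfl, rfl⟩
    · obtain ⟨l, rfl, rfl⟩ := loc3_ex i j hij
      exact ⟨Sum.inr (e, l), rfl, rfl⟩
  · rintro (⟨e, l⟩ | ⟨e, l⟩) (⟨e', l'⟩ | ⟨e', l'⟩) h h'
    · obtain ⟨a1, a2⟩ := h4 _ _ _ _ h
      obtain ⟨b1, b2⟩ := h4 _ _ _ _ h'
      have : e = e' := by
        by_cases h3 : l.1 = 3
        · exact b2 (fun h5 => loc4_adj l (h3.trans h5.symm))
        · exact a2 h3
      subst this
      rw [orb_comm hθ hσ hc]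
      rcases loc4_uniq l l' a1 b1 with rfl | rfl
      · simp
      · right; left; rfl
    · exact absurd h (h43 _ _ _ _)
    · exact absurd h.symm (h43 _ _ _ _)
    · obtain ⟨a1, rfl⟩ := h3 _ _ _ _ h
      obtain ⟨b1, -⟩ := h3 _ _ _ _ h'
      rw [orb_comm hθ hσ hc]
      rcases loc3_uniq l l' a1 b1 with rfl | rfl
      · simp
      · right; left; rfl
  · -- Euler count
    have hE : orbCount {θ, σ} ≤ Nat.card ((N4 × Fin 6) ⊕ (N3 × Fin 3)) := by
      refine orbCount_le _ (Sum.map (fun a => (a.1, er4 a.2)) (fun a => (a.1, er3 a.2))) ?_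
      rintro (⟨e, l⟩ | ⟨e, l⟩)
      · obtain ⟨i, hi⟩ := loc4_edge l
        refine ⟨Sum.inl (e, i), ?_⟩
        rw [orb_comm hθ hσ hc]
        rcases hi with rfl | rfl | rfl | rfl
        · left; rfl
        · right; left; rfl
        · right; right; left; rfl
        · right; right; right; rfl
      · obtain ⟨i, hi⟩ := loc3_edge l
        refine ⟨Sum.inr (e, i), ?_⟩
        rw [orb_comm hθ hσ hc]
        rcases hi with rfl | rfl | rfl | rfl
        · left; rfl
        · right; left; rfl
        · right; right; left; rfl
        · right; right; right; rfl
    have hlabs : ∀ n e i, 3 ≤ i.val → lab4 N3 n u e i = .inl (.inr (u e)) := by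
      intro n e i h
      simp [lab4, h]
    have hVc : Nat.card (((N4 × Fin 3) ⊕ U) ⊕ (N3 × Fin 3)) ≤ orbCount {σ, φ} := by
      let f : Fl → ((N4 × Fin 3) ⊕ U) ⊕ (N3 × Fin 3) := fun f => match f with
        | .inl (e, l) => lab4 N3 3 u e l.1
        | .inr (e, l) => .inr (e, l.1)
      refine le_orbCount _ f ?_ ?_
      · intro t ht
        simp only [Set.mem_insert_iff, Set.mem_singleton_iff] at ht
        rcases ht with rfl | rfl
        · rintro (⟨e, l⟩ | ⟨e, l⟩) <;> rfl
        · rintro (⟨e, l⟩ | ⟨e, l⟩)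
          · change lab4 N3 3 u (phE s e l) l.1 = lab4 N3 3 u e l.1
            by_cases h3 : l.1 = 3
            · rw [hlabs _ _ _ (by simp [h3]), hlabs _ _ _ (by simp [h3]), hphE]
            · rw [hphE' e l h3]
          · rfl
      · rintro ((⟨e, i⟩ | v) | ⟨e, i⟩)
        · exact ⟨.inl (e, (i.castSucc, 0, false)), by simp [f, lab4]⟩
        · obtain ⟨e, rfl⟩ := husurj v
          exact ⟨.inl (e, (3, 0, false)), by simp [f, lab4]⟩
        · exact ⟨.inr (e, (i, 0, false)), rfl⟩
    have hFc : Nat.card (((N4 × Fin 3) ⊕ U) ⊕ (N3 × Fin 2)) ≤ orbCount {θ, φ} := by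
      let f : Fl → ((N4 × Fin 3) ⊕ U) ⊕ (N3 × Fin 2) := fun f => match f with
        | .inl (e, l) => lab4 N3 2 u e (fc4 l.1 l.2.1 l.2.2)
        | .inr (e, l) => .inr (e, fc3 l.1 l.2.1 l.2.2)
      refine le_orbCount _ f ?_ ?_
      · intro t ht
        simp only [Set.mem_insert_iff, Set.mem_singleton_iff] at ht
        rcases ht with rfl | rfl
        · rintro (⟨e, l⟩ | ⟨e, l⟩)
          · exact congrArg (lab4 N3 2 u e) (loc4_face l).1
          · exact congrArg (fun z => Sum.inr (e, z)) (loc3_face l).1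
        · rintro (⟨e, l⟩ | ⟨e, l⟩)
          · change lab4 N3 2 u (phE s e l) (fc4 (ph4 l).1 (ph4 l).2.1 (ph4 l).2.2) =
              lab4 N3 2 u e (fc4 l.1 l.2.1 l.2.2)
            rw [(loc4_face l).2]
            by_cases h1 : l = (3, 2, true)
            · subst h1
              rw [hlabs _ _ _ (by decide), hlabs _ _ _ (by decide), hphE]
            · by_cases h2 : l = (3, 0, false)
              · subst h2
                rw [hlabs _ _ _ (by decide), hlabs _ _ _ (by decide), hphE]
              · rw [phE, if_neg h1, if_neg h2]
          · exact congrArg (fun z => Sum.inr (e, z)) (loc3_face l).2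
      · rintro ((⟨e, i⟩ | v) | ⟨e, i⟩)
        · obtain ⟨l, hl⟩ := loc4_face_surj i.castSucc
          exact ⟨.inl (e, l), by simp [f, lab4, hl]⟩
        · obtain ⟨e, rfl⟩ := husurj v
          obtain ⟨l, hl⟩ := loc4_face_surj 3
          exact ⟨.inl (e, l), by simp [f, lab4, hl]⟩
        · obtain ⟨l, hl⟩ := loc3_face_surj i
          exact ⟨.inr (e, l), by simp [f, hl]⟩
    have hCc : orbCount {θ, σ, φ} ≤ Nat.card (U ⊕ N3) := by
      have m1 : ({σ, φ} : Set (Equiv.Perm Fl)) ⊆ {θ, σ, φ} := by simp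
      have s1 : ∀ z, θ z ∈ orbSet {θ, σ, φ} z := fun z => orb_step (by simp) z
      refine orbCount_le _ (Sum.map (fun v => ((husurj v).choose, ((3 : Fin 4), (0 : Fin 3), false)))
        (fun e => (e, ((0 : Fin 3), (0 : Fin 2), false)))) ?_
      rintro (⟨e, l⟩ | ⟨e, l⟩)
      · refine ⟨.inl (u e), ?_⟩
        refine orb_trans (orb_mono m1 (vu _ e (husurj (u e)).choose_spec)) ?_
        by_cases h3 : l.1 = 3
        · have := v4 e l
          rw [h3] at this
          exact orb_mono m1 this
        · obtain ⟨l', h1, h2⟩ := loc4_ex l.1 3 h3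
          have a1 := v4 e l
          rw [← h1] at a1
          have a2 := v4 e (th4 l')
          rw [h2] at a2
          refine orb_trans (orb_mono m1 a2) (orb_trans (s1 _) ?_)
          change Sum.inl (e, l) ∈ orbSet _ (Sum.inl (e, th4 (th4 l')))
          rw [th4_inv]
          exact orb_trans (orb_symm (orb_mono m1 (v4 e l'))) (orb_mono m1 a1)
      · refine ⟨.inr e, ?_⟩
        by_cases h3 : l.1 = 0
        · have := v3 e l
          rw [h3] at this
          exact orb_mono m1 this
        · obtain ⟨l', h1, h2⟩ := loc3_ex l.1 0 h3
          have a1 := v3 e l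
          rw [← h1] at a1
          have a2 := v3 e (th3 l')
          rw [h2] at a2
          refine orb_trans (orb_mono m1 a2) (orb_trans (s1 _) ?_)
          change Sum.inr (e, l) ∈ orbSet _ (Sum.inr (e, th3 (th3 l')))
          rw [th3_inv]
          exact orb_trans (orb_symm (orb_mono m1 (v3 e l'))) (orb_mono m1 a1)
    have : Finite U := inferInstance
    rw [Nat.card_sum, Nat.card_prod, Nat.card_prod] at hE
    rw [Nat.card_sum, Nat.card_sum, Nat.card_prod, Nat.card_prod] at hVc hFc
    rw [Nat.card_sum] at hCc
    simp only [Nat.card_fin] at hE hVc hFc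
    unfold genus
    omega

lemma gadget_ll {V : Type*} (G : SimpleGraph V) (u w : V) :
    (gadget G).Adj (.inl u) (.inl w) ↔ G.Adj u w := by
  simp only [gadget, SimpleGraph.fromRel_adj]
  constructor
  · rintro ⟨-, h | h⟩
    · exact h
    · exact h.symm
  · intro h
    exact ⟨fun h' => h.ne (Sum.inl.inj h'), Or.inl h⟩

lemma gadget_lr {V : Type*} (G : SimpleGraph V) (u : V) (e : G.edgeSet) (i : Fin 3) :
    (gadget G).Adj (.inl u) (.inr (e, i)) ↔ u ∈ (e : Sym2 V) := by
  simp [gadget, SimpleGraph.fromRel_adj]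

lemma gadget_rr {V : Type*} (G : SimpleGraph V) (e e' : G.edgeSet) (i j : Fin 3) :
    (gadget G).Adj (.inr (e, i)) (.inr (e', j)) ↔ e = e' ∧ i ≠ j := by
  simp only [gadget, SimpleGraph.fromRel_adj]
  constructor
  · rintro ⟨-, h | h⟩
    · exact h
    · exact ⟨h.1.symm, h.2.symm⟩
  · rintro ⟨rfl, h⟩
    exact ⟨by simpa using h, Or.inl ⟨rfl, h⟩⟩

lemma forward {V : Type*} [Fintype V] (G : SimpleGraph V) (C : Set V)
    (hC : ∀ u v, G.Adj u v → u ∈ C ∨ v ∈ C) :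
    IsPlanarG ((gadget G).induce (Sum.inl '' C : Set (V ⊕ (G.edgeSet × Fin 3)))ᶜ) := by
  classical
  let S : Set (V ⊕ (G.edgeSet × Fin 3)) := Sum.inl '' C
  let P : G.edgeSet → Prop := fun e => ∃ u ∈ (e : Sym2 V), u ∉ C
  have : Fintype {e // P e} := Fintype.ofFinite _
  have : Fintype {e // ¬ P e} := Fintype.ofFinite _
  let a4 := (Fintype.equivFin {e // P e}).symm
  let a3 := (Fintype.equivFin {e // ¬ P e}).symm
  have hr : ∀ e i, (Sum.inr (e, i) : V ⊕ (G.edgeSet × Fin 3)) ∈ Sᶜ := by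
    intro e i; simp [S]
  have hl : ∀ u, (Sum.inl u : V ⊕ (G.edgeSet × Fin 3)) ∈ Sᶜ ↔ u ∉ C := by
    intro u; simp [S]
  -- uniqueness of the surviving endpoint
  have huniq : ∀ (e : G.edgeSet) u w, u ∈ (e : Sym2 V) → w ∈ (e : Sym2 V) → u ∉ C → w ∉ C →
      u = w := by
    intro e u w hu hw h1 h2
    by_contra hne
    have h3 : (e : Sym2 V) = s(u, w) := (Sym2.mem_and_mem_iff hne).1 ⟨hu, hw⟩
    have h4 : G.Adj u w := by
      have := e.2
      rw [h3] at this
      exact this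
    rcases hC _ _ h4 with h | h
    · exact h1 h
    · exact h2 h
  let rt : {e // P e} → V := fun e => e.2.choose
  have rt1 : ∀ e : {e // P e}, rt e ∈ (e.1 : Sym2 V) := fun e => e.2.choose_spec.1
  have rt2 : ∀ e : {e // P e}, rt e ∉ C := fun e => e.2.choose_spec.2
  let q4 : Fin (Fintype.card {e // P e}) → Fin 4 → (Sᶜ : Set _) := fun e i =>
    if h : i.val < 3 then ⟨.inr ((a4 e).1, ⟨i.val, h⟩), hr _ _⟩
    else ⟨.inl (rt (a4 e)), (hl _).2 (rt2 _)⟩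
  let q3 : Fin (Fintype.card {e // ¬ P e}) → Fin 3 → (Sᶜ : Set _) := fun e i =>
    ⟨.inr ((a3 e).1, i), hr _ _⟩
  have q4a : ∀ e (i : Fin 3), q4 e i.castSucc = ⟨.inr ((a4 e).1, i), hr _ _⟩ := by
    intro e i
    simp [q4]
  have q4b : ∀ e, q4 e 3 = ⟨.inl (rt (a4 e)), (hl _).2 (rt2 _)⟩ := by
    intro e
    simp [q4]
  have hcase : ∀ i : Fin 4, i = 3 ∨ ∃ j : Fin 3, i = j.castSucc := by decide
  have hne3 : ∀ j : Fin 3, j.castSucc ≠ 3 := by decide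
  refine planar_of_data _ _ _ q4 q3 ?_ ?_ ?_ ?_
  · intro e e' i i' h
    rcases hcase i with rfl | ⟨j, rfl⟩ <;> rcases hcase i' with rfl | ⟨j', rfl⟩
    · simp
    · rw [q4a, q4b] at h; simp at h
    · rw [q4a, q4b] at h; simp at h
    · rw [q4a, q4a] at h
      simp only [Subtype.mk.injEq, Sum.inr.injEq, Prod.mk.injEq] at h
      obtain ⟨h1, rfl⟩ := h
      exact ⟨rfl, fun _ => a4.injective (Subtype.ext h1)⟩
  · intro e e' i i' h
    simp only [q3, Subtype.mk.injEq, Sum.inr.injEq, Prod.mk.injEq] at h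
    exact ⟨h.2, a3.injective (Subtype.ext h.1)⟩
  · intro e e' i i' h
    rcases hcase i with rfl | ⟨j, rfl⟩
    · rw [q4b] at h; simp [q3] at h
    · rw [q4a] at h
      simp only [q3, Subtype.mk.injEq, Sum.inr.injEq, Prod.mk.injEq] at h
      exact (a3 e').2 (h.1 ▸ (a4 e).2)
  · have hroot : ∀ u (e : G.edgeSet), u ∈ (e : Sym2 V) → u ∉ C → ∃ n, (a4 n).1 = e ∧
        rt (a4 n) = u := by
      intro u e hu huC
      have hP : P e := ⟨u, hu, huC⟩
      refine ⟨a4.symm ⟨e, hP⟩, by simp, ?_⟩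
      rw [Equiv.apply_symm_apply]
      exact huniq e _ _ (rt1 ⟨e, hP⟩) hu (rt2 _) huC
    intro x y
    change (gadget G).Adj x.1 y.1 ↔ _
    constructor
    · intro h
      obtain ⟨x, hx⟩ := x
      obtain ⟨y, hy⟩ := y
      rcases x with x | ⟨e, i⟩ <;> rcases y with y | ⟨e', i'⟩
      · exfalso
        rcases hC _ _ ((gadget_ll G x y).1 h) with h | h
        · exact (hl _).1 hx h
        · exact (hl _).1 hy h
      · obtain ⟨n, rfl, rfl⟩ := hroot x e' ((gadget_lr G _ _ _).1 h) ((hl _).1 hx)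
        exact Or.inl ⟨n, 3, i'.castSucc, (hne3 _).symm, (q4b _).symm, (q4a _ _).symm⟩
      · obtain ⟨n, rfl, rfl⟩ := hroot y e ((gadget_lr G _ _ _).1 h.symm) ((hl _).1 hy)
        exact Or.inl ⟨n, i.castSucc, 3, (hne3 _), (q4a _ _).symm, (q4b _).symm⟩
      · obtain ⟨rfl, hii⟩ := (gadget_rr G _ _ _ _).1 h
        by_cases hP : P e
        · refine Or.inl ⟨a4.symm ⟨e, hP⟩, i.castSucc, i'.castSucc, ?_, ?_, ?_⟩
          · exact fun h => hii (Fin.castSucc_injective _ h)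
          · rw [q4a]; simp
          · rw [q4a]; simp
        · refine Or.inr ⟨a3.symm ⟨e, hP⟩, i, i', hii, ?_, ?_⟩
          · simp [q3]
          · simp [q3]
    · rintro (⟨n, i, j, hij, rfl, rfl⟩ | ⟨n, i, j, hij, rfl, rfl⟩)
      · rcases hcase i with rfl | ⟨i, rfl⟩ <;> rcases hcase j with rfl | ⟨j, rfl⟩
        · exact absurd rfl hij
        · rw [q4a, q4b]; exact (gadget_lr _ _ _ _).2 (rt1 _)
        · rw [q4a, q4b]; exact ((gadget_lr _ _ _ _).2 (rt1 _)).symm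
        · rw [q4a, q4a]; exact (gadget_rr _ _ _ _ _).2 ⟨rfl, fun h => hij (h ▸ rfl)⟩
      · exact (gadget_rr _ _ _ _ _).2 ⟨rfl, hij⟩

lemma six_darts : ∀ i j k m : Fin 5, i ≠ j → k ≠ j → k ≠ i → m ≠ i → m ≠ j →
    ({(i, j), (j, i), (i, k), (k, i), (j, m), (m, j)} : Finset (Fin 5 × Fin 5)).card = 6 := by
  decide

/-- The pure counting core of the non-planarity of `K₅`. -/
lemma k5_count {Q : Type*} [Fintype Q] (c : Q → Fin 5 → Fin 5 → ZMod 2)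
    (hsym : ∀ q i j, c q i j = c q j i) (hdiag : ∀ q i, c q i i = 0)
    (hrow : ∀ q i, ∑ j, c q i j = 0)
    (htwo : ∀ i j, ∃ q₁ q₂, ∀ q, c q i j ≠ 0 → q = q₁ ∨ q = q₂)
    (hall : ∀ i j, ∑ q, c q i j = 0)
    (hspan : ∀ d : Fin 5 → Fin 5 → ZMod 2, (∀ i j, d i j = d j i) → (∀ i, d i i = 0) →
      (∀ i, ∑ j, d i j = 0) → ∃ T : Finset Q, ∀ i j, d i j = ∑ q ∈ T, c q i j) : False := by
  classical
  let Q1 : Finset Q := Finset.univ.filter (fun q => c q ≠ 0)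
  -- each nonzero cycle has at least 6 darts
  have hdeg : ∀ q i j, c q i j ≠ 0 → ∃ k, k ≠ j ∧ k ≠ i ∧ c q i k ≠ 0 := by
    intro q i j h
    by_contra hcon
    push Not at hcon
    have := hrow q i
    rw [Finset.sum_eq_single j] at this
    · exact h this
    · intro k _ hk
      by_cases hki : k = i
      · rw [hki]; exact hdiag q i
      · exact hcon k hk hki
    · simp
  have h6 : ∀ q ∈ Q1, 6 ≤ (Finset.univ.filter (fun x : Fin 5 × Fin 5 => c q x.1 x.2 ≠ 0)).card := by
    intro q hq
    have hq : c q ≠ 0 := by simpa [Q1] using hq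
    obtain ⟨i, hi⟩ := Function.ne_iff.1 hq
    obtain ⟨j, hij⟩ := Function.ne_iff.1 hi
    have hij : c q i j ≠ 0 := hij
    have hne : i ≠ j := by rintro rfl; exact hij (hdiag q i)
    obtain ⟨k, k1, k2, k3⟩ := hdeg q i j hij
    obtain ⟨m, m1, m2, m3⟩ := hdeg q j i (by rwa [hsym])
    have hsub : ({(i, j), (j, i), (i, k), (k, i), (j, m), (m, j)} : Finset (Fin 5 × Fin 5)) ⊆
        Finset.univ.filter (fun x : Fin 5 × Fin 5 => c q x.1 x.2 ≠ 0) := by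
      intro x hx
      simp only [Finset.mem_insert, Finset.mem_singleton] at hx
      simp only [Finset.mem_filter, Finset.mem_univ, true_and]
      rcases hx with rfl | rfl | rfl | rfl | rfl | rfl
      · exact hij
      · simpa [hsym q j i] using hij
      · exact k3
      · simpa [hsym q k i] using k3
      · exact m3
      · simpa [hsym q m j] using m3
    refine le_trans (le_of_eq ?_) (Finset.card_le_card hsub)
    exact (six_darts i j k m hne k1 k2 m1 m2).symm
  have h2 : ∀ x ∈ (Finset.univ.filter (fun x : Fin 5 × Fin 5 => x.1 ≠ x.2)),
      (Q1.filter (fun q => c q x.1 x.2 ≠ 0)).card ≤ 2 := by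
    rintro ⟨i, j⟩ -
    obtain ⟨q₁, q₂, h⟩ := htwo i j
    refine le_trans (Finset.card_le_card (t := {q₁, q₂}) ?_) Finset.card_le_two
    intro q hq
    simpa using h q (Finset.mem_filter.1 hq).2
  have hcard : Q1.card ≤ 6 := by
    have := Finset.sum_card_bipartiteAbove_eq_sum_card_bipartiteBelow
      (s := Q1) (t := Finset.univ.filter (fun x : Fin 5 × Fin 5 => x.1 ≠ x.2))
      (fun q x => c q x.1 x.2 ≠ 0)
    have h3 : ∑ x ∈ Finset.univ.filter (fun x : Fin 5 × Fin 5 => x.1 ≠ x.2),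
        (Finset.bipartiteBelow (fun q (x : Fin 5 × Fin 5) => c q x.1 x.2 ≠ 0) Q1 x).card ≤ 20 * 2 :=
      le_trans (Finset.sum_le_card_nsmul _ _ 2 h2) (by decide)
    have h4 : Q1.card * 6 ≤ ∑ q ∈ Q1, (Finset.bipartiteAbove
        (fun q (x : Fin 5 × Fin 5) => c q x.1 x.2 ≠ 0)
        (Finset.univ.filter (fun x : Fin 5 × Fin 5 => x.1 ≠ x.2)) q).card := by
      refine Finset.card_nsmul_le_sum _ _ 6 ?_
      intro q hq
      refine le_trans (h6 q hq) (Finset.card_le_card ?_)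
      rintro ⟨i, j⟩ hx
      have hx := (Finset.mem_filter.1 hx).2
      refine Finset.mem_filter.2 ⟨Finset.mem_filter.2 ⟨Finset.mem_univ _, ?_⟩, hx⟩
      rintro h
      simp only at h hx
      rw [h] at hx
      exact hx (hdiag _ _)
    omega
  -- the span has at least 64 elements
  let Φ : {T // T ∈ Q1.powerset} → (ZMod 2 × ZMod 2 × ZMod 2 × ZMod 2 × ZMod 2 × ZMod 2) :=
    fun T => (∑ q ∈ T.1, c q 1 2, ∑ q ∈ T.1, c q 1 3, ∑ q ∈ T.1, c q 1 4, ∑ q ∈ T.1, c q 2 3,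
      ∑ q ∈ T.1, c q 2 4, ∑ q ∈ T.1, c q 3 4)
  have hQ1 : ∀ (T : Finset Q) i j, ∑ q ∈ T ∩ Q1, c q i j = ∑ q ∈ T, c q i j := by
    intro T i j
    refine Finset.sum_subset Finset.inter_subset_left ?_
    intro q hq hq'
    by_contra h
    exact hq' (Finset.mem_inter.2 ⟨hq, Finset.mem_filter.2 ⟨Finset.mem_univ _, fun h0 => h (by
      rw [h0]; rfl)⟩⟩)
  have hsurj : Function.Surjective Φ := by
    rintro ⟨a, b, d, e, f, g⟩
    obtain ⟨T, hT⟩ := hspan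
      ![![0, a + b + d, a + e + f, b + e + g, d + f + g], ![a + b + d, 0, a, b, d],
        ![a + e + f, a, 0, e, f], ![b + e + g, b, e, 0, g], ![d + f + g, d, f, g, 0]]
      (by intro i j; fin_cases i <;> fin_cases j <;> rfl)
      (by intro i; fin_cases i <;> rfl)
      (by
        intro i
        clear hsym hdiag hrow htwo hall hspan
        revert a b d e f g i
        decide)
    refine ⟨⟨T ∩ Q1, Finset.mem_powerset.2 Finset.inter_subset_right⟩, ?_⟩
    simp only [Φ, hQ1, ← hT]
    rfl
  have hc64 : Fintype.card (ZMod 2 × ZMod 2 × ZMod 2 × ZMod 2 × ZMod 2 × ZMod 2) = 64 := by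
    simp [ZMod.card]
  have hcP : Fintype.card {T // T ∈ Q1.powerset} = 2 ^ Q1.card := by
    rw [Fintype.card_coe, Finset.card_powerset]
  have hge := Fintype.card_le_of_surjective Φ hsurj
  have hle : 2 ^ Q1.card ≤ 2 ^ 6 := Nat.pow_le_pow_right (by norm_num) hcard
  have heq : Fintype.card {T // T ∈ Q1.powerset} =
      Fintype.card (ZMod 2 × ZMod 2 × ZMod 2 × ZMod 2 × ZMod 2 × ZMod 2) := by
    rw [hc64] at hge ⊢
    rw [hcP] at hge ⊢
    omega
  have hinj := ((Fintype.bijective_iff_surjective_and_card Φ).2 ⟨hsurj, heq⟩).1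
  have hz : ∀ i j, ∑ q ∈ Q1, c q i j = 0 := by
    intro i j
    have := hQ1 Finset.univ i j
    rw [Finset.univ_inter] at this
    rw [this]; exact hall i j
  have h0 := @hinj ⟨∅, by simp⟩ ⟨Q1, by simp⟩ (by simp [Φ, hz])
  have h0 : ∅ = Q1 := congrArg Subtype.val h0
  rw [hcP, hc64, ← h0] at heq
  simp at heq

section Homology

variable {Fl : Type} [Fintype Fl]

/-- functions on flags invariant under a set of permutations -/
def invF {Fl : Type} (S : Set (Equiv.Perm Fl)) : Submodule (ZMod 2) (Fl → ZMod 2) where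
  carrier := {h | ∀ s ∈ S, ∀ x, h (s x) = h x}
  add_mem' := by
    intro a b ha hb s hs x
    simp [ha s hs x, hb s hs x]
  zero_mem' := by intro s _ x; rfl
  smul_mem' := by
    intro c a ha s hs x
    simp [ha s hs x]

lemma finrank_invF (S : Set (Equiv.Perm Fl)) : Module.finrank (ZMod 2) (invF S) = orbCount S := by
  classical
  have : Fintype (MulAction.orbitRel.Quotient (Subgroup.closure S) Fl) := Fintype.ofFinite _
  let L : (MulAction.orbitRel.Quotient (Subgroup.closure S) Fl → ZMod 2) ≃ₗ[ZMod 2] invF S :=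
    { toFun := fun k => ⟨fun x => k (Quotient.mk _ x), fun s hs x =>
        congrArg k (Quotient.sound (orb_step hs x))⟩
      map_add' := fun a b => rfl
      map_smul' := fun c a => rfl
      invFun := fun h => Quotient.lift h.1 (fun a b (hab : a ∈ orbSet S b) => orb_inv h.2 hab)
      left_inv := by
        intro k
        funext q
        induction q using Quotient.inductionOn with
        | h x => rfl
      right_inv := fun h => rfl }
  rw [← L.finrank_eq, Module.finrank_fintype_fun_eq_card, orbCount, Nat.card_eq_fintype_card]

lemma z2_add_self (a : ZMod 2) : a + a = 0 := CharTwo.add_self_eq_zero a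

/-- sum of an invariant function over a fixed point free involution vanishes mod 2 -/
lemma sum_invol_zero (φ : Equiv.Perm Fl) (hφ : ∀ x, φ (φ x) = x) (fφ : ∀ x, φ x ≠ x)
    (k : Fl → ZMod 2) (hk : ∀ x, k (φ x) = k x) : ∑ f, k f = 0 := by
  refine Finset.sum_involution (fun f _ => φ f) ?_ ?_ ?_ ?_
  · intro f _; rw [hk]; exact z2_add_self _
  · intro f _ _; exact fφ f
  · intro f _; exact Finset.mem_univ _
  · intro f _; exact hφ f

abbrev EQ (θ σ : Equiv.Perm Fl) := MulAction.orbitRel.Quotient (Subgroup.closure {θ, σ}) Fl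

/-- difference operator from functions on flags to functions on edges -/
noncomputable def diffE (θ σ τ : Equiv.Perm Fl) : (Fl → ZMod 2) →ₗ[ZMod 2] (EQ θ σ → ZMod 2) where
  toFun h := fun e => h (Quotient.out e) + h (τ (Quotient.out e))
  map_add' a b := by funext e; simp only [Pi.add_apply]; ring
  map_smul' c a := by funext e; simp only [Pi.smul_apply, smul_eq_mul, RingHom.id_apply]; ring

lemma out_mem {Fl : Type} (θ σ : Equiv.Perm Fl) (x : Fl) :
    Quotient.out (Quotient.mk _ x : EQ θ σ) ∈ orbSet {θ, σ} x :=
  Quotient.exact (Quotient.out_eq (Quotient.mk _ x : EQ θ σ))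

lemma finrank_diffE (θ σ φ τ : Equiv.Perm Fl) (S : Set (Equiv.Perm Fl))
    (hS : ∀ s ∈ ({θ, σ, φ} : Set (Equiv.Perm Fl)), s ∈ S ∨ s = τ)
    (hinv : ∀ h ∈ invF S, ∀ s ∈ ({θ, σ} : Set (Equiv.Perm Fl)), ∀ x,
      h (s x) + h (τ (s x)) = h x + h (τ x)) :
    orbCount S ≤ Module.finrank (ZMod 2) ((invF S).map (diffE θ σ τ)) + orbCount {θ, σ, φ} := by
  have h1 := LinearMap.finrank_range_add_finrank_ker ((diffE θ σ τ).domRestrict (invF S))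
  rw [finrank_invF, LinearMap.range_domRestrict] at h1
  have h2 : (LinearMap.ker ((diffE θ σ τ).domRestrict (invF S))).map (invF S).subtype ≤
      invF {θ, σ, φ} := by
    rintro _ ⟨h, hh, rfl⟩ s hs x
    have hh : ∀ e : EQ θ σ, h.1 (Quotient.out e) + h.1 (τ (Quotient.out e)) = 0 :=
      fun e => congrFun (LinearMap.mem_ker.1 hh) e
    rcases hS s hs with h3 | rfl
    · exact h.2 s h3 x
    · have h4 := orb_inv (f := fun x => h.1 x + h.1 (s x)) (hinv h.1 h.2) (out_mem θ σ x)
      simp only [hh] at h4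
      exact (CharTwo.add_eq_zero.1 h4.symm).symm
  have h3 := Submodule.finrank_mono h2
  rw [Submodule.finrank_map_subtype_eq, finrank_invF] at h3
  omega

open scoped Classical in
lemma sum_flags (θ σ : Equiv.Perm Fl) (hθ : ∀ x, θ (θ x) = x) (hσ : ∀ x, σ (σ x) = x)
    (hc : ∀ x, θ (σ x) = σ (θ x)) (fθ : ∀ x, θ x ≠ x) (fσ : ∀ x, σ x ≠ x)
    (fθσ : ∀ x, θ x ≠ σ x) [Fintype (EQ θ σ)] (k : Fl → ZMod 2) :
    ∑ f, k f = ∑ e : EQ θ σ, (k (Quotient.out e) + k (σ (Quotient.out e)) +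
      k (θ (Quotient.out e)) + k (σ (θ (Quotient.out e)))) := by
  rw [← Finset.sum_fiberwise Finset.univ (fun f => (Quotient.mk _ f : EQ θ σ)) k]
  refine Finset.sum_congr rfl ?_
  intro e _
  generalize hx : Quotient.out e = x
  have he : e = Quotient.mk _ x := by rw [← hx]; exact (Quotient.out_eq e).symm
  have : Finset.univ.filter (fun f => (Quotient.mk _ f : EQ θ σ) = e) =
      {x, σ x, θ x, σ (θ x)} := by
    ext f
    rw [he]
    simp only [Finset.mem_filter, Finset.mem_univ, true_and]
    have h1 : (Quotient.mk _ f : EQ θ σ) = Quotient.mk _ x ↔ f ∈ orbSet {θ, σ} x := Quotient.eq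
    rw [h1, orb_comm hθ hσ hc]
    simp
  rw [this]
  have n1 := (fσ x).symm
  have n2 := (fθ x).symm
  have n3 : x ≠ σ (θ x) := fun h => fθσ (θ x) (by rw [← h, hθ])
  have n4 := (fθσ x).symm
  have n5 : σ x ≠ σ (θ x) := fun h => n2 (σ.injective h)
  have n6 := (fσ (θ x)).symm
  rw [Finset.sum_insert, Finset.sum_insert, Finset.sum_insert, Finset.sum_singleton]
  · ring
  all_goals simp [n1, n2, n3, n4, n5, n6]

/-- genus zero: every cycle (mod 2) is a boundary of faces -/
lemma exact_of_genus (θ σ φ : Equiv.Perm Fl) (hθ : ∀ x, θ (θ x) = x) (hσ : ∀ x, σ (σ x) = x)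
    (hφ : ∀ x, φ (φ x) = x)
    (hc : ∀ x, θ (σ x) = σ (θ x)) (fθ : ∀ x, θ x ≠ x) (fσ : ∀ x, σ x ≠ x) (fφ : ∀ x, φ x ≠ x)
    (fθσ : ∀ x, θ x ≠ σ x) [Fintype (EQ θ σ)] (hg : genus θ σ φ ≤ 0)
    (z : Fl → ZMod 2) (hz : z ∈ invF {θ, σ})
    (hcyc : ∀ g ∈ invF {σ, φ}, ∑ e : EQ θ σ, z (Quotient.out e) *
      (g (Quotient.out e) + g (θ (Quotient.out e))) = 0) :
    ∃ h ∈ invF {θ, φ}, ∀ f, z f = h f + h (σ f) := by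
  classical
  have d1 := finrank_diffE θ σ φ θ {σ, φ} (by simp) (by
    intro h hh s hs x
    have a1 : ∀ x, h (σ x) = h x := hh σ (by simp)
    simp only [Set.mem_insert_iff, Set.mem_singleton_iff] at hs
    rcases hs with rfl | rfl
    · rw [hθ, add_comm]
    · rw [hc, a1, a1])
  have hinv2 : ∀ h ∈ invF {θ, φ}, ∀ s ∈ ({θ, σ} : Set (Equiv.Perm Fl)), ∀ x,
      h (s x) + h (σ (s x)) = h x + h (σ x) := by
    intro h hh s hs x
    have a1 : ∀ x, h (θ x) = h x := hh θ (by simp)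
    simp only [Set.mem_insert_iff, Set.mem_singleton_iff] at hs
    rcases hs with rfl | rfl
    · rw [← hc, a1, a1]
    · rw [hσ, add_comm]
  have d2 := finrank_diffE θ σ φ σ {θ, φ} (by simp) hinv2
  set X := (invF {σ, φ}).map (diffE θ σ θ) with hX
  set Y := (invF {θ, φ}).map (diffE θ σ σ) with hY
  let B : LinearMap.BilinForm (ZMod 2) (EQ θ σ → ZMod 2) := Matrix.toBilin' 1
  have hB : ∀ a b, B a b = ∑ e, a e * b e := by
    intro a b
    simp [B, Matrix.toBilin'_apply', dotProduct]
  have hnd : B.Nondegenerate := 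
    LinearMap.BilinForm.nondegenerate_toBilin'_of_det_ne_zero' _ (by simp)
  have d3 := LinearMap.BilinForm.finrank_orthogonal hnd X
  have hE : Module.finrank (ZMod 2) (EQ θ σ → ZMod 2) = orbCount {θ, σ} := by
    rw [Module.finrank_fintype_fun_eq_card, orbCount, Nat.card_eq_fintype_card]
  rw [hE] at d3
  have hle : Y ≤ B.orthogonal X := by
    rintro _ ⟨h, hh, rfl⟩ _ ⟨g, hg', rfl⟩
    have a1 : ∀ x, g (σ x) = g x := hg' σ (by simp)
    have a2 : ∀ x, g (φ x) = g x := hg' φ (by simp)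
    have b1 : ∀ x, h (θ x) = h x := hh θ (by simp)
    have b2 : ∀ x, h (φ x) = h x := hh φ (by simp)
    change B _ _ = 0
    rw [hB]
    have := sum_flags θ σ hθ hσ hc fθ fσ fθσ (fun f => g f * h f)
    rw [sum_invol_zero φ hφ fφ (fun f => g f * h f) (fun x => by simp [a2, b2])] at this
    rw [this]
    refine Finset.sum_congr rfl ?_
    intro e _
    change (g _ + g _) * (h _ + h _) = _
    simp only [a1, b1, ← hc]
    rw [hc, a1]
    ring
  have hYeq : Y = B.orthogonal X := by
    refine Submodule.eq_of_le_of_finrank_le hle ?_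
    unfold genus at hg
    omega
  have hzmem : (fun e : EQ θ σ => z (Quotient.out e)) ∈ Y := by
    rw [hYeq]
    rintro _ ⟨g, hg', rfl⟩
    change B _ _ = 0
    rw [hB, ← hcyc g hg']
    refine Finset.sum_congr rfl ?_
    intro e _
    change (g _ + g _) * _ = _
    ring
  obtain ⟨h, hh, hhz⟩ := hzmem
  refine ⟨h, hh, fun f => ?_⟩
  have e1 := orb_inv (f := z) hz (out_mem θ σ f)
  have e2 := orb_inv (f := fun x => h x + h (σ x)) (hinv2 h hh) (out_mem θ σ f)
  have e3 := congrFun hhz (Quotient.mk _ f)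
  rw [← e1, ← e2]
  exact e3.symm

end Homology

lemma k5_not_planar {W : Type*} (H : SimpleGraph W) (w : Fin 5 → W) (hw : Function.Injective w)
    (hadj : ∀ i j, i ≠ j → H.Adj (w i) (w j)) : ¬ IsPlanarG H := by
  classical
  rintro ⟨Fl, _, θ, σ, φ, p, ⟨⟨hθ', fθ⟩, ⟨hσ', fσ⟩, ⟨hφ', fφ⟩, hcard⟩, ⟨r1, r2, r3, r4, r5, r6⟩, hg⟩
  have hθ : ∀ x, θ (θ x) = x := fun x => Equiv.congr_fun hθ' x
  have hσ : ∀ x, σ (σ x) = x := fun x => Equiv.congr_fun hσ' x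
  have hφ : ∀ x, φ (φ x) = x := fun x => Equiv.congr_fun hφ' x
  have fθσ : ∀ x, θ x ≠ σ x := fun x h => (r3 x).ne (by rw [h, r1])
  have hc : ∀ x, θ (σ x) = σ (θ x) := by
    intro x
    by_contra hne
    have s1 : ∀ z, θ z ∈ orbSet {θ, σ} z := fun z => orb_step (by simp) z
    have s2 : ∀ z, σ z ∈ orbSet {θ, σ} z := fun z => orb_step (by simp) z
    have n1 := (fσ x).symm
    have n2 := (fθ x).symm
    have n3 : x ≠ σ (θ x) := fun h => fθσ (θ x) (by rw [← h, hθ])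
    have n4 := (fθσ x).symm
    have n5 : σ x ≠ σ (θ x) := fun h => n2 (σ.injective h)
    have n6 := (fσ (θ x)).symm
    have n7 : x ≠ θ (σ x) := fun h => fθσ (σ x) (by rw [← h, hσ])
    have n8 : σ x ≠ θ (σ x) := (fθ _).symm
    have n9 : θ x ≠ θ (σ x) := fun h => n1 (θ.injective h)
    have hsub : ((({x, σ x, θ x, σ (θ x), θ (σ x)} : Finset Fl)) : Set Fl) ⊆ orbSet {θ, σ} x := by
      intro y hy
      simp only [Finset.coe_insert, Finset.coe_singleton, Set.mem_insert_iff,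
        Set.mem_singleton_iff] at hy
      rcases hy with rfl | rfl | rfl | rfl | rfl
      · exact orb_refl _ _
      · exact s2 _
      · exact s1 _
      · exact orb_trans (s1 _) (s2 _)
      · exact orb_trans (s2 _) (s1 _)
    have h5 := Set.ncard_le_ncard hsub (Set.toFinite _)
    have h4 := hcard x
    rw [Nat.card_coe_set_eq] at h4
    rw [h4, Set.ncard_coe_finset, Finset.card_insert_of_notMem, Finset.card_insert_of_notMem,
      Finset.card_insert_of_notMem, Finset.card_insert_of_notMem, Finset.card_singleton] at h5
    · omega
    all_goals simp [n1, n2, n3, n4, n5, n6, n7, n8, n9, Ne.symm hne]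
  have hpθσ : ∀ f, p (θ (σ f)) = p (θ f) := fun f => by rw [hc, r1]
  -- uniqueness of flags on a dart
  have huniq : ∀ f f', p f = p f' → p (θ f) = p (θ f') → f' = f ∨ f' = σ f := by
    intro f f' h h'
    have := r6 f f' h h'
    rw [orb_comm hθ hσ hc] at this
    rcases this with rfl | rfl | rfl | rfl
    · exact Or.inl rfl
    · exact Or.inr rfl
    · exact absurd h (r3 f).ne
    · rw [r1] at h
      exact absurd h (r3 f).ne
  have hx : ∀ i j, ∃ f, i ≠ j → p f = w i ∧ p (θ f) = w j := by
    intro i j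
    by_cases h : i = j
    · obtain ⟨f, -⟩ := r5 _ _ (hadj 0 1 (by decide))
      exact ⟨f, fun h' => absurd h h'⟩
    · obtain ⟨f, hf⟩ := r5 _ _ (hadj i j h)
      exact ⟨f, fun _ => hf⟩
  choose X hX using hx
  have hX1 : ∀ i j, i ≠ j → p (X i j) = w i := fun i j h => (hX i j h).1
  have hX2 : ∀ i j, i ≠ j → p (θ (X i j)) = w j := fun i j h => (hX i j h).2
  -- merged faces
  let M : Fl → Prop := fun f => p f ∈ Set.range w ∧ p (θ f) ∈ Set.range w
  have hMσ : ∀ f, M (σ f) ↔ M f := fun f => by simp only [M, r1, hpθσ]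
  let σf : Fl → Fl := fun f => if M f then f else σ f
  have hσf : Function.Involutive σf := by
    intro f
    by_cases h : M f
    · simp [σf, h]
    · have h' : ¬ M (σ f) := fun h' => h ((hMσ f).1 h')
      simp [σf, h, h', hσ]
  let σ2 : Equiv.Perm Fl := hσf.toPerm
  have hσ2 : ∀ f, σ2 f = if M f then f else σ f := fun f => rfl
  let R : Set (Equiv.Perm Fl) := {θ, φ, σ2}
  let Q := MulAction.orbitRel.Quotient (Subgroup.closure R) Fl
  let cls : Fl → Q := fun f => Quotient.mk _ f
  have : Fintype Q := Fintype.ofFinite _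
  have : Fintype (EQ θ σ) := Fintype.ofFinite _
  have hcls : ∀ s ∈ R, ∀ f, cls (s f) = cls f := fun s hs f => Quotient.sound (orb_step hs f)
  have cθ : ∀ f, cls (θ f) = cls f := hcls θ (by simp [R])
  have cφ : ∀ f, cls (φ f) = cls f := hcls φ (by simp [R])
  have cσ : ∀ f, ¬ M f → cls (σ f) = cls f := by
    intro f hf
    have := hcls σ2 (by simp [R]) f
    rwa [hσ2, if_neg hf] at this
  let one : Q → Fl → ZMod 2 := fun q f => if cls f = q then 1 else 0
  let c : Q → Fin 5 → Fin 5 → ZMod 2 := fun q i j =>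
    if i = j then 0 else one q (X i j) + one q (σ (X i j))
  refine k5_count c ?_ ?_ ?_ ?_ ?_ ?_
  · -- symmetry
    intro q i j
    by_cases h : i = j
    · subst h; rfl
    · have h' : j ≠ i := Ne.symm h
      simp only [c, if_neg h, if_neg h']
      have o1 : ∀ f, one q (θ f) = one q f := fun f => by simp only [one, cθ]
      rcases huniq (θ (X i j)) (X j i) (by rw [hX2 i j h, hX1 j i h'])
        (by rw [hθ, hX1 i j h, hX2 j i h']) with h1 | h1
      · rw [h1, ← hc, o1, o1]
      · rw [h1, hσ, ← hc, o1, o1, add_comm]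
  · intro q i; simp [c]
  · -- row sums
    intro q i
    have o2 : ∀ f, one q (φ f) = one q f := fun f => by simp only [one, cφ]
    have s1 : ∑ f, (if p f = w i then one q f else 0) = 0 :=
      sum_invol_zero φ hφ fφ _ (fun f => by simp only [r2, o2])
    have s2 : ∑ f, (if p f = w i ∧ ¬ M f then one q f else 0) = 0 := by
      refine sum_invol_zero σ hσ fσ _ (fun f => ?_)
      simp only [r1, hMσ]
      by_cases hM : M f
      · simp [hM]
      · have : one q (σ f) = one q f := by simp only [one, cσ f hM]
        rw [this]
    have s3 : ∀ j, c q i j = ∑ f, (if p f = w i ∧ p (θ f) = w j then one q f else 0) := by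
      intro j
      rw [← Finset.sum_filter]
      by_cases h : i = j
      · subst h
        rw [Finset.filter_false_of_mem]
        · simp [c]
        · rintro f - ⟨h1, h2⟩
          exact (r3 f).ne (h1.trans h2.symm)
      · have : Finset.univ.filter (fun f => p f = w i ∧ p (θ f) = w j) = {X i j, σ (X i j)} := by
          ext f
          simp only [Finset.mem_filter, Finset.mem_univ, true_and, Finset.mem_insert,
            Finset.mem_singleton]
          constructor
          · rintro ⟨h1, h2⟩
            exact huniq (X i j) f (by rw [h1, hX1 i j h]) (by rw [h2, hX2 i j h])
          · rintro (rfl | rfl)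
            · exact hX i j h
            · rw [r1, hpθσ]; exact hX i j h
        rw [this, Finset.sum_pair (fσ _).symm]
        simp only [c, if_neg h]
    have s4 : ∀ f, ∑ j, (if p f = w i ∧ p (θ f) = w j then one q f else 0) =
        (if p f = w i then one q f else 0) + (if p f = w i ∧ ¬ M f then one q f else 0) := by
      intro f
      by_cases h1 : p f = w i
      · by_cases h2 : p (θ f) ∈ Set.range w
        · obtain ⟨k, hk⟩ := h2
          have hM : M f := ⟨⟨i, h1.symm⟩, ⟨k, hk⟩⟩
          simp [h1, hM, ← hk, hw.eq_iff]
        · have hM : ¬ M f := fun h => h2 h.2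
          have h3 : ∀ j, p (θ f) ≠ w j := fun j hj => h2 ⟨j, hj.symm⟩
          simp [h1, hM, h3, z2_add_self]
      · simp [h1]
    simp only [s3]
    rw [Finset.sum_comm]
    simp only [s4]
    rw [Finset.sum_add_distrib, s1, s2, add_zero]
  · -- two sides
    intro i j
    refine ⟨cls (X i j), cls (σ (X i j)), fun q hq => ?_⟩
    by_contra hcon
    push Not at hcon
    apply hq
    simp [c, one, hcon.1.symm, hcon.2.symm]
  · -- all faces sum to zero
    intro i j
    by_cases h : i = j
    · simp [c, h]
    · simp only [c, if_neg h, Finset.sum_add_distrib, one]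
      rw [Finset.sum_ite_eq, Finset.sum_ite_eq, if_pos (Finset.mem_univ _),
        if_pos (Finset.mem_univ _)]
      exact z2_add_self 1
  · -- spanning
    intro d dsym ddiag drow
    let ch : W → W → ZMod 2 := fun a b => ∑ i, ∑ j, if a = w i ∧ b = w j then d i j else 0
    have chw : ∀ i j, ch (w i) (w j) = d i j := by
      intro i j
      simp only [ch, hw.eq_iff]
      rw [Finset.sum_eq_single i, Finset.sum_eq_single j]
      · simp
      · intro k _ hk; simp [Ne.symm hk]
      · simp
      · intro k _ hk
        simp [Ne.symm hk]
      · simp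
    have chsym : ∀ a b, ch a b = ch b a := by
      intro a b
      simp only [ch]
      rw [Finset.sum_comm]
      refine Finset.sum_congr rfl fun j _ => Finset.sum_congr rfl fun i _ => ?_
      rw [dsym i j]
      simp only [and_comm]
    let z : Fl → ZMod 2 := fun f => ch (p f) (p (θ f))
    have hz : z ∈ invF {θ, σ} := by
      intro s hs f
      simp only [Set.mem_insert_iff, Set.mem_singleton_iff] at hs
      rcases hs with rfl | rfl
      · simp only [z, hθ]; exact chsym _ _
      · simp only [z, r1, hpθσ]
    obtain ⟨h, hh, hzh⟩ := exact_of_genus θ σ φ hθ hσ hφ hc fθ fσ fφ fθσ hg z hz (by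
      intro g hgm
      let γ : Fin 5 → ZMod 2 := fun i => g (X i (i + 1))
      have hi1 : ∀ i : Fin 5, i ≠ i + 1 := by decide
      have hγ : ∀ f i, p f = w i → g f = γ i := by
        intro f i hf
        exact orb_inv hgm (r4 _ f (by rw [hX1 _ _ (hi1 i), hf]))
      have t1 : ∀ f, z f * (g f + g (θ f)) = ∑ i, ∑ j, d i j * γ i *
          ((if p f = w i ∧ p (θ f) = w j then 1 else 0) +
           (if p (θ f) = w i ∧ p f = w j then 1 else 0)) := by
        intro f
        have e1 : ∀ f, z f * g f = ∑ i, ∑ j, d i j * γ i *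
            (if p f = w i ∧ p (θ f) = w j then 1 else 0) := by
          intro f
          simp only [z, ch, Finset.sum_mul]
          refine Finset.sum_congr rfl fun i _ => Finset.sum_congr rfl fun j _ => ?_
          by_cases h1 : p f = w i ∧ p (θ f) = w j
          · simp [h1, hγ f i h1.1]
          · simp [h1]
        have e2 : z f * g (θ f) = z (θ f) * g (θ f) := by
          rw [hz θ (by simp) f]
        rw [mul_add, e2, e1, e1, hθ, ← Finset.sum_add_distrib]
        refine Finset.sum_congr rfl fun i _ => ?_
        rw [← Finset.sum_add_distrib]
        refine Finset.sum_congr rfl fun j _ => ?_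
        rw [mul_add]
      simp only [t1]
      rw [Finset.sum_comm]
      have t2 : ∀ i j, ∑ e : EQ θ σ, d i j * γ i *
          ((if p (Quotient.out e) = w i ∧ p (θ (Quotient.out e)) = w j then 1 else 0) +
           (if p (θ (Quotient.out e)) = w i ∧ p (Quotient.out e) = w j then 1 else 0)) =
          d i j * γ i := by
        intro i j
        by_cases hij : i = j
        · subst hij; simp [ddiag]
        · rw [← Finset.mul_sum]
          conv_rhs => rw [← mul_one (d i j * γ i)]
          congr 1
          rw [Finset.sum_eq_single (Quotient.mk _ (X i j) : EQ θ σ)]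
          · have hm := out_mem θ σ (X i j)
            rw [orb_comm hθ hσ hc] at hm
            have hwne : w i ≠ w j := fun h => hij (hw h)
            rcases hm with hm | hm | hm | hm <;> rw [hm] <;>
              simp [r1, hθ, ← hc, hpθσ, hX1 i j hij, hX2 i j hij, hwne, hwne.symm]
          · intro e _ he
            have hne : ∀ f, f ∈ orbSet {θ, σ} (Quotient.out e) → ¬ (p f = w i ∧ p (θ f) = w j) := by
              rintro f hf ⟨h1, h2⟩
              apply he
              have h3 := r6 f (X i j) (by rw [h1, hX1 i j hij]) (by rw [h2, hX2 i j hij])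
              rw [← Quotient.out_eq e]
              exact Quotient.sound (orb_symm (orb_trans hf h3))
            rw [if_neg (hne _ (orb_refl _ _)), if_neg, add_zero]
            have := hne (θ (Quotient.out e)) (orb_step (by simp) _)
            rwa [hθ] at this
          · simp
      refine Finset.sum_eq_zero fun i _ => ?_
      rw [Finset.sum_comm]
      simp only [t2]
      rw [← Finset.sum_mul, drow, zero_mul])
    have hR : ∀ s ∈ R, ∀ f, h (s f) = h f := by
      intro s hs f
      simp only [R, Set.mem_insert_iff, Set.mem_singleton_iff] at hs
      rcases hs with rfl | rfl | rfl
      · exact hh _ (by simp) f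
      · exact hh _ (by simp) f
      · rw [hσ2]
        split_ifs with hM
        · rfl
        · have hz0 : z f = 0 := by
            simp only [z, ch]
            refine Finset.sum_eq_zero fun i _ => Finset.sum_eq_zero fun j _ => ?_
            rw [if_neg]
            rintro ⟨h1, h2⟩
            exact hM ⟨⟨i, h1.symm⟩, ⟨j, h2.symm⟩⟩
          have := hzh f
          rw [hz0] at this
          exact (CharTwo.add_eq_zero.1 this.symm).symm
    refine ⟨Finset.univ.filter (fun q => h (Quotient.out q) = 1), fun i j => ?_⟩
    have hsum : ∀ f, ∑ q ∈ Finset.univ.filter (fun q : Q => h (Quotient.out q) = 1), one q f =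
        h f := by
      intro f
      have hout : h (Quotient.out (cls f)) = h f :=
        orb_inv hR (Quotient.exact (Quotient.out_eq (cls f)))
      have h01 : ∀ a : ZMod 2, (if a = 1 then 1 else 0) = a := by decide
      simp only [one]
      rw [Finset.sum_ite_eq]
      simp only [Finset.mem_filter, Finset.mem_univ, true_and, hout]
      exact h01 _
    by_cases hij : i = j
    · subst hij; simp [c, ddiag]
    · simp only [c, if_neg hij, Finset.sum_add_distrib, hsum]
      rw [← hzh]
      simp only [z, hX1 i j hij, hX2 i j hij, chw]

theorem stmt16 {V : Type*} [Fintype V] (G : SimpleGraph V) (k : ℕ) :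
    (∃ C : Set V, Nat.card C ≤ k ∧ ∀ u v, G.Adj u v → u ∈ C ∨ v ∈ C) ↔
    (∃ S : Set (V ⊕ (G.edgeSet × Fin 3)), Nat.card S ≤ k ∧
      IsPlanarG ((gadget G).induce Sᶜ)) := by
  classical
  constructor
  · rintro ⟨C, hk, hC⟩
    refine ⟨Sum.inl '' C, ?_, forward G C hC⟩
    rwa [Nat.card_image_of_injective Sum.inl_injective]
  · rintro ⟨S, hk, hS⟩
    let f : V ⊕ (G.edgeSet × Fin 3) → V := fun x => match x with
      | .inl v => v
      | .inr (e, _) => (Quot.out (e : Sym2 V)).1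
    refine ⟨f '' S, le_trans ?_ hk, ?_⟩
    · rw [Nat.card_coe_set_eq, Nat.card_coe_set_eq]
      exact Set.ncard_image_le (Set.toFinite _)
    · intro u v huv
      by_contra hcon
      push Not at hcon
      obtain ⟨hu, hv⟩ := hcon
      let e : G.edgeSet := ⟨s(u, v), huv⟩
      have hf : ∀ i, f (.inr (e, i)) = u ∨ f (.inr (e, i)) = v := by
        intro i
        have : (Quot.out (s(u, v) : Sym2 V)).1 ∈ s(u, v) := Sym2.out_fst_mem _
        exact Sym2.mem_iff.1 this
      have m1 : (.inl u : V ⊕ (G.edgeSet × Fin 3)) ∈ Sᶜ := fun h => hu ⟨_, h, rfl⟩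
      have m2 : (.inl v : V ⊕ (G.edgeSet × Fin 3)) ∈ Sᶜ := fun h => hv ⟨_, h, rfl⟩
      have m3 : ∀ i, (.inr (e, i) : V ⊕ (G.edgeSet × Fin 3)) ∈ Sᶜ := by
        intro i h
        rcases hf i with h' | h'
        · exact hu ⟨_, h, h'⟩
        · exact hv ⟨_, h, h'⟩
      let w : Fin 5 → (Sᶜ : Set (V ⊕ (G.edgeSet × Fin 3))) :=
        ![⟨_, m1⟩, ⟨_, m2⟩, ⟨_, m3 0⟩, ⟨_, m3 1⟩, ⟨_, m3 2⟩]
      have hadj : ∀ i j, i ≠ j → ((gadget G).induce Sᶜ).Adj (w i) (w j) := by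
        have b1 : ∀ i, (gadget G).Adj (.inl u) (.inr (e, i)) := fun i =>
          (gadget_lr G _ _ _).2 (Sym2.mem_mk_left u v)
        have b2 : ∀ i, (gadget G).Adj (.inl v) (.inr (e, i)) := fun i =>
          (gadget_lr G _ _ _).2 (Sym2.mem_mk_right u v)
        have b3 : ∀ i j, i ≠ j → (gadget G).Adj (.inr (e, i)) (.inr (e, j)) := fun i j h =>
          (gadget_rr G _ _ _ _).2 ⟨rfl, h⟩
        have b4 := (gadget_ll G u v).2 huv
        intro i j hij
        change (gadget G).Adj (w i).1 (w j).1
        fin_cases i <;> fin_cases j <;>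
          first
          | exact absurd rfl hij
          | exact b4
          | exact b4.symm
          | exact b1 _
          | exact b2 _
          | exact (b1 _).symm
          | exact (b2 _).symm
          | exact b3 _ _ (by decide)
      refine k5_not_planar _ w ?_ hadj hS
      intro i j hij
      by_contra h
      exact (hadj i j h).ne hij
end
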